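/- Let k be an algebraically closed field, 1 ≤ d ≤ n, and u, v ∈ I^{Sp}_{d,2n} with u ≥^{Sp} v. Let F be a polynomial over k in the variables {P_S : S a d-element subset of {1,…,2n}}. Suppose F evaluated at the tuple of Plücker coordinates (p_S(M))_S vanishes for every 2n×d matrix M over k of rank d whose column span lies in the Richardson variety R(u,v). Then F = G + H, where G belongs to the ideal generated by the variables P_S whose associated tuple α(S) ∈ \overline{I}^{Sp}_{d,2n} fails the condition v ≤^{Sp} α(S) ≤^{Sp} u, and H is a polynomial whose evaluation at (p_S(M))_S vanishes for every 2n×d matrix M over k of rank d with isotropic column span. (The ideal of R(u,v) in the homogeneous coordinate ring of Sp_{2n}(k)/P_d is generated by the Plücker coordinates p_α with α >^{Sp} u or α <^{Sp} v.) -/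

import Mathlib

/-!
The conditions from `v` in the definition of `R(u,v)` bound dimensions from above, and `u ≥ v`, so
`R(u,v)` contains the whole Schubert cell of `u` (`cell_rich`). Hence `F` vanishes at all bases of
the subspaces in this cell, and scaling a column by elements of the infinite field `k` separates
its homogeneous components (`schubert`). It remains to determine the homogeneous polynomials
vanishing on a Schubert cell, which is done by standard monomial theory.

Let `ISp` be the vanishing ideal of the cone over `Sp/P_d`, and `Ju` the ideal generated by the
`P_T` with `T ≰ u`. Modulo `ISp + Ju`, every product of `m` Plücker variables is a combination of
products along chains for `Std2` starting at `u` (`spanning`). The straightening uses the Garnir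
relations (`Garnir`) and linear relations between the minors of a matrix with isotropic column
span (`Lin`). The latter come from the identity `∏ (1 + a_t ∧ b_t) = 1` in the exterior algebra,
where `a_t` and `b_t` are the rows `t` and `n + t` (`prod_om_eq_one`).

Conversely, a combination of standard products which vanishes on the Schubert cell of a pair-free
index `W` is zero (`indep`), by induction on the degree. Among the first factors that occur, take
an extremal one `S0`. The combinatorics of its height function (`envelope`) produces pair-free
indices `φ` and `τ ≤ W`. Vanishing passes from the cell of `W` to the cell of `τ` in its closure
(`closure_van`), and a limit along a curve from the cell of `τ` to the cell of `φ` isolates the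
products beginning with `S0` (`extract`). Thus the sum of their tails vanishes on the cell of `φ`,
for which these tails are standard.

Consequently the standard part of each component of `F` is zero, and `F ∈ ISp + Ju`. The
generators of `Ju` are variables `P_S` for which `α(S) ≤ u` fails (`exists_bar`, `leS_of_pos`).
-/

open Matrix BigOperators

/-- The standard symplectic matrix `J = [[0, -Iₙ],[Iₙ, 0]]` of size `2n × 2n`. -/
def Jmat (k : Type*) [Field k] (n : ℕ) : Matrix (Fin (2*n)) (Fin (2*n)) k :=
  Matrix.of fun a b => if a.1 + n = b.1 then (-1 : k) else if b.1 + n = a.1 then 1 else 0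

/-- A subspace `U ⊆ k^{2n}` is isotropic if `uᵀ J w = 0` for all `u, w ∈ U`. -/
def IsIsotropic (k : Type*) [Field k] (n : ℕ) (U : Submodule k (Fin (2*n) → k)) : Prop :=
  ∀ u ∈ U, ∀ w ∈ U, u ⬝ᵥ (Jmat k n).mulVec w = 0

/-- `Kspace k n a` is the subspace `K_a` (with `a` a 1-indexed index in `{0,…,2n}`):
`K_0 = 0`, `K_a = span(e_1,…,e_a)` for `1 ≤ a ≤ n`, and
`K_{n+i} = span(e_1,…,e_n, e_{n+i},…,e_{2n})` for `1 ≤ i ≤ n`. -/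
def Kspace (k : Type*) [Field k] (n : ℕ) (a : ℕ) : Submodule k (Fin (2*n) → k) :=
  Submodule.span k
    {v | ∃ p : Fin (2*n), ((p.1 < a ∧ p.1 < n) ∨ (n < a ∧ a ≤ p.1 + 1)) ∧ v = Pi.single p 1}

/-- `σ` on 1-indexed `{1,…,2n}`: `σ(a) = a-1` for `a ≤ n`, `σ(a) = a+1` for `n < a < 2n`,
`σ(2n) = n`. -/
def sigmaFn (n a : ℕ) : ℕ := if a ≤ n then a - 1 else if a < 2*n then a + 1 else n

/-- Membership in `\overline{I}^{Sp}_{d,2n}` (0-indexed entries): a `d`-tuple of pairwise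
distinct elements of `Fin (2n)` such that for some `r ≤ d`, the first `r` entries are
strictly increasing with (1-indexed) values `≤ n` and the remaining entries are strictly
decreasing with (1-indexed) values `> n`. -/
def IsSpBarTuple (n : ℕ) {d : ℕ} (i : Fin d → Fin (2*n)) : Prop :=
  Function.Injective i ∧ ∃ r ≤ d,
    (∀ a b : Fin d, a < b → b.1 < r → i a < i b) ∧
    (∀ a : Fin d, a.1 < r → (i a).1 < n) ∧
    (∀ a b : Fin d, a < b → r ≤ a.1 → i b < i a) ∧
    (∀ a : Fin d, r ≤ a.1 → n ≤ (i a).1)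

/-- Membership in `I^{Sp}_{d,2n}`: a tuple of `\overline{I}^{Sp}_{d,2n}` whose entries
contain no pair `{t, n+t}`. -/
def IsSpTuple (n : ℕ) {d : ℕ} (i : Fin d → Fin (2*n)) : Prop :=
  IsSpBarTuple n i ∧ ∀ a b : Fin d, (i b).1 ≠ (i a).1 + n

/-- The order `i ≥^{Sp} j`: for every `t`, `i_t ≥ j_t` if `j_t ≤ n` (1-indexed), and
`n < i_t ≤ j_t` if `j_t > n`. -/
def spGE (n : ℕ) {d : ℕ} (i j : Fin d → Fin (2*n)) : Prop :=
  ∀ t : Fin d, if (j t).1 < n then j t ≤ i t else (n ≤ (i t).1 ∧ i t ≤ j t)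

/-- The coordinate subspace `e_i = span(e_{i_1},…,e_{i_d})`. -/
def eSpan (k : Type*) [Field k] {n d : ℕ} (i : Fin d → Fin (2*n)) :
    Submodule k (Fin (2*n) → k) :=
  Submodule.span k (Set.range fun t => Pi.single (i t) (1 : k))

/-- The Borel subgroup `B` of `Sp_{2n}(k)`: symplectic matrices of block form
`[[A, B'],[0, D]]` with `A` upper triangular. -/
def inB (k : Type*) [Field k] (n : ℕ) (M : Matrix (Fin (2*n)) (Fin (2*n)) k) : Prop :=
  Mᵀ * Jmat k n * M = Jmat k n ∧
  ∀ a b : Fin (2*n), ((n ≤ a.1 ∧ b.1 < n) ∨ (a.1 < n ∧ b.1 < n ∧ b.1 < a.1)) → M a b = 0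

/-- The opposite Borel subgroup `B⁻` of `Sp_{2n}(k)`: symplectic matrices of block form
`[[A, 0],[C, D]]` with `A` lower triangular. -/
def inBminus (k : Type*) [Field k] (n : ℕ) (M : Matrix (Fin (2*n)) (Fin (2*n)) k) : Prop :=
  Mᵀ * Jmat k n * M = Jmat k n ∧
  ∀ a b : Fin (2*n), ((a.1 < n ∧ n ≤ b.1) ∨ (a.1 < n ∧ b.1 < n ∧ a.1 < b.1)) → M a b = 0

/-- The Plücker coordinate `p_S(M)`: determinant of the `d×d` submatrix of `M` formed by
the rows in `S` taken in increasing order (and `0` if `S` does not have `d` elements). -/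
def pluckerS {k : Type*} [Field k] {n d : ℕ} (M : Matrix (Fin (2*n)) (Fin d) k)
    (S : Finset (Fin (2*n))) : k :=
  if hS : S.card = d then
    (M.submatrix (fun a => (S.orderIsoOfFin hS a : Fin (2*n))) id).det
  else 0

/-- The Plücker coordinate attached to the underlying set of a tuple `j`. -/
def pluckerT {k : Type*} [Field k] {n d : ℕ} (M : Matrix (Fin (2*n)) (Fin d) k)
    (j : Fin d → Fin (2*n)) : k :=
  pluckerS M (Finset.image j Finset.univ)

/-- The row-selection function for `R(i,t)`: rows `i_1, …, i_{d-2}, t, n+t` in order. -/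
def rowsFn {n : ℕ} (d : ℕ) (i : Fin (d-2) → Fin (2*n)) (t : Fin n) : Fin d → Fin (2*n) :=
  fun l =>
    if h : l.1 < d - 2 then i ⟨l.1, h⟩
    else if l.1 = d - 2 then ⟨t.1, by have := t.2; omega⟩
    else ⟨n + t.1, by have := t.2; omega⟩

/-- The column-selection function enumerating, in increasing order, the columns of a
`2n × d` matrix other than `j1 < j2`. -/
def colSkip (d : ℕ) (j1 j2 : Fin d) (c : Fin (d-2)) : Fin d :=
  if c.1 < j1.1 then ⟨c.1, by have := c.2; omega⟩
  else if c.1 + 1 < j2.1 then ⟨c.1 + 1, by have := c.2; omega⟩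
  else ⟨c.1 + 2, by have := c.2; omega⟩

/-- Membership of a subspace `U` in the Richardson variety `R(u,v)` of `Sp_{2n}(k)/P_d`:
`U` is a `d`-dimensional isotropic subspace with `dim(U ∩ K_{u_t}) ≥ t` and
`dim(U ∩ K_{σ(v_t)}) ≤ t-1` for all `1 ≤ t ≤ d`. -/
def inRich (k : Type*) [Field k] (n : ℕ) {d : ℕ} (u v : Fin d → Fin (2*n))
    (U : Submodule k (Fin (2*n) → k)) : Prop :=
  IsIsotropic k n U ∧ Module.finrank k U = d ∧
  ∀ t : Fin d,
    t.1 + 1 ≤ Module.finrank k ↥(U ⊓ Kspace k n ((u t).1 + 1)) ∧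
    Module.finrank k ↥(U ⊓ Kspace k n (sigmaFn n ((v t).1 + 1))) ≤ t.1

namespace SpR

/-! ### Plücker coordinates and the ideal of Sp/P_d -/

/-- Index set of the Plücker variables. -/
abbrev V (n d : ℕ) : Type := {S : Finset (Fin (2*n)) // S.card = d}

/-- The row index `t` of the lower half of the indices, that is the basis vector `e_{t+1}`. -/
def lo {n : ℕ} (t : Fin n) : Fin (2*n) := ⟨t.1, by have := t.2; omega⟩

/-- The row index `n + t` of the upper half of the indices, the partner of `lo t` under `J`. -/
def hi {n : ℕ} (t : Fin n) : Fin (2*n) := ⟨n + t.1, by have := t.2; omega⟩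

/-- The minor of `M` on the rows `r 0, r 1, …` taken in this order; repetitions are allowed. -/
def rowDet {k : Type*} [Field k] {n d : ℕ} (M : Matrix (Fin (2*n)) (Fin d) k)
    (r : Fin d → Fin (2*n)) : k := (M.submatrix r id).det

theorem rowDet_inj {k : Type*} [Field k] {n d : ℕ} (r : Fin d → Fin (2*n))
    (hr : Function.Injective r) : ∃ c : k, c ≠ 0 ∧ ∀ M : Matrix (Fin (2*n)) (Fin d) k,
      rowDet M r = c * pluckerS M (Finset.univ.image r) := by
  have hS : (Finset.univ.image r).card = d := by
    rw [Finset.card_image_of_injective _ hr]; simp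
  let f := (Finset.univ.image r).orderIsoOfFin hS
  let g : Fin d → Fin d := fun i => f.symm ⟨r i, Finset.mem_image_of_mem _ (Finset.mem_univ _)⟩
  have hg : Function.Injective g := by
    intro a b hab
    have := f.symm.injective hab
    exact hr (Subtype.ext_iff.1 this)
  let σ : Equiv.Perm (Fin d) := Equiv.ofBijective g ((Fintype.bijective_iff_injective_and_card g).2 ⟨hg, rfl⟩)
  refine ⟨((Equiv.Perm.sign σ : ℤ) : k), ?_, fun M => ?_⟩
  · rcases Int.units_eq_one_or (Equiv.Perm.sign σ) with h | h <;> simp [h]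
  · rw [pluckerS, dif_pos hS, rowDet, ← Matrix.det_permute]
    congr 1
    ext i j
    have : ((f (g i)) : Fin (2*n)) = r i := by simp [g]
    simp only [Matrix.submatrix_apply, id]
    exact congrArg (fun x => M x j) this.symm

theorem rowDet_not_inj {k : Type*} [Field k] {n d : ℕ} (r : Fin d → Fin (2*n))
    (hr : ¬ Function.Injective r) (M : Matrix (Fin (2*n)) (Fin d) k) : rowDet M r = 0 := by
  simp only [Function.Injective, not_forall] at hr
  obtain ⟨a, b, hab, hne⟩ := hr
  exact Matrix.det_zero_of_row_eq hne (by ext j; simp [hab])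

theorem pluckerS_mul {k : Type*} [Field k] {n d : ℕ} (M : Matrix (Fin (2*n)) (Fin d) k)
    (h : Matrix (Fin d) (Fin d) k) (S : Finset (Fin (2*n))) :
    pluckerS (M * h) S = pluckerS M S * h.det := by
  unfold pluckerS
  split_ifs with hS
  · rw [← Matrix.det_mul]; congr 1
  · simp

/-- Maximal minor on a list of rows; `0` if the list does not have length `d`. -/
def listDet {k : Type*} [Field k] {n d : ℕ} (M : Matrix (Fin (2*n)) (Fin d) k)
    (l : List (Fin (2*n))) : k :=
  if h : l.length = d then rowDet M (fun i => l.get (i.cast h.symm)) else 0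

theorem listDet_eq {k : Type*} [Field k] {n d : ℕ} (l : List (Fin (2*n))) :
    ∃ c : k, (l.Nodup → c ≠ 0) ∧ ∀ M : Matrix (Fin (2*n)) (Fin d) k,
      listDet M l = c * pluckerS M l.toFinset := by
  by_cases hl : l.Nodup
  · by_cases h : l.length = d
    · subst h
      obtain ⟨c, hc, H⟩ := rowDet_inj (k := k) l.get (List.nodup_iff_injective_get.1 hl)
      refine ⟨c, fun _ => hc, fun M => ?_⟩
      have : Finset.univ.image l.get = l.toFinset := by
        ext x; simp [List.mem_iff_get]
      rw [listDet, dif_pos rfl, ← this, ← H M]; rfl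
    · refine ⟨1, fun _ => one_ne_zero, fun M => ?_⟩
      rw [listDet, dif_neg h, pluckerS, dif_neg, mul_zero]
      rwa [List.toFinset_card_of_nodup hl]
  · refine ⟨0, fun h => absurd h hl, fun M => ?_⟩
    rw [listDet, zero_mul]
    split_ifs with h
    · apply rowDet_not_inj
      subst h
      intro hi; exact hl (List.nodup_iff_injective_get.2 hi)
    · rfl

/-- The variable `P_S`; it is `0` if `S` does not have `d` elements, in agreement with the junk
value of `pluckerS`. -/
noncomputable def Xs (k : Type*) [Field k] {n : ℕ} (d : ℕ) (S : Finset (Fin (2*n))) :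
    MvPolynomial (V n d) k :=
  if h : S.card = d then MvPolynomial.X ⟨S, h⟩ else 0

/-- Evaluation of polynomials at the Plücker coordinates of `M`. -/
noncomputable def evP {k : Type*} [Field k] {n d : ℕ} (M : Matrix (Fin (2*n)) (Fin d) k) :
    MvPolynomial (V n d) k →+* k :=
  MvPolynomial.eval (fun S => pluckerS M S.1)

theorem evP_Xs {k : Type*} [Field k] {n d : ℕ} (M : Matrix (Fin (2*n)) (Fin d) k)
    (S : Finset (Fin (2*n))) : evP M (Xs k d S) = pluckerS M S := by
  unfold evP Xs
  split_ifs with h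
  · simp
  · simp [pluckerS, h]

theorem Xs_val {k : Type*} [Field k] {n d : ℕ} (S : V n d) :
    Xs k d S.1 = MvPolynomial.X S := by
  simp [Xs, S.2]

/-- Column spans are isotropic: `Mᵀ J M = 0`, written out in coordinates. -/
def IsoM {k : Type*} [Field k] {n d : ℕ} (M : Matrix (Fin (2*n)) (Fin d) k) : Prop :=
  ∀ a b : Fin d, ∑ t : Fin n, (M (lo t) a * M (hi t) b - M (hi t) a * M (lo t) b) = 0

theorem sum_lohi {n : ℕ} {A : Type*} [AddCommMonoid A] (f : Fin (2*n) → A) :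
    ∑ i, f i = ∑ t : Fin n, (f (lo t) + f (hi t)) := by
  have e : n + n = 2 * n := by omega
  rw [← (finCongr e).sum_comp, Fin.sum_univ_add, ← Finset.sum_add_distrib]
  rfl

theorem dot_J {k : Type*} [Field k] {n : ℕ} (u w : Fin (2*n) → k) :
    u ⬝ᵥ (Jmat k n).mulVec w = ∑ t : Fin n, (u (hi t) * w (lo t) - u (lo t) * w (hi t)) := by
  have h1 : ∀ t : Fin n, (Jmat k n).mulVec w (lo t) = - w (hi t) := by
    intro t
    rw [Matrix.mulVec, dotProduct, Finset.sum_eq_single (hi t)]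
    · simp [Jmat, lo, hi, add_comm]
    · intro b _ hb
      have h : ¬ (t.1 + n = b.1) := fun h => hb (Fin.ext (by simp [hi]; omega))
      have h' : ¬ (b.1 + n = t.1) := by have := t.2; omega
      simp [Jmat, lo, h, h']
    · simp
  have h2 : ∀ t : Fin n, (Jmat k n).mulVec w (hi t) = w (lo t) := by
    intro t
    rw [Matrix.mulVec, dotProduct, Finset.sum_eq_single (lo t)]
    · have h : ¬ (n + t.1 + n = t.1) := by have := t.2; omega
      simp [Jmat, lo, hi, add_comm, h]
      intro h; have := t.2; omega
    · intro b _ hb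
      have h : ¬ (n + t.1 + n = b.1) := by have := b.2; omega
      have h' : ¬ (b.1 + n = n + t.1) := fun h => hb (Fin.ext (by simp [lo]; omega))
      simp [Jmat, hi, h, h']
    · simp
  rw [dotProduct, sum_lohi]
  refine Finset.sum_congr rfl fun t _ => ?_
  rw [h1, h2]; ring

theorem isoM_of {k : Type*} [Field k] {n d : ℕ} (M : Matrix (Fin (2*n)) (Fin d) k)
    (h : IsIsotropic k n (LinearMap.range M.mulVecLin)) : IsoM M := by
  intro a b
  have hm : ∀ a : Fin d, M.col a ∈ LinearMap.range M.mulVecLin := fun a =>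
    ⟨Pi.single a 1, by simp⟩
  have := h _ (hm b) _ (hm a)
  rw [dot_J] at this
  rw [← this]
  refine Finset.sum_congr rfl fun t _ => ?_
  simp [Matrix.col]; ring

/-- The ideal of polynomials vanishing on the cone over `Sp/P_d`. -/
noncomputable def ISp (k : Type*) [Field k] (n d : ℕ) : Ideal (MvPolynomial (V n d) k) :=
  ⨅ M : {M : Matrix (Fin (2*n)) (Fin d) k // M.rank = d ∧
    IsIsotropic k n (LinearMap.range M.mulVecLin)}, RingHom.ker (evP M.1)

theorem mem_ISp {k : Type*} [Field k] {n d : ℕ} {P : MvPolynomial (V n d) k} :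
    P ∈ ISp k n d ↔ ∀ M : Matrix (Fin (2*n)) (Fin d) k, M.rank = d →
      IsIsotropic k n (LinearMap.range M.mulVecLin) → evP M P = 0 := by
  simp only [ISp, Ideal.mem_iInf, RingHom.mem_ker, Subtype.forall, and_imp]

theorem mem_ISp_of {k : Type*} [Field k] {n d : ℕ} {P : MvPolynomial (V n d) k}
    (h : ∀ M : Matrix (Fin (2*n)) (Fin d) k, IsoM M → evP M P = 0) : P ∈ ISp k n d :=
  mem_ISp.2 fun M _ hM => h M (isoM_of M hM)

variable {k : Type*} [Field k] {n d : ℕ}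

/-! ### Exterior algebra and linear relations from isotropy -/

theorem one_add_mul_one_sub_of_sq {R : Type*} [CommRing R] (x : R) (h : x * x = 0) :
    (1 + x) * (1 - x) = 1 := by linear_combination -h

theorem prod_neg_aux {R ι : Type*} [CommRing R] (f : ι → R) (s : Finset ι) :
    ∏ t ∈ s, -f t = (-1) ^ s.card * ∏ t ∈ s, f t := Finset.prod_neg f

section Ext

/-- The exterior algebra of `k^d`. -/
abbrev Ex (k : Type*) [Field k] (d : ℕ) : Type _ := ExteriorAlgebra k (Fin d → k)

/-- Contraction of the exterior algebra with the linear form `f`. -/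
noncomputable abbrev contr (f : Module.Dual k (Fin d → k)) : Ex k d →ₗ[k] Ex k d :=
  CliffordAlgebra.contractLeft (Q := (0 : QuadraticForm k (Fin d → k))) f

/-- The inclusion of `k^d` in its exterior algebra. -/
noncomputable abbrev io : (Fin d → k) →ₗ[k] Ex k d := ExteriorAlgebra.ι k

theorem contr_ι_mul (f : Module.Dual k (Fin d → k)) (v : Fin d → k) (y : Ex k d) :
    contr f (io v * y) = f v • y - io v * contr f y :=
  CliffordAlgebra.contractLeft_ι_mul (Q := (0 : QuadraticForm k (Fin d → k))) f v y

theorem ι_anti (v w : Fin d → k) : io v * io w = - (io w * io v) :=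
  eq_neg_of_add_eq_zero_left (ExteriorAlgebra.ι_add_mul_swap v w)

/-- The functorial action of the endomorphism `v ↦ v - f(v) e` on the exterior algebra is
`y ↦ y - e ∧ (f ⌟ y)`. -/
theorem map_eq_contr (f : Module.Dual k (Fin d → k)) (e : Fin d → k)
    (p : (Fin d → k) →ₗ[k] (Fin d → k)) (hp : ∀ v, p v = v - f v • e) (y : Ex k d) :
    ExteriorAlgebra.map p y = y - io e * contr f y := by
  induction y using CliffordAlgebra.left_induction with
  | algebraMap r =>
    have h1 : contr f (algebraMap k (Ex k d) r) = 0 :=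
      CliffordAlgebra.contractLeft_algebraMap (Q := (0 : QuadraticForm k (Fin d → k))) f r
    have h2 := (ExteriorAlgebra.map p).commutes r
    change contr f (algebraMap _ _ r) = 0 at h1
    rw [h1, mul_zero, sub_zero]
    exact h2
  | add x y hx hy => rw [map_add, map_add, hx, hy, mul_add]; abel
  | ι_mul y v hy =>
    change ExteriorAlgebra.map p (io v * y) = io v * y - io e * contr f (io v * y)
    rw [map_mul, hy, contr_ι_mul, ExteriorAlgebra.map_apply_ι, hp, map_sub, map_smul]
    have h1 := ι_anti v e
    have h2 : io e * io e = 0 := ExteriorAlgebra.ι_sq_zero e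
    have h3 : io e * (io e * contr f y) = 0 := by rw [← mul_assoc, h2, zero_mul]
    have h4 : io v * (io e * contr f y) = - (io e * (io v * contr f y)) := by
      rw [← mul_assoc, h1, neg_mul, mul_assoc]
    rw [sub_mul, mul_sub, mul_sub, mul_sub, h4, smul_mul_assoc, smul_mul_assoc, h3,
      mul_smul_comm]
    simp only [smul_zero, sub_zero]
    abel

/-- An element killed by all contractions is a scalar. -/
theorem scalar_of_contr (x : Ex k d) (hx : ∀ f, contr f x = 0) :
    x = algebraMap k _ (ExteriorAlgebra.algebraMapInv x) := by
  let P : Finset (Fin d) → (Fin d → k) →ₗ[k] (Fin d → k) := fun s =>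
    LinearMap.pi fun i => if i ∈ s then 0 else LinearMap.proj i
  have key : ∀ s, ExteriorAlgebra.map (P s) x = x := by
    intro s
    induction s using Finset.induction_on with
    | empty =>
      have : P ∅ = LinearMap.id := by ext v i; simp [P]
      rw [this, ExteriorAlgebra.map_id]; rfl
    | insert a s ha ih =>
      have h : P (insert a s) = (P {a}).comp (P s) := by
        refine LinearMap.ext fun v => funext fun i => ?_
        simp only [P, LinearMap.pi_apply, LinearMap.comp_apply, Finset.mem_insert,
          Finset.mem_singleton]
        by_cases h1 : i = a
        · simp [h1]
        · simp [h1]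
      rw [h, ← ExteriorAlgebra.map_comp_map, AlgHom.comp_apply, ih,
        map_eq_contr (LinearMap.proj a) (Pi.single a 1) (P {a}), hx, mul_zero, sub_zero]
      intro v
      funext i
      simp only [P, LinearMap.pi_apply, Finset.mem_singleton]
      by_cases h1 : i = a
      · subst h1; simp
      · simp [h1]
  have h0 : P Finset.univ = 0 := by ext v i; simp [P]
  have h1 : ExteriorAlgebra.map (0 : (Fin d → k) →ₗ[k] (Fin d → k)) =
      (Algebra.ofId k (Ex k d)).comp (ExteriorAlgebra.algebraMapInv) := by
    apply ExteriorAlgebra.hom_ext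
    refine LinearMap.ext fun v => ?_
    simp [ExteriorAlgebra.algebraMapInv]
  rw [← key Finset.univ, h0, h1]
  simp [Algebra.ofId_apply, (ExteriorAlgebra.algebraMap_leftInverse (Fin d → k)) _]

theorem ιι_center (v w : Fin d → k) : io v * io w ∈ Subalgebra.center k (Ex k d) := by
  rw [Subalgebra.mem_center_iff]
  intro b
  induction b using CliffordAlgebra.left_induction with
  | algebraMap r => exact Algebra.commutes _ _
  | add x y hx hy => rw [add_mul, mul_add, hx, hy]
  | ι_mul y u hy =>
    change io u * y * (io v * io w) = io v * io w * (io u * y)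
    rw [mul_assoc, hy]
    have h1 : io u * (io v * io w) = io v * io w * io u := by
      rw [← mul_assoc, ι_anti u v, neg_mul, mul_assoc, ι_anti u w, mul_neg, neg_neg, mul_assoc]
    rw [← mul_assoc, h1, mul_assoc]

/-- The bivector `v ∧ w`, as an element of the (commutative) centre. -/
noncomputable def om (v w : Fin d → k) : Subalgebra.center k (Ex k d) :=
  ⟨io v * io w, ιι_center v w⟩

theorem om_val (v w : Fin d → k) : (om v w : Ex k d) = io v * io w := rfl

theorem ι_mul_om_left (v w : Fin d → k) : io v * (om v w : Ex k d) = 0 := by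
  rw [om_val, ← mul_assoc, ExteriorAlgebra.ι_sq_zero, zero_mul]

theorem ι_mul_om_right (v w : Fin d → k) : io w * (om v w : Ex k d) = 0 := by
  rw [om_val, ι_anti, mul_neg, ← mul_assoc, ExteriorAlgebra.ι_sq_zero, zero_mul, neg_zero]

theorem om_sq (v w : Fin d → k) : om v w * om v w = 0 := by
  apply Subtype.ext
  change (io v * io w) * (om v w : Ex k d) = 0
  rw [mul_assoc, ι_mul_om_right, mul_zero]

/-- Contraction is a derivation on the commuting factors `1 + a_t ∧ b_t`, so it multiplies their
product by the linear factor `∑ (f(a_t) b_t - f(b_t) a_t)`. -/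
theorem contr_prod {ι : Type*} (a b : ι → Fin d → k)
    (f : Module.Dual k (Fin d → k)) (s : Finset ι) :
    contr f ((∏ t ∈ s, (1 + om (a t) (b t)) : Subalgebra.center k (Ex k d)) : Ex k d) =
      io (∑ t ∈ s, (f (a t) • b t - f (b t) • a t)) *
        ((∏ t ∈ s, (1 + om (a t) (b t)) : Subalgebra.center k (Ex k d)) : Ex k d) := by
  classical
  induction s using Finset.induction_on with
  | empty =>
    simp only [Finset.prod_empty, Finset.sum_empty, map_zero, zero_mul]
    exact CliffordAlgebra.contractLeft_one (Q := (0 : QuadraticForm k (Fin d → k))) f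
  | insert t s ht ih =>
    rw [Finset.prod_insert ht, Finset.sum_insert ht]
    set Y := (∏ t ∈ s, (1 + om (a t) (b t)) : Subalgebra.center k (Ex k d))
    set v := f (a t) • b t - f (b t) • a t
    set σ := ∑ t ∈ s, (f (a t) • b t - f (b t) • a t)
    have e1 : (((1 + om (a t) (b t)) * Y : Subalgebra.center k (Ex k d)) : Ex k d)
        = (Y : Ex k d) + io (a t) * (io (b t) * (Y : Ex k d)) := by
      change (1 + io (a t) * io (b t)) * (Y : Ex k d) = _
      rw [add_mul, one_mul, mul_assoc]
    have e2 : io v * (om (a t) (b t) : Ex k d) = 0 := by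
      simp only [v, map_sub, map_smul, sub_mul, smul_mul_assoc, ι_mul_om_left, ι_mul_om_right,
        smul_zero, sub_zero]
    have e3 : io v * (io (a t) * (io (b t) * (Y : Ex k d))) = 0 := by
      have : io v * (io (a t) * (io (b t) * (Y : Ex k d)))
        = (io v * (om (a t) (b t) : Ex k d)) * Y := by rw [om_val]; simp only [mul_assoc]
      rw [this, e2, zero_mul]
    have e4 : io (a t) * (io (b t) * (io σ * (Y : Ex k d))) =
        io σ * (io (a t) * (io (b t) * (Y : Ex k d))) := by
      have := Subalgebra.mem_center_iff.1 (ιι_center (a t) (b t)) (io σ)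
      rw [← mul_assoc, ← mul_assoc, ← this]
      simp only [mul_assoc]
    rw [e1, map_add, contr_ι_mul, contr_ι_mul, ih, map_add, add_mul, mul_add, mul_add, e3,
      mul_sub, e4, add_zero, mul_smul_comm]
    have e5 : io v * (Y : Ex k d) = f (a t) • (io (b t) * (Y : Ex k d)) - f (b t) • (io (a t) * (Y : Ex k d)) := by
      simp only [v, map_sub, map_smul, sub_mul, smul_mul_assoc]
    rw [e5]
    abel

/-- Isotropy of the span makes the linear factor of `contr_prod` vanish for every `f`; hence the
product is killed by all contractions and is the scalar `1`. -/
theorem prod_om_eq_one {ι : Type*} [Fintype ι] (a b : ι → Fin d → k)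
    (h : ∀ i j : Fin d, ∑ t, (a t i * b t j - b t i * a t j) = 0) :
    ∏ t, (1 + om (a t) (b t)) = 1 := by
  apply Subtype.ext
  have h0 : ∀ f : Module.Dual k (Fin d → k), ∑ t, (f (a t) • b t - f (b t) • a t) = 0 := by
    intro f
    funext j
    have hf : ∀ v : Fin d → k, f v = ∑ i, v i * f (Pi.single i 1) := by
      intro v
      conv_lhs => rw [pi_eq_sum_univ' v]
      simp [map_sum, Pi.single]
    simp only [Finset.sum_apply, Pi.sub_apply, Pi.smul_apply, smul_eq_mul, Pi.zero_apply]
    calc ∑ t, (f (a t) * b t j - f (b t) * a t j)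
        = ∑ t, ∑ i, f (Pi.single i 1) * (a t i * b t j - b t i * a t j) := by
          refine Finset.sum_congr rfl fun t _ => ?_
          rw [hf (a t), hf (b t), Finset.sum_mul, Finset.sum_mul, ← Finset.sum_sub_distrib]
          exact Finset.sum_congr rfl fun i _ => by ring
      _ = 0 := by
          rw [Finset.sum_comm]
          refine Finset.sum_eq_zero fun i _ => ?_
          rw [← Finset.mul_sum, h, mul_zero]
  refine (scalar_of_contr _ (fun f => by rw [contr_prod, h0, map_zero, zero_mul])).trans ?_
  have : ExteriorAlgebra.algebraMapInv (R := k) (M := Fin d → k)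
      ((∏ t, (1 + om (a t) (b t)) : Subalgebra.center k (Ex k d)) : Ex k d) = 1 := by
    have := map_prod ((ExteriorAlgebra.algebraMapInv (R := k) (M := Fin d → k)).comp
      (Subalgebra.center k (Ex k d)).val) (fun t => 1 + om (a t) (b t)) Finset.univ
    rw [AlgHom.comp_apply] at this
    refine this.trans (Finset.prod_eq_one fun t _ => ?_)
    simp [om_val, ExteriorAlgebra.algebraMapInv]
  rw [this]; simp

/-- Part of the factors may be moved to the other side, since `1 - a ∧ b` is the inverse of
`1 + a ∧ b`. -/
theorem prod_om_swap {ι : Type*} [Fintype ι] [DecidableEq ι] (a b : ι → Fin d → k)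
    (h : ∀ i j : Fin d, ∑ t, (a t i * b t j - b t i * a t j) = 0) (G : Finset ι) :
    ∏ t ∈ G, (1 + om (a t) (b t)) = ∏ t ∈ Gᶜ, (1 - om (a t) (b t)) := by
  have h1 := prod_om_eq_one a b h
  rw [← Finset.prod_mul_prod_compl G] at h1
  have h2 : (∏ t ∈ Gᶜ, (1 + om (a t) (b t))) * ∏ t ∈ Gᶜ, (1 - om (a t) (b t)) = 1 := by
    rw [← Finset.prod_mul_distrib]
    refine Finset.prod_eq_one fun t _ => ?_
    exact one_add_mul_one_sub_of_sq _ (om_sq _ _)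
  calc _ = (∏ t ∈ G, (1 + om (a t) (b t))) * ((∏ t ∈ Gᶜ, (1 + om (a t) (b t))) * ∏ t ∈ Gᶜ, (1 - om (a t) (b t))) := by rw [h2, mul_one]
    _ = _ := by rw [← mul_assoc, h1, one_mul]

end Ext

section Rel

/-- The linear functional on the exterior algebra which is the determinant in degree `d` and zero
in all other degrees. -/
noncomputable def DetF (k : Type*) [Field k] (d : ℕ) : Ex k d →ₗ[k] k :=
  ExteriorAlgebra.liftAlternating (fun i =>
    if h : i = d then h ▸ (Matrix.detRowAlternating (R := k) (n := Fin i)).domDomCongr (Equiv.refl _) else 0)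

theorem DetF_list (M : Matrix (Fin (2*n)) (Fin d) k) (l : List (Fin (2*n))) :
    DetF k d (l.map fun i => io (M i)).prod = listDet M l := by
  have h1 : (l.map fun i => io (M i)).prod = ExteriorAlgebra.ιMulti k l.length (fun i => M (l.get i)) := by
    rw [ExteriorAlgebra.ιMulti_apply]
    congr 1
    conv_lhs => rw [← List.ofFn_get l]
    rw [List.map_ofFn]; rfl
  rw [h1, DetF, ExteriorAlgebra.liftAlternating_apply_ιMulti, listDet]
  split_ifs with h
  · subst h; rfl
  · rfl

/-- The rows `lo t, hi t` for `t` in `L`, listed. -/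
noncomputable def prs (L : Finset (Fin n)) : List (Fin (2*n)) := L.toList.flatMap fun t => [lo t, hi t]

theorem prs_prod (M : Matrix (Fin (2*n)) (Fin d) k) (L : Finset (Fin n)) :
    ((∏ t ∈ L, om (M (lo t)) (M (hi t)) : Subalgebra.center k (Ex k d)) : Ex k d) =
      ((prs L).map fun i => io (M i)).prod := by
  have h1 : ∏ t ∈ L, om (M (lo t)) (M (hi t)) = (L.toList.map fun t => om (M (lo t)) (M (hi t))).prod := by
    rw [Finset.prod_map_toList]
  rw [h1, prs]
  generalize L.toList = l
  induction l with
  | nil => simp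
  | cons t l ih =>
    rw [List.map_cons, List.prod_cons, List.flatMap_cons, List.map_append, List.prod_append, ← ih]
    simp [om_val, mul_assoc]

/-- The linear relations between the maximal minors of a matrix with isotropic column span,
obtained from `prod_om_swap` by multiplying with further rows and applying `DetF`. -/
theorem Rel (M : Matrix (Fin (2*n)) (Fin d) k) (hM : IsoM M) (ρ : List (Fin (2*n)))
    (G : Finset (Fin n)) :
    ∑ L ∈ G.powerset, listDet M (ρ ++ prs L) =
      ∑ L ∈ Gᶜ.powerset, (-1 : k) ^ L.card * listDet M (ρ ++ prs L) := by
  have h := prod_om_swap (fun t => M (lo t)) (fun t => M (hi t)) hM G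
  simp only [sub_eq_add_neg] at h
  rw [Finset.prod_one_add, Finset.prod_one_add] at h
  have h2 := congrArg (fun x : Subalgebra.center k (Ex k d) =>
    DetF k d ((ρ.map fun i => io (M i)).prod * (x : Ex k d))) h
  simp only [AddSubmonoidClass.coe_finsetSum, Finset.mul_sum, map_sum] at h2
  have e1 : ∀ L : Finset (Fin n), DetF k d ((ρ.map fun i => io (M i)).prod *
      ((∏ t ∈ L, om (M (lo t)) (M (hi t)) : Subalgebra.center k (Ex k d)) : Ex k d)) = listDet M (ρ ++ prs L) := by
    intro L
    rw [prs_prod, ← List.prod_append, ← List.map_append, DetF_list]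
  have e2 : ∀ L : Finset (Fin n), DetF k d ((ρ.map fun i => io (M i)).prod *
      ((∏ t ∈ L, -om (M (lo t)) (M (hi t)) : Subalgebra.center k (Ex k d)) : Ex k d)) =
        (-1 : k) ^ L.card * listDet M (ρ ++ prs L) := by
    intro L
    refine (congrArg (fun x : Subalgebra.center k (Ex k d) =>
      DetF k d ((ρ.map fun i => io (M i)).prod * (x : Ex k d)))
      (prod_neg_aux (fun t => om (M (lo t)) (M (hi t))) L)).trans ?_
    rw [← e1]
    have : (((-1) ^ L.card * ∏ t ∈ L, om (M (lo t)) (M (hi t)) : Subalgebra.center k (Ex k d)) : Ex k d)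
      = (-1 : k) ^ L.card • ((∏ t ∈ L, om (M (lo t)) (M (hi t)) : Subalgebra.center k (Ex k d)) : Ex k d) := by
      rcases Nat.even_or_odd L.card with h | h <;> simp [h]
    refine (congrArg (fun y => DetF k d ((ρ.map fun i => io (M i)).prod * y)) this).trans ?_
    beta_reduce
    rw [mul_smul_comm, map_smul, smul_eq_mul]
  simp only [e1, e2] at h2
  exact h2

end Rel

/-! ### Straightening a single Plücker coordinate -/

@[simp] theorem lo_val (t : Fin n) : (lo t).1 = t.1 := (rfl)
@[simp] theorem hi_val (t : Fin n) : (hi t).1 = n + t.1 := (rfl)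

/-- Number of elements of `S` among the first `x` rows `lo t`, `t < x`. -/
def NA (S : Finset (Fin (2*n))) (x : ℕ) : ℕ := ∑ i ∈ S, if i.1 < x then 1 else 0

/-- Number of elements of `S` among the rows `hi t`, `t < x`. -/
def NB (S : Finset (Fin (2*n))) (x : ℕ) : ℕ := ∑ i ∈ S, if n ≤ i.1 ∧ i.1 < n + x then 1 else 0

/-- The height function `NA + NB - x` of `S`. -/
def ht (S : Finset (Fin (2*n))) (x : ℕ) : ℤ := (NA S x : ℤ) + NB S x - x

/-- The weight of a row: strictly increasing along the order of positions, and opposite on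
`lo t` and `hi t`. -/
def cw (i : Fin (2*n)) : ℤ := if i.1 < n then (i.1 : ℤ) - n else 2 * n - i.1

/-- The total weight of a set of rows. -/
def cS (S : Finset (Fin (2*n))) : ℤ := ∑ i ∈ S, cw i

/-- The index `t` of a row `lo t` or `hi t`. -/
def kw (i : Fin (2*n)) : ℕ := if i.1 < n then i.1 else i.1 - n

/-- The sum of the indices `kw` over a set of rows. -/
def kS (S : Finset (Fin (2*n))) : ℕ := ∑ i ∈ S, kw i

theorem cw_pair (t : Fin n) : cw (lo t) + cw (hi t) = 0 := by
  have := t.2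
  simp only [cw, lo_val, hi_val]
  rw [if_pos this, if_neg (by omega)]; push_cast; ring

theorem kw_lo (t : Fin n) : kw (lo t) = t.1 := by simp [kw]
theorem kw_hi (t : Fin n) : kw (hi t) = t.1 := by simp [kw]

theorem lo_inj {s t : Fin n} : lo s = lo t ↔ s = t := by
  simp [lo, Fin.ext_iff]
theorem hi_inj {s t : Fin n} : hi s = hi t ↔ s = t := by
  simp [hi, Fin.ext_iff]
theorem lo_ne_hi {s t : Fin n} : lo s ≠ hi t := by
  have := s.2
  simp [lo, hi, Fin.ext_iff]; omega
theorem hi_ne_lo {s t : Fin n} : hi s ≠ lo t := fun h => lo_ne_hi h.symm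

theorem lohi_cases (i : Fin (2*n)) : (∃ t, i = lo t) ∨ ∃ t, i = hi t := by
  by_cases h : i.1 < n
  · exact Or.inl ⟨⟨i.1, h⟩, rfl⟩
  · exact Or.inr ⟨⟨i.1 - n, by have := i.2; omega⟩, by ext; simp [hi]; omega⟩

theorem sum_set (S : Finset (Fin (2*n))) {A : Type*} [AddCommMonoid A] (w : Fin (2*n) → A) :
    ∑ i ∈ S, w i = ∑ t : Fin n, ((if lo t ∈ S then w (lo t) else 0) +
      (if hi t ∈ S then w (hi t) else 0)) := by
  rw [← sum_lohi (fun i => if i ∈ S then w i else 0)]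
  simp

theorem NA_eq (S : Finset (Fin (2*n))) (x : ℕ) (hx : x ≤ n) :
    NA S x = ∑ t : Fin n, if lo t ∈ S ∧ t.1 < x then 1 else 0 := by
  rw [NA, sum_set]
  refine Finset.sum_congr rfl fun t _ => ?_
  have h : ¬ (n + t.1 < x) := by omega
  simp only [lo_val, hi_val, h, if_false, ite_self, add_zero]
  split_ifs <;> simp_all

theorem NB_eq (S : Finset (Fin (2*n))) (x : ℕ) :
    NB S x = ∑ t : Fin n, if hi t ∈ S ∧ t.1 < x then 1 else 0 := by
  rw [NB, sum_set]
  refine Finset.sum_congr rfl fun t _ => ?_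
  have h : ¬ (n ≤ (lo t).1) := by have := t.2; simp
  simp only [lo_val, hi_val, h, false_and, if_false, ite_self, zero_add]
  split_ifs <;> simp_all

theorem mem_prs {L : Finset (Fin n)} {i : Fin (2*n)} :
    i ∈ prs L ↔ ∃ t ∈ L, i = lo t ∨ i = hi t := by
  simp [prs]

theorem prs_sum (L : Finset (Fin n)) {A : Type*} [AddCommMonoid A] (w : Fin (2*n) → A) :
    ((prs L).map w).sum = ∑ t ∈ L, (w (lo t) + w (hi t)) := by
  rw [← Finset.sum_map_toList, prs]
  induction L.toList with
  | nil => simp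
  | cons t l ih => simp [ih, add_assoc]

theorem prs_nodup (L : Finset (Fin n)) : (prs L).Nodup := by
  rw [prs, List.nodup_flatMap]
  refine ⟨fun t _ => by simp [lo_ne_hi], ?_⟩
  refine (Finset.nodup_toList L).imp ?_
  intro a b hab
  simp [Function.onFun, lo_inj, hi_inj, lo_ne_hi, hi_ne_lo, Ne.symm hab]

theorem sum_app {S0 : Finset (Fin (2*n))} {L : Finset (Fin n)}
    (h : (S0.toList ++ prs L).Nodup) {A : Type*} [AddCommMonoid A] (w : Fin (2*n) → A) :
    ∑ i ∈ (S0.toList ++ prs L).toFinset, w i = ∑ i ∈ S0, w i + ∑ t ∈ L, (w (lo t) + w (hi t)) := by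
  rw [List.sum_toFinset _ h, List.map_append, List.sum_append, prs_sum, Finset.sum_map_toList]

theorem length_app (S0 : Finset (Fin (2*n))) (L : Finset (Fin n)) :
    (S0.toList ++ prs L).length = S0.card + 2 * L.card := by
  have := prs_sum L (fun _ => 1)
  simp at this
  simp [this]; ring

theorem sum_sdiff_inter_aux {ι : Type*} [DecidableEq ι] (s t : Finset ι) (f : ι → ℕ) :
    ∑ i ∈ s \ t, f i + ∑ i ∈ s ∩ t, f i = ∑ i ∈ s, f i := by
  rw [← Finset.sum_union (Finset.disjoint_sdiff_inter s t), Finset.sdiff_union_inter]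

open Classical in
/-- A polynomial whose value at the Plücker coordinates of `M` is `listDet M l`. -/
noncomputable def PL (k : Type*) [Field k] {n : ℕ} (d : ℕ) (l : List (Fin (2*n))) :
    MvPolynomial (V n d) k :=
  if l.Nodup ∧ l.length = d then
    (listDet_eq (k := k) (d := d) l).choose • Xs k d l.toFinset else 0

theorem evP_PL (M : Matrix (Fin (2*n)) (Fin d) k) (l : List (Fin (2*n))) :
    evP M (PL k d l) = listDet M l := by
  rw [PL]
  split_ifs with h
  · rw [MvPolynomial.smul_eq_C_mul, map_mul, evP_Xs, (listDet_eq (k := k) (d := d) l).choose_spec.2]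
    simp [evP]
  · rw [map_zero, listDet]
    split_ifs with h'
    · symm
      apply rowDet_not_inj
      intro hi
      apply h
      refine ⟨?_, h'⟩
      rw [List.nodup_iff_injective_get]
      subst h'; exact hi
    · rfl

theorem PL_Rel (ρ : List (Fin (2*n))) (G : Finset (Fin n)) :
    ∑ L ∈ G.powerset, PL k d (ρ ++ prs L) -
      ∑ L ∈ Gᶜ.powerset, (-1 : k) ^ L.card • PL k d (ρ ++ prs L) ∈ ISp k n d := by
  refine mem_ISp_of fun M hM => ?_
  have := Rel M hM ρ G
  simp only [MvPolynomial.smul_eq_C_mul, map_sub, map_sum, map_mul, evP_PL]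
  rw [this]
  simp [evP]

/-- Straightening of one Plücker coordinate. Modulo `ISp`, `P_S` is a combination of `P_T` of the
same weight `cS` for which either `kS` is larger, or both counting functions at `x` have grown by
at least `ht S y - ht S x`. The relation used exchanges the pairs of `S` with index
in `[x, y)` for other pairs. Either some of them move to index at least `y`, which raises `kS`, or
all are replaced by pairs disjoint from `S` with index below `y`, at least `ht S y - ht S x` of
which have index below `x`. -/
theorem Lin (S : Finset (Fin (2*n))) (hS : S.card = d) (x y : ℕ) (hxy : x ≤ y) (hy : y ≤ n) :
    Xs k d S ∈ Submodule.span k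
      ({P | ∃ T : Finset (Fin (2*n)), T.card = d ∧ cS T = cS S ∧ kS S < kS T ∧ P = Xs k d T} ∪
       {P | ∃ T : Finset (Fin (2*n)), T.card = d ∧ cS T = cS S ∧
          (NB S x : ℤ) + ht S y ≤ NB T x + ht S x ∧
          (NA S x : ℤ) + ht S y ≤ NA T x + ht S x ∧ P = Xs k d T}) ⊔
      (ISp k n d).restrictScalars k := by
  classical
  set W := Submodule.span k
      ({P | ∃ T : Finset (Fin (2*n)), T.card = d ∧ cS T = cS S ∧ kS S < kS T ∧ P = Xs k d T} ∪
       {P | ∃ T : Finset (Fin (2*n)), T.card = d ∧ cS T = cS S ∧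
          (NB S x : ℤ) + ht S y ≤ NB T x + ht S x ∧
          (NA S x : ℤ) + ht S y ≤ NA T x + ht S x ∧ P = Xs k d T}) ⊔
      (ISp k n d).restrictScalars k with hW
  set C : Finset (Fin n) := Finset.univ.filter fun t => x ≤ t.1 ∧ t.1 < y ∧ lo t ∈ S ∧ hi t ∈ S with hC
  set S0 : Finset (Fin (2*n)) := S.filter fun i => ∀ t ∈ C, i ≠ lo t ∧ i ≠ hi t with hS0
  set G : Finset (Fin n) := C ∪ Finset.univ.filter fun t => y ≤ t.1 with hG
  have hCS : (S0.toList ++ prs C).Nodup := by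
    rw [List.nodup_append]
    refine ⟨Finset.nodup_toList _, prs_nodup _, ?_⟩
    intro i hi j hj hij
    subst hij
    obtain ⟨t, ht, h⟩ := mem_prs.1 hj
    have := (Finset.mem_filter.1 (Finset.mem_toList.1 hi)).2 t ht
    tauto
  have hCf : (S0.toList ++ prs C).toFinset = S := by
    ext i
    simp only [List.toFinset_append, Finset.toList_toFinset, Finset.mem_union, List.mem_toFinset,
      mem_prs]
    constructor
    · rintro (h | ⟨t, ht, rfl | rfl⟩)
      · exact (Finset.mem_filter.1 h).1
      · exact (Finset.mem_filter.1 ht).2.2.2.1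
      · exact (Finset.mem_filter.1 ht).2.2.2.2
    · intro hi
      by_cases h : ∃ t ∈ C, i = lo t ∨ i = SpR.hi t
      · exact Or.inr h
      · left
        rw [hS0, Finset.mem_filter]
        refine ⟨hi, fun t ht => ?_⟩
        push Not at h
        exact h t ht
  have hcard : S0.card + 2 * C.card = d := by
    rw [← length_app, ← List.toFinset_card_of_nodup hCS, hCf, hS]
  have hsum : ∀ {A : Type} [AddCommMonoid A] (w : Fin (2*n) → A),
      ∑ i ∈ S, w i = ∑ i ∈ S0, w i + ∑ t ∈ C, (w (lo t) + w (hi t)) := by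
    intro A _ w
    rw [← sum_app hCS, hCf]
  -- every other list occurring in the relation is of one of the two kinds
  have hgood : ∀ L : Finset (Fin n), (L ⊆ G ∧ L ≠ C ∨ L ⊆ Gᶜ) → PL k d (S0.toList ++ prs L) ∈ W := by
    intro L hL
    rw [PL]
    split_ifs with h
    swap
    · exact W.zero_mem
    obtain ⟨hnd, hlen⟩ := h
    have hLC : L.card = C.card := by rw [length_app] at hlen; omega
    refine W.smul_mem _ (Submodule.mem_sup_left (Submodule.subset_span ?_))
    set T := (S0.toList ++ prs L).toFinset with hT
    have hTc : T.card = d := by rw [hT, List.toFinset_card_of_nodup hnd, hlen]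
    have hTw : ∀ {A : Type} [AddCommMonoid A] (w : Fin (2*n) → A),
      ∑ i ∈ T, w i = ∑ i ∈ S0, w i + ∑ t ∈ L, (w (lo t) + w (hi t)) := fun w => sum_app hnd w
    have hcc : cS T = cS S := by
      rw [cS, cS, hTw, hsum]; simp only [cw_pair]; simp
    rcases hL with ⟨hLG, hne⟩ | hLG
    · left
      refine ⟨T, hTc, hcc, ?_, rfl⟩
      rw [kS, kS, hTw, hsum]
      simp only [kw_lo, kw_hi]
      have e1 := sum_sdiff_inter_aux (s := L) (t := C) (f := fun t : Fin n => t.1 + t.1)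
      have e2 := sum_sdiff_inter_aux (s := C) (t := L) (f := fun t : Fin n => t.1 + t.1)
      rw [Finset.inter_comm] at e2
      have c1 := Finset.card_sdiff_add_card_inter L C
      have c2 := Finset.card_sdiff_add_card_inter C L
      rw [Finset.inter_comm] at c2
      have hpos : 0 < (L \ C).card := by
        rw [Finset.card_pos, Finset.sdiff_nonempty]
        intro h
        exact hne (Finset.eq_of_subset_of_card_le h hLC.ge)
      -- pairs in `L \ C` have index at least `y`, those in `C` index below `y`
      have b1 : (L \ C).card * (2 * y) ≤ ∑ t ∈ L \ C, (t.1 + t.1) := by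
        rw [← smul_eq_mul, ← Finset.sum_const]
        refine Finset.sum_le_sum fun t ht => ?_
        have h1 := Finset.mem_sdiff.1 ht
        have h2 := hLG h1.1
        rw [hG, Finset.mem_union] at h2
        rcases h2 with h2 | h2
        · exact absurd h2 h1.2
        · have := (Finset.mem_filter.1 h2).2
          omega
      have b2 : ∑ t ∈ C \ L, (t.1 + t.1 + 2) ≤ (C \ L).card * (2 * y) := by
        rw [← smul_eq_mul, ← Finset.sum_const]
        refine Finset.sum_le_sum fun t ht => ?_
        have h1 := (Finset.mem_filter.1 (Finset.mem_sdiff.1 ht).1).2.2.1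
        omega
      rw [Finset.sum_add_distrib, Finset.sum_const, smul_eq_mul] at b2
      have : (C \ L).card = (L \ C).card := by omega
      rw [this] at b2
      omega
    · right
      have hfree : ∀ t ∈ L, t ∉ C ∧ t.1 < y ∧ lo t ∉ S ∧ hi t ∉ S := by
        intro t ht
        have h1 : t ∉ C ∧ t.1 < y := by
          have h2 := hLG ht
          rw [hG, Finset.mem_compl, Finset.mem_union, not_or] at h2
          refine ⟨h2.1, ?_⟩
          by_contra h3
          exact h2.2 (Finset.mem_filter.2 ⟨Finset.mem_univ _, by omega⟩)
        rw [List.nodup_append] at hnd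
        have h3 : ∀ i ∈ prs L, i ∉ S0 := fun i hi hi0 => hnd.2.2 i (Finset.mem_toList.2 hi0) i hi rfl
        have h4 := h3 (lo t) (mem_prs.2 ⟨t, ht, Or.inl rfl⟩)
        have h5 := h3 (hi t) (mem_prs.2 ⟨t, ht, Or.inr rfl⟩)
        refine ⟨h1.1, h1.2, fun h => h4 ?_, fun h => h5 ?_⟩
        · refine Finset.mem_filter.2 ⟨h, fun s hs => ⟨fun hst => ?_, lo_ne_hi⟩⟩
          rw [lo_inj] at hst; subst hst; exact h1.1 hs
        · refine Finset.mem_filter.2 ⟨h, fun s hs => ⟨hi_ne_lo, fun hst => ?_⟩⟩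
          rw [hi_inj] at hst; subst hst; exact h1.1 hs
      have hCx : ∀ t ∈ C, x ≤ t.1 := fun t ht => (Finset.mem_filter.1 ht).2.1
      set q : ℕ := ∑ t ∈ L, if t.1 < x then 1 else 0 with hq
      have hNA : NA T x = NA S x + q := by
        rw [NA, NA, hTw, hsum, add_assoc]
        congr 1
        have : ∑ t ∈ C, ((if (lo t).1 < x then 1 else 0) + (if (hi t).1 < x then 1 else 0)) = 0 := by
          refine Finset.sum_eq_zero fun t ht => ?_
          have := hCx t ht
          rw [if_neg, if_neg] <;> simp <;> omega
        rw [this, zero_add]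
        refine Finset.sum_congr rfl fun t ht => ?_
        have : ¬ (hi t).1 < x := by simp; omega
        rw [if_neg this, lo_val, add_zero]
      have hNB : NB T x = NB S x + q := by
        rw [NB, NB, hTw, hsum, add_assoc]
        congr 1
        have : ∑ t ∈ C, ((if n ≤ (lo t).1 ∧ (lo t).1 < n + x then 1 else 0) + (if n ≤ (hi t).1 ∧ (hi t).1 < n + x then 1 else 0)) = 0 := by
          refine Finset.sum_eq_zero fun t ht => ?_
          have := hCx t ht
          rw [if_neg, if_neg] <;> simp <;> omega
        rw [this, zero_add]
        refine Finset.sum_congr rfl fun t ht => ?_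
        have : ¬ (n ≤ (lo t).1) := by simp
        simp [-lo_val, this]
      -- the number of new pairs below `x` is at least `ht S y - ht S x`
      have hqe : ht S y - ht S x ≤ q := by
        have a1 : (C.card : ℤ) = q + ∑ t ∈ L, if x ≤ t.1 then 1 else 0 := by
          rw [← hLC, hq, Finset.card_eq_sum_ones]
          push_cast
          rw [← Finset.sum_add_distrib]
          refine Finset.sum_congr rfl fun t ht => ?_
          by_cases h : t.1 < x
          · simp [h]
          · simp [h, not_lt.1 h]
        have a2 : ∑ t ∈ L, (if x ≤ t.1 then (1 : ℤ) else 0) ≤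
            ∑ t : Fin n, if x ≤ t.1 ∧ t.1 < y ∧ lo t ∉ S ∧ hi t ∉ S then 1 else 0 := by
          refine le_trans (Finset.sum_le_sum fun t ht => ?_)
            (Finset.sum_le_sum_of_subset_of_nonneg (Finset.subset_univ L) ?_)
          · have := hfree t ht
            by_cases h : x ≤ t.1 <;> simp [h, this]
          · intro t _ _; split_ifs <;> simp
        have a3 : (C.card : ℤ) = ∑ t : Fin n, if x ≤ t.1 ∧ t.1 < y ∧ lo t ∈ S ∧ hi t ∈ S then 1 else 0 := by
          rw [hC, Finset.card_filter]; push_cast; rfl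
        have a4 : ∀ z ≤ n, (z : ℤ) = ∑ t : Fin n, if t.1 < z then 1 else 0 := by
          intro z hz
          have := Fin.card_filter_val_lt (n := n) (m := z)
          rw [Finset.card_filter] at this
          rw [min_eq_right hz] at this
          have h2 := congrArg (Nat.cast (R := ℤ)) this
          push_cast at h2
          exact h2.symm
        have a5 : ht S y - ht S x = ∑ t : Fin n, if x ≤ t.1 ∧ t.1 < y then
            ((if lo t ∈ S then (1:ℤ) else 0) + (if hi t ∈ S then 1 else 0) - 1) else 0 := by
          rw [ht, ht, NA_eq S y hy, NA_eq S x (hxy.trans hy), NB_eq, NB_eq, a4 y hy, a4 x (hxy.trans hy)]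
          push_cast
          simp only [← Finset.sum_add_distrib, ← Finset.sum_sub_distrib]
          refine Finset.sum_congr rfl fun t _ => ?_
          by_cases h1 : t.1 < x
          · have h2 : t.1 < y := by omega
            have h3 : ¬ x ≤ t.1 := by omega
            simp [h1, h2]
          · have h3 : x ≤ t.1 := by omega
            by_cases h2 : t.1 < y <;> simp [h1, h2, h3]
        have a6 : ht S y - ht S x = (C.card : ℤ) - ∑ t : Fin n, if x ≤ t.1 ∧ t.1 < y ∧ lo t ∉ S ∧ hi t ∉ S then 1 else 0 := by
          rw [a5, a3, ← Finset.sum_sub_distrib]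
          refine Finset.sum_congr rfl fun t _ => ?_
          by_cases h1 : x ≤ t.1 <;> by_cases h2 : t.1 < y <;> by_cases h3 : lo t ∈ S <;>
            by_cases h4 : hi t ∈ S <;> simp [h1, h2, h3, h4]
        omega
      refine ⟨T, hTc, hcc, ?_, ?_, rfl⟩
      · rw [hNB]; push_cast; omega
      · rw [hNA]; push_cast; omega
  have hrel := PL_Rel (k := k) (d := d) S0.toList G
  have hCG : C ∈ G.powerset := Finset.mem_powerset.2 Finset.subset_union_left
  rw [← Finset.add_sum_erase _ _ hCG] at hrel
  have hfin : PL k d (S0.toList ++ prs C) ∈ W := by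
    have e : PL k d (S0.toList ++ prs C) =
      (PL k d (S0.toList ++ prs C) + ∑ L ∈ G.powerset.erase C, PL k d (S0.toList ++ prs L) -
        ∑ L ∈ Gᶜ.powerset, (-1 : k) ^ L.card • PL k d (S0.toList ++ prs L)) -
      ∑ L ∈ G.powerset.erase C, PL k d (S0.toList ++ prs L) +
        ∑ L ∈ Gᶜ.powerset, (-1 : k) ^ L.card • PL k d (S0.toList ++ prs L) := by ring
    rw [e]
    refine W.add_mem (W.sub_mem (Submodule.mem_sup_right hrel) (W.sum_mem fun L hL => ?_))
      (W.sum_mem fun L hL => W.smul_mem _ ?_)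
    · rw [Finset.mem_erase, Finset.mem_powerset] at hL
      exact hgood L (Or.inl ⟨hL.2, hL.1⟩)
    · exact hgood L (Or.inr (Finset.mem_powerset.1 hL))
  have hlen : (S0.toList ++ prs C).length = d := by rw [length_app, hcard]
  rw [PL, if_pos ⟨hCS, hlen⟩] at hfin
  have := (W.smul_mem_iff ((listDet_eq (k := k) (d := d) (S0.toList ++ prs C)).choose_spec.1 hCS)).1 hfin
  rwa [hCf] at this

/-! ### Garnir relations -/

/-- A determinant with more than `d` rows in the image of a linear map from `k^d` vanishes. -/
theorem det_dep {ι : Type*} [Fintype ι] [DecidableEq ι] (D : Matrix ι ι k) (Z : Finset ι)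
    (φ : (Fin d → k) →ₗ[k] (ι → k)) (x : ι → Fin d → k) (h : ∀ z ∈ Z, D z = φ (x z))
    (hZ : d < Z.card) : D.det = 0 := by
  by_contra hne
  have h1 : LinearIndependent k D.row := by
    rw [Matrix.linearIndependent_rows_iff_isUnit, Matrix.isUnit_iff_isUnit_det]
    exact isUnit_iff_ne_zero.2 hne
  have h2 : LinearIndependent k (fun z : Z => D.row z.1) := h1.comp _ Subtype.val_injective
  have h3 : (fun z : Z => D.row z.1) = φ ∘ (fun z : Z => x z.1) := by
    funext z; exact h z.1 z.2
  rw [h3] at h2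
  have h4 := (LinearIndependent.of_comp φ h2).fintype_card_le_finrank
  simp at h4
  omega

/-- The inclusion of `k^d` in `k^d × k^d` as first factor. -/
def inc1 (k : Type*) [Field k] (d : ℕ) : (Fin d → k) →ₗ[k] (Fin d ⊕ Fin d → k) where
  toFun v := Sum.elim v 0
  map_add' v w := by funext z; cases z <;> simp
  map_smul' c v := by funext z; cases z <;> simp

/-- The inclusion of `k^d` in `k^d × k^d` as second factor. -/
def inc2 (k : Type*) [Field k] (d : ℕ) : (Fin d → k) →ₗ[k] (Fin d ⊕ Fin d → k) where
  toFun v := Sum.elim 0 v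
  map_add' v w := by funext z; cases z <;> simp
  map_smul' c v := by funext z; cases z <;> simp

/-- Rows of `M` distributed over the two copies of `k^d`. -/
def splitMat (M : Matrix (Fin (2*n)) (Fin d) k) (r : Fin d ⊕ Fin d → Fin (2*n))
    (s : Finset (Fin d ⊕ Fin d)) : Matrix (Fin d ⊕ Fin d) (Fin d ⊕ Fin d) k :=
  fun z => if z ∈ s then inc1 k d (M (r z)) else inc2 k d (M (r z))

/-- By Laplace expansion, the determinant of rows distributed over the two copies of `k^d` is zero
or, up to sign, a product of two Plücker coordinates. -/
theorem splitMat_det (r : Fin d ⊕ Fin d → Fin (2*n)) (s : Finset (Fin d ⊕ Fin d)) :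
    (∀ M : Matrix (Fin (2*n)) (Fin d) k, (splitMat M r s).det = 0) ∨
    ∃ S' T' : Finset (Fin (2*n)), S'.card = d ∧ T'.card = d ∧ cS S' = ∑ z ∈ s, cw (r z) ∧
      cS T' = ∑ z ∈ sᶜ, cw (r z) ∧ s.card = d ∧ ∃ c : k, 
      ∀ M : Matrix (Fin (2*n)) (Fin d) k, (splitMat M r s).det = c * (pluckerS M S' * pluckerS M T') := by
  by_cases hs : s.card = d
  swap
  · left
    intro M
    have hc : s.card + sᶜ.card = d + d := by
      rw [Finset.card_add_card_compl]; simp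
    rcases lt_or_gt_of_ne hs with h | h
    · refine det_dep _ sᶜ (inc2 k d) (fun z => M (r z)) (fun z hz => ?_) (by omega)
      rw [Finset.mem_compl] at hz
      simp [splitMat, hz]
    · refine det_dep _ s (inc1 k d) (fun z => M (r z)) (fun z hz => ?_) (by omega)
      simp [splitMat, hz]
  have hsc : sᶜ.card = d := by
    have : s.card + sᶜ.card = d + d := by
      rw [Finset.card_add_card_compl]; simp
    omega
  let e1 : Fin d ≃ {z // z ∈ s} := (Fintype.equivFinOfCardEq (by simp [hs])).symm
  let e2 : Fin d ≃ {z // z ∉ s} := (Fintype.equivFinOfCardEq (by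
    rw [Fintype.card_subtype_compl]; simp [hs])).symm
  let σ : Equiv.Perm (Fin d ⊕ Fin d) := (Equiv.sumCongr e1 e2).trans (Equiv.sumCompl (· ∈ s))
  have hdet : ∀ M : Matrix (Fin (2*n)) (Fin d) k,
      ((Equiv.Perm.sign σ : ℤ) : k) * (splitMat M r s).det =
      rowDet M (fun a => r (e1 a).1) * rowDet M (fun a => r (e2 a).1) := by
    intro M
    rw [← Matrix.det_permute, rowDet, rowDet, ← Matrix.det_fromBlocks_zero₂₁ _ 0]
    congr 1
    ext i j
    rcases i with i | i <;> rcases j with j | j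
    · simp [splitMat, σ, (e1 i).2, inc1]
    · simp [splitMat, σ, (e1 i).2, inc1]
    · simp [splitMat, σ, (e2 i).2, inc2]
    · simp [splitMat, σ, (e2 i).2, inc2]
  have hsg : ((Equiv.Perm.sign σ : ℤ) : k) * ((Equiv.Perm.sign σ : ℤ) : k) = 1 := by
    rcases Int.units_eq_one_or (Equiv.Perm.sign σ) with h | h <;> simp [h]
  have hdet' : ∀ M : Matrix (Fin (2*n)) (Fin d) k, (splitMat M r s).det =
      ((Equiv.Perm.sign σ : ℤ) : k) * (rowDet M (fun a => r (e1 a).1) * rowDet M (fun a => r (e2 a).1)) := by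
    intro M
    rw [← hdet, ← mul_assoc, hsg, one_mul]
  by_cases h1 : Function.Injective (fun a => r (e1 a).1)
  swap
  · left; intro M; rw [hdet', rowDet_not_inj _ h1]; simp
  by_cases h2 : Function.Injective (fun a => r (e2 a).1)
  swap
  · left; intro M; rw [hdet', rowDet_not_inj _ h2]; simp
  right
  obtain ⟨c1, -, H1⟩ := rowDet_inj (k := k) _ h1
  obtain ⟨c2, -, H2⟩ := rowDet_inj (k := k) _ h2
  refine ⟨Finset.univ.image (fun a => r (e1 a).1), Finset.univ.image (fun a => r (e2 a).1),
    ?_, ?_, ?_, ?_, hs, ((Equiv.Perm.sign σ : ℤ) : k) * (c1 * c2), fun M => ?_⟩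
  rotate_left 4
  · rw [hdet', H1, H2]; ring
  · rw [Finset.card_image_of_injective _ h1]; simp
  · rw [Finset.card_image_of_injective _ h2]; simp
  · rw [cS, Finset.sum_image (fun a _ b _ h => h1 h), ← Finset.sum_coe_sort s]
    exact e1.sum_comp (fun z => cw (r z.1))
  · rw [cS, Finset.sum_image (fun a _ b _ h => h2 h), Finset.sum_subtype sᶜ (p := fun z => z ∉ s) (fun z => by simp)]
    exact e2.sum_comp (fun z => cw (r z.1))

/-- Garnir straightening of a product of two Plücker coordinates. If `S` has more elements than `T`
in the initial segment `Lo` for the weight `cw`, then `P_S P_T` is a combination modulo `ISp` of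
products whose second factor has smaller weight. The determinant of `X + Y` below is zero because
more than `d` of its rows lie in the diagonal copy of `k^d`; expanding it multilinearly gives the
relation. -/
theorem Garnir (S T : Finset (Fin (2*n))) (hS : S.card = d) (hT : T.card = d)
    (Lo : Finset (Fin (2*n))) (hLo : ∀ i ∈ Lo, ∀ j, j ∉ Lo → cw i < cw j)
    (hcard : (T ∩ Lo).card < (S ∩ Lo).card) :
    Xs k d S * Xs k d T ∈ Submodule.span k
      {P | ∃ S' T' : Finset (Fin (2*n)), S'.card = d ∧ T'.card = d ∧ cS S' + cS T' = cS S + cS T ∧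
        cS T' < cS T ∧ P = Xs k d S' * Xs k d T'} ⊔ (ISp k n d).restrictScalars k := by
  classical
  set W := Submodule.span k
      {P | ∃ S' T' : Finset (Fin (2*n)), S'.card = d ∧ T'.card = d ∧ cS S' + cS T' = cS S + cS T ∧
        cS T' < cS T ∧ P = Xs k d S' * Xs k d T'} with hW
  let r1 : Fin d → Fin (2*n) := fun a => (S.orderIsoOfFin hS a : Fin (2*n))
  let r2 : Fin d → Fin (2*n) := fun a => (T.orderIsoOfFin hT a : Fin (2*n))
  let r : Fin d ⊕ Fin d → Fin (2*n) := Sum.elim r1 r2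
  have sum1 : ∀ {A : Type} [AddCommMonoid A] (w : Fin (2*n) → A), ∑ a, w (r1 a) = ∑ i ∈ S, w i := by
    intro A _ w
    rw [← Finset.sum_coe_sort S]
    exact (S.orderIsoOfFin hS).toEquiv.sum_comp (fun z : S => w z.1)
  have sum2 : ∀ {A : Type} [AddCommMonoid A] (w : Fin (2*n) → A), ∑ a, w (r2 a) = ∑ i ∈ T, w i := by
    intro A _ w
    rw [← Finset.sum_coe_sort T]
    exact (T.orderIsoOfFin hT).toEquiv.sum_comp (fun z : T => w z.1)
  let X : Matrix (Fin (2*n)) (Fin d) k → Fin d ⊕ Fin d → (Fin d ⊕ Fin d → k) := fun M =>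
    Sum.elim (fun a => inc1 k d (M (r1 a))) (fun b => if r2 b ∈ Lo then 0 else inc1 k d (M (r2 b)))
  let Y : Matrix (Fin (2*n)) (Fin d) k → Fin d ⊕ Fin d → (Fin d ⊕ Fin d → k) := fun M =>
    Sum.elim (fun a => if r1 a ∈ Lo then inc2 k d (M (r1 a)) else 0) (fun b => inc2 k d (M (r2 b)))
  let s0 : Finset (Fin d ⊕ Fin d) := Finset.univ.filter fun z => z.isLeft
  -- the rows of `X + Y` taken from `S ∩ Lo` and from `T \ Lo` are diagonal
  have hzero : ∀ M, Matrix.det (X M + Y M) = 0 := by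
    intro M
    refine det_dep _ ((Finset.univ.filter fun a => r1 a ∈ Lo).disjSum (Finset.univ.filter fun b => r2 b ∉ Lo))
      (inc1 k d + inc2 k d) (fun z => M (r z)) ?_ ?_
    · rintro (a | b) hz
      · have : r1 a ∈ Lo := by simpa using hz
        simp [X, Y, this, r]
      · have : r2 b ∉ Lo := by simpa using hz
        simp [X, Y, this, r]
    · rw [Finset.card_disjSum]
      have e1 : (Finset.univ.filter fun a => r1 a ∈ Lo).card = (S ∩ Lo).card := by
        rw [Finset.card_filter, sum1 (fun i => if i ∈ Lo then 1 else 0), ← Finset.card_filter,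
          Finset.filter_mem_eq_inter]
      have e2 : (Finset.univ.filter fun a => r2 a ∈ Lo).card = (T ∩ Lo).card := by
        rw [Finset.card_filter, sum2 (fun i => if i ∈ Lo then 1 else 0), ← Finset.card_filter,
          Finset.filter_mem_eq_inter]
      have e3 := Finset.card_filter_add_card_filter_not (s := (Finset.univ : Finset (Fin d))) (fun a => r2 a ∈ Lo)
      simp only [Finset.card_univ, Fintype.card_fin] at e3
      omega
  have hexp : ∀ M, ∑ s : Finset (Fin d ⊕ Fin d), Matrix.det (s.piecewise (X M) (Y M)) = 0 := by
    intro M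
    rw [← hzero M]
    exact ((Matrix.detRowAlternating (R := k) (n := Fin d ⊕ Fin d)).toMultilinearMap.map_add_univ (X M) (Y M)).symm
  have hs0 : ∀ M, Matrix.det (s0.piecewise (X M) (Y M)) = pluckerS M S * pluckerS M T := by
    intro M
    rw [pluckerS, dif_pos hS, pluckerS, dif_pos hT, ← Matrix.det_fromBlocks_zero₂₁ _ 0]
    congr 1
    ext i j
    rcases i with i | i <;> rcases j with j | j <;> simp [Finset.piecewise, s0, X, Y, inc1, inc2, r1, r2]
  have hoth : ∀ s : Finset (Fin d ⊕ Fin d), s ≠ s0 → ∃ Q ∈ W, ∀ M,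
      evP M Q = Matrix.det (s.piecewise (X M) (Y M)) := by
    intro s hs
    by_cases hz1 : ∃ b, Sum.inr b ∈ s ∧ r2 b ∈ Lo
    · obtain ⟨b, hb, hb'⟩ := hz1
      refine ⟨0, W.zero_mem, fun M => ?_⟩
      refine (map_zero _).trans (Matrix.det_eq_zero_of_row_eq_zero (Sum.inr b) fun j => ?_).symm
      simp [Finset.piecewise, hb, X, hb']
    by_cases hz2 : ∃ a, Sum.inl a ∉ s ∧ r1 a ∉ Lo
    · obtain ⟨b, hb, hb'⟩ := hz2
      refine ⟨0, W.zero_mem, fun M => ?_⟩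
      refine (map_zero _).trans (Matrix.det_eq_zero_of_row_eq_zero (Sum.inl b) fun j => ?_).symm
      simp [Finset.piecewise, hb, Y, hb']
    push Not at hz1 hz2
    have hsp : ∀ M, s.piecewise (X M) (Y M) = splitMat M r s := by
      intro M
      funext z
      rcases z with a | b
      · by_cases h : Sum.inl a ∈ s
        · simp [Finset.piecewise, splitMat, h, X, r]
        · simp [Finset.piecewise, splitMat, h, Y, r, hz2 a h]
      · by_cases h : Sum.inr b ∈ s
        · simp [Finset.piecewise, splitMat, h, X, r, hz1 b h]
        · simp [Finset.piecewise, splitMat, h, Y, r]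
    rcases splitMat_det (k := k) r s with h0 | ⟨S', T', hS', hT', hcS, hcT, hsd, c, hc⟩
    · exact ⟨0, W.zero_mem, fun M => by rw [map_zero, hsp, h0]⟩
    · refine ⟨c • (Xs k d S' * Xs k d T'), W.smul_mem _ (Submodule.subset_span
        ⟨S', T', hS', hT', ?_, ?_, rfl⟩), fun M => ?_⟩
      · rw [hcS, hcT, Finset.sum_add_sum_compl, Fintype.sum_sum_type, cS, cS]
        rw [← sum1 cw, ← sum2 cw]; rfl
      · -- `T'` arises from `T` by exchanging elements outside `Lo` for as many inside `Lo`
        have hcT2 : cS T = ∑ z ∈ s0ᶜ, cw (r z) := by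
          have h1 : ∑ z ∈ s0ᶜ, cw (r z) = ∑ z : Fin d ⊕ Fin d, if z.isLeft then 0 else cw (r z) := by
            rw [← Finset.sum_subset (Finset.subset_univ s0ᶜ)]
            · refine Finset.sum_congr rfl fun z hz => ?_
              have : ¬ z.isLeft := by simpa [s0] using hz
              simp [this]
            · intro z _ hz
              have : z.isLeft := by
                rw [Finset.mem_compl, not_not] at hz
                simpa [s0] using hz
              simp [this]
          rw [h1, Fintype.sum_sum_type, cS, ← sum2 cw]
          simp [r]
        have hs0d : s0.card = d := by
          have : s0 = (Finset.univ : Finset (Fin d)).disjSum ∅ := by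
            ext z; rcases z with z | z <;> simp [s0]
          rw [this, Finset.card_disjSum]; simp
        have e1 := Finset.sum_add_sum_compl s (fun z => cw (r z))
        have e2 := Finset.sum_add_sum_compl s0 (fun z => cw (r z))
        have e3 := Finset.sum_sdiff_sub_sum_sdiff (s₁ := s) (s₂ := s0) (f := fun z => cw (r z))
        have ec : (s0 \ s).card = (s \ s0).card := Finset.card_sdiff_comm (hs0d.trans hsd.symm)
        have hne : (s0 \ s).Nonempty := by
          rw [Finset.nonempty_iff_ne_empty]
          intro h0
          have := Finset.sdiff_eq_empty_iff_subset.1 h0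
          exact hs (Finset.eq_of_subset_of_card_le this (by omega)).symm
        obtain ⟨z0, hz0, hmax⟩ := Finset.exists_max_image _ (fun z => cw (r z)) hne
        have b1 : ∑ z ∈ s0 \ s, cw (r z) ≤ (s0 \ s).card • cw (r z0) := Finset.sum_le_card_nsmul _ _ _ hmax
        have hlow : ∀ z ∈ s0 \ s, r z ∈ Lo := by
          rintro (a | b) hz
          · exact hz2 a (Finset.mem_sdiff.1 hz).2
          · simp [s0] at hz
        have b2 : (s \ s0).card • cw (r z0) < ∑ z ∈ s \ s0, cw (r z) := by
          rw [← Finset.sum_const]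
          refine Finset.sum_lt_sum_of_nonempty (Finset.card_pos.1 (ec ▸ Finset.card_pos.2 hne)) ?_
          rintro (a | b) hz
          · simp [s0] at hz
          · exact hLo _ (hlow z0 hz0) _ (hz1 b (Finset.mem_sdiff.1 hz).1)
        rw [hcT, hcT2]
        rw [ec] at b1
        linarith
      · rw [hsp, hc, MvPolynomial.smul_eq_C_mul, map_mul, map_mul, evP_Xs, evP_Xs]
        simp [evP]
  choose! Q hQ hQe using hoth
  have hmem : Xs k d S * Xs k d T + ∑ s ∈ Finset.univ.erase s0, Q s ∈ ISp k n d := by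
    refine mem_ISp_of fun M _ => ?_
    rw [map_add, map_mul, evP_Xs, evP_Xs, map_sum, ← hs0, ← hexp M, ← Finset.add_sum_erase _ _ (Finset.mem_univ s0)]
    congr 1
    exact Finset.sum_congr rfl fun s hs => hQe s (Finset.ne_of_mem_erase hs) M
  have e : Xs k d S * Xs k d T = (Xs k d S * Xs k d T + ∑ s ∈ Finset.univ.erase s0, Q s) -
    ∑ s ∈ Finset.univ.erase s0, Q s := by ring
  rw [e]
  exact Submodule.sub_mem _ (Submodule.mem_sup_right hmem) (Submodule.mem_sup_left
    (W.sum_mem fun s hs => hQ s (Finset.ne_of_mem_erase hs)))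

/-! ### Standard products span -/

/-- The order of Plücker indices, `T ≤ S`, expressed by counting small entries. -/
def leS (T S : Finset (Fin (2*n))) : Prop :=
  ∀ x ≤ n, NA S x ≤ NA T x ∧ NB T x ≤ NB S x

/-- Standardness of a product `P_S P_T`, in counting form. For `S` and `T` of nonpositive height,
attach to each of them the pair-free sets `τ` and `φ` of `envelope`; the condition says that the
set `τ` of `T` is at most the set `φ` of `S`. For pair-free sets it is `leS T S`. -/
def Std2 (S T : Finset (Fin (2*n))) : Prop :=
  ∀ x y, x ≤ y → y ≤ n → ht T y ≤ (NB S x : ℤ) + NA T x - x ∧ ht S y ≤ (NB S x : ℤ) + NA T x - x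

/-- The ideal generated by the variables `P_T` with `T ≰ U`. -/
noncomputable def Ju (k : Type*) [Field k] {n : ℕ} (d : ℕ) (U : Finset (Fin (2*n))) :
    Ideal (MvPolynomial (V n d) k) :=
  Ideal.span {P | ∃ T : Finset (Fin (2*n)), T.card = d ∧ ¬ leS T U ∧ P = Xs k d T}

/-- The product of Plücker variables along a list. -/
noncomputable def mon (k : Type*) [Field k] {n : ℕ} (d : ℕ) (L : List (Finset (Fin (2*n)))) :
    MvPolynomial (V n d) k := (L.map (Xs k d)).prod

/-- Combinations of standard products of length `m`, modulo the two ideals. -/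
noncomputable def Ystd (k : Type*) [Field k] {n : ℕ} (d : ℕ) (U : Finset (Fin (2*n))) (m : ℕ) :
    Submodule k (MvPolynomial (V n d) k) :=
  Submodule.span k {P | ∃ L : List (Finset (Fin (2*n))), L.length = m ∧ (∀ S ∈ L, S.card = d) ∧
    List.IsChain Std2 (U :: L) ∧ P = mon k d L} ⊔ (ISp k n d ⊔ Ju k d U).restrictScalars k

/-- A congruence modulo `ISp` may be multiplied by a polynomial `q`. -/
theorem absorb (Y : Submodule k (MvPolynomial (V n d) k))
    (hY : (ISp k n d).restrictScalars k ≤ Y) {A : Set (MvPolynomial (V n d) k)}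
    {P : MvPolynomial (V n d) k} (hP : P ∈ Submodule.span k A ⊔ (ISp k n d).restrictScalars k)
    (q : MvPolynomial (V n d) k) (h : ∀ a ∈ A, q * a ∈ Y) : q * P ∈ Y := by
  obtain ⟨p1, h1, p2, h2, rfl⟩ := Submodule.mem_sup.1 hP
  rw [mul_add]
  refine Y.add_mem ?_ (hY (Ideal.mul_mem_left (ISp k n d) q h2))
  induction h1 using Submodule.span_induction with
  | mem x hx => exact h x hx
  | zero => rw [mul_zero]; exact Y.zero_mem
  | add x y hx hy h3 h4 =>
    rw [mul_add]
    exact Y.add_mem (h3 (Submodule.mem_sup.2 ⟨x, hx, p2, h2, rfl⟩)) (h4 (Submodule.mem_sup.2 ⟨y, hy, p2, h2, rfl⟩))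
  | smul c x hx h3 =>
    rw [mul_smul_comm]
    exact Y.smul_mem _ (h3 (Submodule.mem_sup.2 ⟨x, hx, p2, h2, rfl⟩))

/-- The sum of the weights `cS` along a list. -/
def totC (L : List (Finset (Fin (2*n)))) : ℤ := (L.map cS).sum

/-- The sum of the weights `cS`, each multiplied by its position in the list. -/
def posC : List (Finset (Fin (2*n))) → ℤ
  | [] => 0
  | _ :: L => posC L + totC L

/-- The sum of `kS` along a list. -/
def totK (L : List (Finset (Fin (2*n)))) : ℤ := (L.map fun S => (kS S : ℤ)).sum

theorem posC_eq {S T S' T' : Finset (Fin (2*n))} (l1 l2 : List (Finset (Fin (2*n))))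
    (h : cS S' + cS T' = cS S + cS T) :
    posC (l1 ++ S' :: T' :: l2) = posC (l1 ++ S :: T :: l2) + (cS T' - cS T) := by
  induction l1 with
  | nil => simp [posC, totC]; ring
  | cons a l1 ih =>
    simp only [List.cons_append, posC, ih, totC, List.map_append, List.map_cons, List.sum_append,
      List.sum_cons]
    linarith

theorem posC_eq1 {S S' : Finset (Fin (2*n))} (l1 l2 : List (Finset (Fin (2*n))))
    (h : cS S' = cS S) : posC (l1 ++ S' :: l2) = posC (l1 ++ S :: l2) := by
  induction l1 with
  | nil => simp [posC, totC]
  | cons a l1 ih =>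
    simp only [List.cons_append, posC, ih, totC, List.map_append, List.map_cons, List.sum_append,
      List.sum_cons, h]

theorem mon_append (l1 l2 : List (Finset (Fin (2*n)))) :
    mon k d (l1 ++ l2) = mon k d l1 * mon k d l2 := by
  simp [mon]

theorem mon_cons (S : Finset (Fin (2*n))) (l : List (Finset (Fin (2*n)))) :
    mon k d (S :: l) = Xs k d S * mon k d l := by
  simp [mon]

theorem card_NB (S : Finset (Fin (2*n))) (x : ℕ) :
    (S ∩ Finset.univ.filter fun i : Fin (2*n) => ¬ (n ≤ i.1 ∧ i.1 < n + x)).card + NB S x = S.card := by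
  rw [NB, ← Finset.card_filter, add_comm, ← Finset.card_filter_add_card_filter_not (s := S) (fun i => n ≤ i.1 ∧ i.1 < n + x)]
  congr 2
  ext i; simp

theorem card_NA (S : Finset (Fin (2*n))) (x : ℕ) :
    (S ∩ Finset.univ.filter fun i : Fin (2*n) => i.1 < x).card = NA S x := by
  rw [NA, ← Finset.card_filter]
  congr 1
  ext i; simp

/-- Garnir straightening for `Lo` the complement of the first `x` rows of the upper half. -/
theorem GarnirB (S T : Finset (Fin (2*n))) (hS : S.card = d) (hT : T.card = d) (x : ℕ)
    (h : NB S x < NB T x) :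
    Xs k d S * Xs k d T ∈ Submodule.span k
      {P | ∃ S' T' : Finset (Fin (2*n)), S'.card = d ∧ T'.card = d ∧ cS S' + cS T' = cS S + cS T ∧
        cS T' < cS T ∧ P = Xs k d S' * Xs k d T'} ⊔ (ISp k n d).restrictScalars k := by
  refine Garnir S T hS hT (Finset.univ.filter fun i : Fin (2*n) => ¬ (n ≤ i.1 ∧ i.1 < n + x)) ?_ ?_
  · intro i hi j hj
    have := i.2; have := j.2
    simp only [Finset.mem_filter, Finset.mem_univ, true_and, not_not] at hi hj
    unfold cw
    split_ifs <;> omega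
  · have := card_NB S x; have := card_NB T x; omega

/-- Garnir straightening for `Lo` the first `x` rows of the lower half. -/
theorem GarnirA (S T : Finset (Fin (2*n))) (hS : S.card = d) (hT : T.card = d) (x : ℕ)
    (hx : x ≤ n) (h : NA T x < NA S x) :
    Xs k d S * Xs k d T ∈ Submodule.span k
      {P | ∃ S' T' : Finset (Fin (2*n)), S'.card = d ∧ T'.card = d ∧ cS S' + cS T' = cS S + cS T ∧
        cS T' < cS T ∧ P = Xs k d S' * Xs k d T'} ⊔ (ISp k n d).restrictScalars k := by
  refine Garnir S T hS hT (Finset.univ.filter fun i : Fin (2*n) => i.1 < x) ?_ ?_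
  · intro i hi j hj
    have := i.2; have := j.2
    simp only [Finset.mem_filter, Finset.mem_univ, true_and, not_lt] at hi hj
    unfold cw
    split_ifs <;> omega
  · rw [card_NA, card_NA]; exact h

/-- Induction on lists of length `m` over a finite alphabet, in which lists with smaller `f`, and
for equal `f` those with larger `g`, come first. -/
theorem list_wf (α : Type*) [Finite α] (m : ℕ) (f g : List α → ℤ) (P : List α → Prop)
    (ih : ∀ L : List α, L.length = m →
      (∀ L' : List α, L'.length = m → (f L' < f L ∨ (f L' = f L ∧ g L < g L')) → P L') → P L)
    (L : List α) (hL : L.length = m) : P L := by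
  have hfin : Finite {L : List α // L.length = m} := List.finite_length_eq α m
  let r : {L : List α // L.length = m} → {L : List α // L.length = m} → Prop := fun a b =>
    f a.1 < f b.1 ∨ (f a.1 = f b.1 ∧ g b.1 < g a.1)
  have h1 : IsTrans _ r := ⟨fun a b c hab hbc => by simp only [r] at *; omega⟩
  have h2 : Std.Irrefl r := ⟨fun a h => by simp only [r] at h; omega⟩
  have hwf : WellFounded r := Finite.wellFounded_of_trans_of_irrefl r
  have := hwf.induction (C := fun a => P a.1) ⟨L, hL⟩ fun a ha => ih a.1 a.2 fun L' hL' h => ha ⟨L', hL'⟩ h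
  exact this

/-- Straightening: standard products of length `m` starting below `U` span all products of `m`
Plücker variables, modulo `ISp` and `Ju`. Every step lowers `posC`, or keeps it and raises `totK`. -/
theorem spanning (U : Finset (Fin (2*n)))
    (hU : ∀ x y, x ≤ y → y ≤ n → ht U y ≤ ht U x) (m : ℕ) (L : List (Finset (Fin (2*n))))
    (hL : L.length = m) (hd : ∀ S ∈ L, S.card = d) : mon k d L ∈ Ystd k d U m := by
  revert hd
  refine list_wf (Finset (Fin (2*n))) m posC totK (fun L => (∀ S ∈ L, S.card = d) → mon k d L ∈ Ystd k d U m) ?_ L hL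
  clear L hL
  intro L hL ih hd
  by_cases hc : List.IsChain Std2 (U :: L)
  · exact Submodule.mem_sup_left (Submodule.subset_span ⟨L, hL, hd, hc, rfl⟩)
  have hI : (ISp k n d).restrictScalars k ≤ Ystd k d U m := fun p hp =>
    Submodule.mem_sup_right (Submodule.mem_sup_left (show p ∈ ISp k n d from hp))
  have hJ : ∀ q T, T.card = d → ¬ leS T U → q * Xs k d T ∈ Ystd k d U m := fun q T hT hTU =>
    Submodule.mem_sup_right (Submodule.mem_sup_right (Ideal.mul_mem_left (Ju k d U) q (Ideal.subset_span ⟨T, hT, hTU, rfl⟩)))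
  rw [List.isChain_iff_forall_rel_of_append_cons_cons] at hc
  push Not at hc
  obtain ⟨a, b, l1, l2, hab, hnot⟩ := hc
  unfold Std2 at hnot
  push Not at hnot
  obtain ⟨x, y, hxy, hy, hv⟩ := hnot
  -- Between `U` and the first factor, the linear relation leads into `Ju` or raises `kS`. Between
  -- two consecutive factors, a linear relation on one of them followed by a Garnir relation lowers
  -- `posC` or raises `totK`.
  rcases l1 with _ | ⟨u0, l1⟩
  · obtain ⟨rfl, rfl⟩ : U = a ∧ L = b :: l2 := by simpa using hab
    have hb : b.card = d := hd b (by simp)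
    rw [mon_cons, mul_comm]
    have hq : ∀ T, T.card = d → cS T = cS b → kS b < kS T → mon k d l2 * Xs k d T ∈ Ystd k d U m := by
      intro T hT hc hk
      rw [mul_comm, ← mon_cons]
      refine ih (T :: l2) (by simpa using hL) (Or.inr ⟨posC_eq1 [] l2 hc, ?_⟩) ?_
      · simp [totK, hk]
      · intro S hS
        rcases List.mem_cons.1 hS with rfl | h
        · exact hT
        · exact hd S (by simp [h])
    by_cases h1 : ht b y ≤ (NB U x : ℤ) + NA b x - x
    · refine hJ _ b hb fun hle => ?_
      have h2 := hv h1
      have h3 := hU x y hxy hy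
      have := (hle x (by omega)).1
      have e : ht U x = (NA U x : ℤ) + NB U x - x := rfl
      omega
    · refine absorb _ hI (Lin b hb x y hxy hy) _ ?_
      rintro _ (⟨T, hT, hc, hk, rfl⟩ | ⟨T, hT, hc, hB, hA, rfl⟩)
      · exact hq T hT hc hk
      · refine hJ _ T hT fun hle => ?_
        have := (hle x (by omega)).2
        have e : ht b x = (NA b x : ℤ) + NB b x - x := rfl
        omega
  · obtain ⟨rfl, rfl⟩ : U = u0 ∧ L = l1 ++ a :: b :: l2 := by simpa using hab
    have ha : a.card = d := hd a (by simp)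
    have hb : b.card = d := hd b (by simp)
    have em : ∀ a b, mon k d (l1 ++ a :: b :: l2) = (mon k d l1 * mon k d l2) * (Xs k d a * Xs k d b) := by
      intro a b; rw [mon_append, mon_cons, mon_cons]; ring
    have hd' : ∀ a' b', a'.card = d → b'.card = d → ∀ S ∈ l1 ++ a' :: b' :: l2, S.card = d := by
      intro a' b' ha' hb' S hS
      simp only [List.mem_append, List.mem_cons] at hS
      rcases hS with h | rfl | rfl | h
      · exact hd S (by simp [h])
      · exact ha'
      · exact hb'
      · exact hd S (by simp [h])
    have hG : ∀ a' b', a'.card = d → b'.card = d → cS a' + cS b' = cS a + cS b → cS b' < cS b →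
        (mon k d l1 * mon k d l2) * (Xs k d a' * Xs k d b') ∈ Ystd k d U m := by
      intro a' b' ha' hb' h1 h2
      rw [← em]
      refine ih _ (by simpa using hL) (Or.inl ?_) (hd' _ _ ha' hb')
      rw [posC_eq l1 l2 h1]; linarith
    have hK : ∀ a' b', a'.card = d → b'.card = d → cS a' = cS a → cS b' = cS b →
        kS a + kS b < kS a' + kS b' →
        (mon k d l1 * mon k d l2) * (Xs k d a' * Xs k d b') ∈ Ystd k d U m := by
      intro a' b' ha' hb' h1 h2 h3
      rw [← em]
      refine ih _ (by simpa using hL) (Or.inr ⟨?_, ?_⟩) (hd' _ _ ha' hb')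
      · rw [posC_eq (S := a) (T := b) l1 l2 (by rw [h1, h2]), h2]; ring
      · simp [totK]; omega
    rw [em]
    by_cases h1 : ht b y ≤ (NB a x : ℤ) + NA b x - x
    · have h2 := hv h1
      rw [mul_comm (Xs k d a), ← mul_assoc]
      refine absorb _ hI (Lin a ha x y hxy hy) _ ?_
      rintro _ (⟨T, hT, hc, hk, rfl⟩ | ⟨T, hT, hc, hB, hA, rfl⟩)
      · rw [mul_assoc, mul_comm (Xs k d b)]
        exact hK T b hT hb hc rfl (by omega)
      · rw [mul_assoc, mul_comm (Xs k d b)]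
        refine absorb _ hI (GarnirA T b hT hb x (by omega) ?_) _ ?_
        · have e : ht a x = (NA a x : ℤ) + NB a x - x := rfl
          omega
        · rintro _ ⟨S', T', hS', hT', e1, e2, rfl⟩
          exact hG S' T' hS' hT' (by rw [e1, hc]) e2
    · rw [← mul_assoc]
      refine absorb _ hI (Lin b hb x y hxy hy) _ ?_
      rintro _ (⟨T, hT, hc, hk, rfl⟩ | ⟨T, hT, hc, hB, hA, rfl⟩)
      · rw [mul_assoc]
        exact hK a T ha hT rfl hc (by omega)
      · rw [mul_assoc]
        refine absorb _ hI (GarnirB a T ha hT x ?_) _ ?_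
        · have e : ht b x = (NA b x : ℤ) + NB b x - x := rfl
          omega
        · rintro _ ⟨S', T', hS', hT', e1, e2, rfl⟩
          exact hG S' T' hS' hT' (by rw [e1, hc]) (by rwa [hc] at e2)

/-! ### Schubert cells and one-parameter unipotent subgroups -/

/-- The symplectic form `vᵀ J w`, up to sign. -/
def Om (v w : Fin (2*n) → k) : k := ∑ t : Fin n, (v (lo t) * w (hi t) - v (hi t) * w (lo t))

/-- Position of a basis vector in the flag `K_1 ⊂ K_2 ⊂ …`. -/
def pos (i : Fin (2*n)) : ℕ := if i.1 < n then i.1 else 3 * n - 1 - i.1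

theorem pos_lo (t : Fin n) : pos (lo t) = t.1 := by simp [pos]
theorem pos_hi (t : Fin n) : pos (hi t) = 2 * n - 1 - t.1 := by simp [pos]; omega

theorem pos_inj {i j : Fin (2*n)} (h : pos i = pos j) : i = j := by
  unfold pos at h
  have := i.2; have := j.2
  apply Fin.ext
  split_ifs at h <;> omega

/-- The unipotent radical of the Borel subgroup: symplectic maps, unitriangular for `pos`. -/
def Unip (b : (Fin (2*n) → k) →ₗ[k] (Fin (2*n) → k)) : Prop :=
  (∀ v w, Om (b v) (b w) = Om v w) ∧
  ∀ v i, (∀ i', pos i < pos i' → v i' = 0) → b v i = v i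

theorem Unip.id : Unip (LinearMap.id : (Fin (2*n) → k) →ₗ[k] (Fin (2*n) → k)) :=
  ⟨fun _ _ => rfl, fun _ _ _ => rfl⟩

theorem Unip.comp {b c : (Fin (2*n) → k) →ₗ[k] (Fin (2*n) → k)} (hb : Unip b) (hc : Unip c) :
    Unip (b ∘ₗ c) := by
  refine ⟨fun v w => by simp [hb.1, hc.1], fun v i h => ?_⟩
  have h1 : ∀ i', pos i < pos i' → c v i' = 0 := fun i' hi' => by
    rw [hc.2 v i' fun j hj => h j (hi'.trans hj), h i' hi']
  rw [LinearMap.comp_apply, hb.2 _ _ h1, hc.2 _ _ h]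

/-- The matrix with prescribed columns. -/
def colM (f : Fin d → Fin (2*n) → k) : Matrix (Fin (2*n)) (Fin d) k := fun i l => f l i

/-- Standard basis vector. -/
def bv (k : Type*) [Field k] {n : ℕ} (i : Fin (2*n)) : Fin (2*n) → k := Pi.single i 1

theorem bv_self (i : Fin (2*n)) : bv k i i = 1 := by simp [bv]
theorem bv_ne {i j : Fin (2*n)} (h : j ≠ i) : bv k i j = 0 := by simp [bv, h]

/-- A minor with too many columns supported, within the chosen rows, on `Lo` vanishes. -/
theorem tri (M : Matrix (Fin (2*n)) (Fin d) k) (S Lo : Finset (Fin (2*n))) (C : Finset (Fin d))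
    (h : ∀ l ∈ C, ∀ i, i ∉ Lo → M i l = 0) (hC : (S ∩ Lo).card < C.card) : pluckerS M S = 0 := by
  unfold pluckerS
  split_ifs with hS
  swap
  · rfl
  rw [Matrix.det_apply]
  refine Finset.sum_eq_zero fun σ _ => ?_
  suffices ∃ l ∈ C, ((S.orderIsoOfFin hS (σ l) : Fin (2*n))) ∉ Lo by
    obtain ⟨l, hl, hl'⟩ := this
    rw [Finset.prod_eq_zero (Finset.mem_univ l), smul_zero]
    exact h l hl _ hl'
  by_contra hcon
  push Not at hcon
  refine absurd (Finset.card_le_card_of_injOn (fun l => (S.orderIsoOfFin hS (σ l) : Fin (2*n))) ?_ ?_) (not_le.2 hC)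
  · intro l hl
    exact Finset.mem_inter.2 ⟨(S.orderIsoOfFin hS (σ l)).2, hcon l hl⟩
  · intro a _ b _ hab
    exact σ.injective ((S.orderIsoOfFin hS).injective (Subtype.ext hab))

/-- If a minor does not vanish, then at most `NA S x` columns lie in `K_x`. -/
theorem triA (M : Matrix (Fin (2*n)) (Fin d) k) (S : Finset (Fin (2*n))) (x : ℕ) (C : Finset (Fin d))
    (h : ∀ l ∈ C, ∀ i : Fin (2*n), x ≤ i.1 → M i l = 0) (hM : pluckerS M S ≠ 0) : C.card ≤ NA S x := by
  by_contra hc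
  refine hM (tri M S (Finset.univ.filter fun i : Fin (2*n) => i.1 < x) C (fun l hl i hi => h l hl i ?_) ?_)
  · simpa using hi
  · rw [card_NA]; omega

/-- If a minor does not vanish, then at least `NB S x` columns do not vanish identically on the first
`x` rows of the upper half. -/
theorem triB (M : Matrix (Fin (2*n)) (Fin d) k) (S : Finset (Fin (2*n))) (x : ℕ) (C : Finset (Fin d))
    (h : ∀ l ∈ C, ∀ i : Fin (2*n), n ≤ i.1 → i.1 < n + x → M i l = 0) (hM : pluckerS M S ≠ 0) :
    C.card + NB S x ≤ d := by
  have hS : S.card = d := by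
    by_contra hS
    exact hM (by rw [pluckerS, dif_neg hS])
  have e := card_NB S x
  by_contra hc
  refine hM (tri M S (Finset.univ.filter fun i : Fin (2*n) => ¬ (n ≤ i.1 ∧ i.1 < n + x)) C (fun l hl i hi => ?_) ?_)
  · simp only [Finset.mem_filter, Finset.mem_univ, true_and, not_not] at hi
    exact h l hl i hi.1 hi.2
  · omega

theorem unip_bv {b : (Fin (2*n) → k) →ₗ[k] (Fin (2*n) → k)} (hb : Unip b) {i j : Fin (2*n)}
    (h : pos j < pos i) : b (bv k j) i = 0 := by
  have hne : ∀ i', pos j < pos i' → bv k j i' = 0 := fun i' h' => bv_ne (by rintro rfl; omega)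
  rw [hb.2 _ _ fun i' hi' => hne i' (by omega), hne i h]

theorem unip_bv_self {b : (Fin (2*n) → k) →ₗ[k] (Fin (2*n) → k)} (hb : Unip b) (j : Fin (2*n)) :
    b (bv k j) j = 1 := by
  rw [hb.2 _ _ fun i' hi' => bv_ne (by rintro rfl; omega), bv_self]

/-- The leading minor of a unitriangular frame does not vanish. -/
theorem lead_ne {b : (Fin (2*n) → k) →ₗ[k] (Fin (2*n) → k)} (hb : Unip b) (w : Fin d → Fin (2*n))
    (hw : Function.Injective w) :
    pluckerS (colM fun l => b (bv k (w l))) (Finset.univ.image w) ≠ 0 := by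
  obtain ⟨c, -, hc⟩ := rowDet_inj (k := k) w hw
  intro h0
  have h1 : rowDet (colM fun l => b (bv k (w l))) w = 0 := by rw [hc, h0, mul_zero]
  obtain ⟨v, hv, hv0⟩ := Matrix.exists_mulVec_eq_zero_iff.2 h1
  obtain ⟨l0, hl0⟩ : ∃ l, v l ≠ 0 := by
    by_contra h; push Not at h; exact hv (funext h)
  classical
  obtain ⟨l, hl, hmax⟩ := Finset.exists_max_image (Finset.univ.filter fun l => v l ≠ 0)
    (fun l => pos (w l)) ⟨l0, by simpa using hl0⟩
  have hl' : v l ≠ 0 := by simpa using hl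
  have := congrFun hv0 l
  rw [Matrix.mulVec, dotProduct, Finset.sum_eq_single l] at this
  · simp [colM, unip_bv_self hb] at this
    exact hl' this
  · intro a _ ha
    by_cases hva : v a = 0
    · rw [hva, mul_zero]
    · have h2 : pos (w a) ≤ pos (w l) := hmax a (by simpa using hva)
      have h3 : pos (w a) ≠ pos (w l) := fun h => ha (hw (pos_inj h))
      have : b (bv k (w a)) (w l) = 0 := unip_bv hb (by omega)
      simp [colM, this]
  · simp

/-- Functions on matrices that are polynomial along lines and semi-invariant under column operations. -/
def Nice (f : Matrix (Fin (2*n)) (Fin d) k → k) : Prop :=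
  (∀ M0 M1 : Matrix (Fin (2*n)) (Fin d) k, ∃ p : Polynomial k, ∀ s, f (M0 + s • M1) = p.eval s) ∧
  ∃ m : ℕ, ∀ (M : Matrix (Fin (2*n)) (Fin d) k) (h : Matrix (Fin d) (Fin d) k), f (M * h) = h.det ^ m * f M

theorem poly_zero [Infinite k] (p : Polynomial k) (h : ∀ s, s ≠ 0 → p.eval s = 0) : p.eval 0 = 0 := by
  have : p = 0 := by
    refine Polynomial.eq_zero_of_infinite_isRoot p (Set.Infinite.mono (s := {s | s ≠ 0}) (fun s hs => h s hs) ?_)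
    exact Set.Finite.infinite_compl (Set.finite_singleton (0:k))
  rw [this, Polynomial.eval_zero]

theorem plucker_poly (S : Finset (Fin (2*n))) (M0 M1 : Matrix (Fin (2*n)) (Fin d) k) :
    ∃ p : Polynomial k, ∀ s, pluckerS (M0 + s • M1) S = p.eval s := by
  by_cases hS : S.card = d
  · refine ⟨(Matrix.of fun a l => Polynomial.C (M0 (S.orderIsoOfFin hS a) l) +
      Polynomial.X * Polynomial.C (M1 (S.orderIsoOfFin hS a) l) : Matrix (Fin d) (Fin d) (Polynomial k)).det, fun s => ?_⟩
    rw [pluckerS, dif_pos hS, ← Polynomial.coe_evalRingHom, RingHom.map_det]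
    congr 1
    ext a l
    simp; ring
  · exact ⟨0, fun s => by simp [pluckerS, hS]⟩

/-- Evaluation at `M` of the combination of products of `m` Plücker coordinates with coefficients `c`. -/
def ev : (m : ℕ) → (List (Finset (Fin (2*n))) → k) → Matrix (Fin (2*n)) (Fin d) k → k
  | 0, c, _ => c []
  | m + 1, c, M => ∑ S : Finset (Fin (2*n)), pluckerS M S * ev m (fun L => c (S :: L)) M

theorem ev_nice (m : ℕ) (c : List (Finset (Fin (2*n))) → k) :
    Nice (ev m c : Matrix (Fin (2*n)) (Fin d) k → k) := by
  constructor
  · intro M0 M1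
    induction m generalizing c with
    | zero => exact ⟨Polynomial.C (c []), fun s => by simp [ev]⟩
    | succ m ih =>
      choose p hp using fun S => plucker_poly S M0 M1
      choose q hq using fun S : Finset (Fin (2*n)) => ih (fun L => c (S :: L))
      refine ⟨∑ S, p S * q S, fun s => ?_⟩
      rw [ev, Polynomial.eval_finsetSum]
      exact Finset.sum_congr rfl fun S _ => by rw [hp, hq, Polynomial.eval_mul]
  · refine ⟨m, fun M h => ?_⟩
    induction m generalizing c with
    | zero => simp [ev]
    | succ m ih =>
      rw [ev, ev, Finset.mul_sum]
      refine Finset.sum_congr rfl fun S _ => ?_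
      rw [ih, pluckerS_mul]; ring

/-- Vanishing on the Schubert cell through the coordinate subspace of the tuple `w`. -/
def Van (f : Matrix (Fin (2*n)) (Fin d) k → k) (w : Fin d → Fin (2*n)) : Prop :=
  ∀ b, Unip b → f (colM fun l => b (bv k (w l))) = 0

/-- Vanishing on a cell does not depend on the ordering of the tuple. -/
theorem van_perm {f : Matrix (Fin (2*n)) (Fin d) k → k} (hf : Nice f) {w w' : Fin d → Fin (2*n)}
    (h : Finset.univ.image w = Finset.univ.image w') (hv : Van f w) :
    Van f w' := by
  intro b hb
  obtain ⟨m, hm⟩ := hf.2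
  have : ∀ l, ∃ l', w l' = w' l := by
    intro l
    have : w' l ∈ Finset.univ.image w := h ▸ Finset.mem_image_of_mem _ (Finset.mem_univ _)
    simpa using this
  choose σ hσ using this
  have e : (colM fun l => b (bv k (w' l))) =
      (colM fun l => b (bv k (w l))) * (1 : Matrix (Fin d) (Fin d) k).submatrix _root_.id σ := by
    ext i l
    simp [Matrix.mul_apply, colM, Matrix.one_apply, hσ]
  rw [e, hm, hv b hb, mul_zero]

/-- The involution exchanging `t` and `n + t`. -/
def st (i : Fin (2*n)) : Fin (2*n) :=
  if h : i.1 < n then ⟨n + i.1, by omega⟩ else ⟨i.1 - n, by have := i.2; omega⟩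

@[simp] theorem st_lo (t : Fin n) : st (lo t) = hi t := by
  apply Fin.ext; simp [st]
@[simp] theorem st_hi (t : Fin n) : st (hi t) = lo t := by
  apply Fin.ext; simp [st]
@[simp] theorem st_st (i : Fin (2*n)) : st (st i) = i := by
  rcases lohi_cases i with ⟨t, rfl⟩ | ⟨t, rfl⟩ <;> simp

/-- The sign of the form: `+1` on `t ≤ n`, `-1` otherwise. -/
def sg (k : Type*) [Field k] {n : ℕ} (i : Fin (2*n)) : k := if i.1 < n then 1 else -1

@[simp] theorem sg_lo (t : Fin n) : sg k (lo t) = 1 := by simp [sg]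
@[simp] theorem sg_hi (t : Fin n) : sg k (hi t) = -1 := by simp [sg]

theorem Om_eq (v w : Fin (2*n) → k) : Om v w = ∑ i, sg k i * v i * w (st i) := by
  rw [sum_lohi, Om]
  exact Finset.sum_congr rfl fun t _ => by simp; ring

/-- Data `η`, `ρ` such that the map `N`, `(N v)_i = η_i v_{ρ i}`, is strictly triangular, lies in the
symplectic Lie algebra and has isotropic image; the nonzero `η_i` are signs. -/
def Nil (η : Fin (2*n) → k) (ρ : Fin (2*n) → Fin (2*n)) : Prop :=
  ∀ i, η i ≠ 0 → η i * η i = 1 ∧ pos i < pos (ρ i) ∧ η (st (ρ i)) ≠ 0 ∧ ρ (st (ρ i)) = st i ∧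
    sg k i * η i + sg k (ρ i) * η (st (ρ i)) = 0 ∧ η (st i) = 0

/-- The map `N` attached to `η` and `ρ`, with `(N v)_i = η_i v_{ρ i}`; thus it sends `e_{ρ i}` to
`η_i e_i`. -/
def nilMap (η : Fin (2*n) → k) (ρ : Fin (2*n) → Fin (2*n)) :
    (Fin (2*n) → k) →ₗ[k] (Fin (2*n) → k) where
  toFun v i := η i * v (ρ i)
  map_add' v w := by funext i; simp [mul_add]
  map_smul' c v := by funext i; simp; ring

/-- The map `N` lies in the symplectic Lie algebra. -/
theorem nil_om {η : Fin (2*n) → k} {ρ : Fin (2*n) → Fin (2*n)} (h : Nil η ρ) (v w : Fin (2*n) → k) :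
    Om (nilMap η ρ v) w + Om v (nilMap η ρ w) = 0 := by
  classical
  rw [Om_eq, Om_eq]
  have e1 : ∑ i, sg k i * nilMap η ρ v i * w (st i) =
      ∑ i ∈ Finset.univ.filter (fun i => η i ≠ 0), sg k i * η i * v (ρ i) * w (st i) := by
    rw [Finset.sum_filter]
    refine Finset.sum_congr rfl fun i _ => ?_
    split_ifs with h0
    · simp only [nilMap, LinearMap.coe_mk, AddHom.coe_mk]; ring
    · rw [not_not] at h0; simp [nilMap, h0]
  have e2 : ∑ i, sg k i * v i * nilMap η ρ w (st i) =
      ∑ i ∈ Finset.univ.filter (fun i => η (st i) ≠ 0), sg k i * η (st i) * v i * w (ρ (st i)) := by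
    rw [Finset.sum_filter]
    refine Finset.sum_congr rfl fun i _ => ?_
    split_ifs with h0
    · simp only [nilMap, LinearMap.coe_mk, AddHom.coe_mk]; ring
    · rw [not_not] at h0; simp [nilMap, h0]
  have e3 : ∑ i ∈ Finset.univ.filter (fun i => η i ≠ 0), sg k i * η i * v (ρ i) * w (st i) =
      ∑ i ∈ Finset.univ.filter (fun i => η (st i) ≠ 0), - (sg k i * η (st i) * v i * w (ρ (st i))) := by
    refine Finset.sum_bij' (fun i _ => ρ i) (fun i _ => st (ρ (st i))) ?_ ?_ ?_ ?_ ?_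
    · intro i hi
      simpa using (h i (by simpa using hi)).2.2.1
    · intro i hi
      have := h (st i) (by simpa using hi)
      simpa using this.2.2.1
    · intro i hi
      have := h i (by simpa using hi)
      simp [this.2.2.2.1]
    · intro i hi
      have := h (st i) (by simpa using hi)
      simpa using this.2.2.2.1
    · intro i hi
      have := h i (by simpa using hi)
      rw [this.2.2.2.1]
      linear_combination (v (ρ i) * w (st i)) * this.2.2.2.2.1
  rw [e1, e2, e3, ← Finset.sum_add_distrib]
  exact Finset.sum_eq_zero fun i _ => by ring

/-- The image of `N` is isotropic. -/
theorem nil_om2 {η : Fin (2*n) → k} {ρ : Fin (2*n) → Fin (2*n)} (h : Nil η ρ) (v w : Fin (2*n) → k) :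
    Om (nilMap η ρ v) (nilMap η ρ w) = 0 := by
  rw [Om_eq]
  refine Finset.sum_eq_zero fun i _ => ?_
  by_cases h0 : η i = 0
  · simp [nilMap, h0]
  · simp [nilMap, (h i h0).2.2.2.2.2]

theorem Om_add_left (a b w : Fin (2*n) → k) : Om (a + b) w = Om a w + Om b w := by
  simp only [Om, ← Finset.sum_add_distrib]
  exact Finset.sum_congr rfl fun t _ => by simp; ring
theorem Om_add_right (w a b : Fin (2*n) → k) : Om w (a + b) = Om w a + Om w b := by
  simp only [Om, ← Finset.sum_add_distrib]
  exact Finset.sum_congr rfl fun t _ => by simp; ring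
theorem Om_smul_left (c : k) (a w : Fin (2*n) → k) : Om (c • a) w = c * Om a w := by
  simp only [Om, Finset.mul_sum]
  exact Finset.sum_congr rfl fun t _ => by simp; ring
theorem Om_smul_right (c : k) (a w : Fin (2*n) → k) : Om w (c • a) = c * Om w a := by
  simp only [Om, Finset.mul_sum]
  exact Finset.sum_congr rfl fun t _ => by simp; ring

/-- The one-parameter group `1 + cN` consists of unipotent symplectic maps. -/
theorem nil_unip {η : Fin (2*n) → k} {ρ : Fin (2*n) → Fin (2*n)} (h : Nil η ρ) (c : k) :
    Unip (LinearMap.id + c • nilMap η ρ) := by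
  constructor
  · intro v w
    simp only [LinearMap.add_apply, LinearMap.id_apply, LinearMap.smul_apply, Om_add_left, Om_add_right,
      Om_smul_left, Om_smul_right, nil_om2 h]
    linear_combination c * nil_om h v w
  · intro v i hv
    have : nilMap η ρ v i = 0 := by
      by_cases h0 : η i = 0
      · simp [nilMap, h0]
      · simp [nilMap, hv _ (h i h0).2.1]
    simp [this]

/-- For `s ≠ 0`, the frame with columns `b (e_w + s η_w e_{ρ w})` is, up to scaling of its columns,
the image under `b (1 + s⁻¹ N)` of the coordinate frame of the moved tuple `w'`. So it lies on the
cell of `w'`. -/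
theorem curve_ne {η : Fin (2*n) → k} {ρ : Fin (2*n) → Fin (2*n)} (h : Nil η ρ)
    {f : Matrix (Fin (2*n)) (Fin d) k → k} (hf : Nice f) (w : Fin d → Fin (2*n))
    (hav : ∀ i, η i ≠ 0 → ∀ l, w l ≠ ρ i) (w' : Fin d → Fin (2*n))
    (hw0 : ∀ l, η (w l) = 0 → w' l = w l) (hw1 : ∀ l, η (w l) ≠ 0 → w' l = ρ (w l))
    (hv : Van f w') (b) (hb : Unip b) (s : k) (hs : s ≠ 0) :
    f (colM fun l => b (bv k (w l) + (s * η (w l)) • bv k (ρ (w l)))) = 0 := by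
  classical
  obtain ⟨m, hm⟩ := hf.2
  have e : (colM fun l => b (bv k (w l) + (s * η (w l)) • bv k (ρ (w l)))) =
      (colM fun l => (b ∘ₗ (LinearMap.id + s⁻¹ • nilMap η ρ)) (bv k (w' l))) *
        Matrix.diagonal (fun l => if η (w l) = 0 then 1 else s * η (w l)) := by
    ext i l
    rw [Matrix.mul_diagonal]
    simp only [colM, LinearMap.comp_apply]
    by_cases h0 : η (w l) = 0
    · rw [if_pos h0, mul_one, hw0 l h0, h0]
      have : nilMap η ρ (bv k (w l)) = 0 := by
        funext i
        by_cases hi0 : η i = 0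
        · simp [nilMap, hi0]
        · simp [nilMap, bv_ne (hav i hi0 l).symm]
      simp [this]
    · rw [if_neg h0, hw1 l h0]
      obtain ⟨h1, -, -, h3, -⟩ := h _ h0
      have : nilMap η ρ (bv k (ρ (w l))) = η (w l) • bv k (w l) := by
        funext i
        by_cases hi : i = w l
        · subst hi; simp [nilMap, bv_self]
        · rw [Pi.smul_apply, bv_ne hi, smul_zero]
          by_cases hi0 : η i = 0
          · simp [nilMap, hi0]
          · have : ρ i ≠ ρ (w l) := by
              intro hr
              apply hi
              have h4 := (h i hi0).2.2.2.1
              rw [hr, h3] at h4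
              simpa using (congrArg st h4).symm
            simp [nilMap, bv_ne this]
      have e2 : bv k (w l) + (s * η (w l)) • bv k (ρ (w l)) = (s * η (w l)) •
          (LinearMap.id + s⁻¹ • nilMap η ρ : (Fin (2*n) → k) →ₗ[k] (Fin (2*n) → k)) (bv k (ρ (w l))) := by
        simp only [LinearMap.add_apply, LinearMap.id_apply, LinearMap.smul_apply, this, smul_add, smul_smul]
        rw [show s * η (w l) * (s⁻¹ * η (w l)) = 1 by
          rw [mul_mul_mul_comm, mul_inv_cancel₀ hs, h1, one_mul], one_smul, add_comm]
      rw [e2, map_smul, Pi.smul_apply, smul_eq_mul, mul_comm]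
  rw [e, hm, hv _ (hb.comp (nil_unip h _)), mul_zero]

/-- Letting `s → 0` in `curve_ne`: vanishing passes from the cell of the moved tuple to the cell
of `w`. -/
theorem curve_zero [Infinite k] {η : Fin (2*n) → k} {ρ : Fin (2*n) → Fin (2*n)} (h : Nil η ρ)
    {f : Matrix (Fin (2*n)) (Fin d) k → k} (hf : Nice f) (w : Fin d → Fin (2*n))
    (hav : ∀ i, η i ≠ 0 → ∀ l, w l ≠ ρ i) (w' : Fin d → Fin (2*n))
    (hw0 : ∀ l, η (w l) = 0 → w' l = w l) (hw1 : ∀ l, η (w l) ≠ 0 → w' l = ρ (w l))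
    (hv : Van f w') : Van f w := by
  intro b hb
  obtain ⟨p, hp⟩ := hf.1 (colM fun l => b (bv k (w l))) (colM fun l => η (w l) • b (bv k (ρ (w l))))
  have e : ∀ s : k, (colM fun l => b (bv k (w l))) + s • (colM fun l => η (w l) • b (bv k (ρ (w l)))) =
      colM fun l => b (bv k (w l) + (s * η (w l)) • bv k (ρ (w l))) := by
    intro s
    ext i l
    simp [colM, mul_assoc]
  have := poly_zero p fun s hs => by
    rw [← hp, e]
    exact curve_ne h hf w hav w' hw0 hw1 hv b hb s hs
  rw [← hp] at this
  simpa using this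

/-! ### Elementary moves on pair-free sets -/

/-- An integer path positive just after `t` and nonpositive later has a first return. -/
theorem first_return (P : ℕ → ℤ) (t e : ℕ) (h1 : 0 < P (t+1)) (h : ∃ y, t < y ∧ y ≤ e ∧ P y ≤ 0) :
    ∃ b, t < b ∧ b < e ∧ P (b+1) ≤ 0 ∧ ∀ x, t < x → x ≤ b → 0 < P x := by
  classical
  have hs := Nat.find_spec h
  have hm := fun m => Nat.find_min h (m := m)
  set y := Nat.find h
  have hne : y ≠ t + 1 := by intro h; rw [h] at hs; omega
  refine ⟨y - 1, by omega, by omega, by rw [Nat.sub_add_cancel (by omega)]; exact hs.2.2, fun x hx hx' => ?_⟩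
  have := hm x (by omega)
  by_contra hc
  exact this ⟨hx, by omega, by omega⟩

theorem first_up (P : ℕ → ℤ) (n : ℕ) (h0 : P 0 = 0) (h : ∃ y, y ≤ n ∧ 0 < P y) :
    ∃ t, t < n ∧ P t ≤ 0 ∧ 0 < P (t+1) := by
  classical
  have hs := Nat.find_spec h
  have hm := fun m => Nat.find_min h (m := m)
  set y := Nat.find h
  have hne : y ≠ 0 := by intro h; rw [h] at hs; omega
  refine ⟨y - 1, by omega, ?_, by rw [Nat.sub_add_cancel (by omega)]; exact hs.2⟩
  have := hm (y-1) (by omega)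
  by_contra hc
  exact this ⟨by omega, by omega⟩

theorem last_up (P : ℕ → ℤ) (n : ℕ) (h0 : P 0 = 0) (h : 0 < P n) :
    ∃ z, z < n ∧ P z ≤ 0 ∧ ∀ x, z < x → x ≤ n → 0 < P x := by
  induction n with
  | zero => omega
  | succ n ih =>
    by_cases hn : 0 < P n
    · obtain ⟨z, hz, h1, h2⟩ := ih hn
      refine ⟨z, by omega, h1, fun x hx hx' => ?_⟩
      rcases Nat.lt_or_ge n x with h3 | h3
      · obtain rfl : x = n + 1 := by omega
        exact h
      · exact h2 x hx h3
    · refine ⟨n, by omega, by omega, fun x hx hx' => ?_⟩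
      obtain rfl : x = n + 1 := by omega
      exact h

/-- An index pair-free set `W` which differs from a pair-free `U` above it admits an elementary
raising move towards `U`, stated for integer paths. Here `P` and `Q` stand for `NA W - NA U` and
`NB U - NB W`, and `aW`, `cW`, `aU`, `cU` for the indicators of the two halves of `W` and `U`.
In the first case an element moves inside its half from `t` to `b` or from `b` to `t`, in the
second from the lower to the upper half. -/
theorem exists_move (n : ℕ) (aW aU cW cU P Q : ℕ → ℤ) (h1 : ∀ x, 0 ≤ aW x) (h2 : ∀ x, 0 ≤ aU x)
    (h3 : ∀ x, 0 ≤ cW x) (h4 : ∀ x, 0 ≤ cU x) (h5 : ∀ x, aW x + cW x ≤ 1) (h6 : ∀ x, aU x + cU x ≤ 1)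
    (hP0 : P 0 = 0) (hQ0 : Q 0 = 0) (hP : ∀ x < n, P (x+1) = P x + aW x - aU x)
    (hQ : ∀ x < n, Q (x+1) = Q x + cU x - cW x) (hPn : ∀ x ≤ n, 0 ≤ P x) (hQn : ∀ x ≤ n, 0 ≤ Q x)
    (hPQ : P n = Q n) (hne : ∃ x ≤ n, 0 < P x ∨ 0 < Q x) :
    (∃ t b, t < b ∧ b < n ∧ aW b = 0 ∧ cW t = 0 ∧ (aW t = 1 ∨ cW b = 1) ∧
      (aW t = 1 → ∀ x, t < x → x ≤ b → 0 < P x) ∧ (cW b = 1 → ∀ x, t < x → x ≤ b → 0 < Q x)) ∨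
    (∃ z t, z < n ∧ t < n ∧ aW z = 1 ∧ cW t = 0 ∧ (z = t ∨ aW t = 0) ∧
      (∀ x, z < x → x ≤ n → 0 < P x) ∧ ∀ x, t < x → x ≤ n → 0 < Q x) := by
  by_cases hq : ∃ y, y ≤ n ∧ 0 < Q y
  · obtain ⟨t, ht, hq0, hq1⟩ := first_up Q n hQ0 hq
    have e1 := hQ t ht; have e2 := hQn t ht.le
    have ec := h3 t; have ea := h1 t; have eac := h5 t; have eu := h4 t; have ea' := h2 t
    have eu' := h6 t
    have hct : cW t = 0 := by omega
    have hau : aU t = 0 := by omega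
    have eP := hP t ht; have eP0 := hPn t ht.le
    -- a return of `P` to zero inside the excursion of `Q` gives a move
    have key : ∀ e, e ≤ n → aW t = 1 → (∀ x, t < x → x < e → 0 < Q x) → (∃ y, t < y ∧ y ≤ e ∧ P y ≤ 0) →
        ∃ t b, t < b ∧ b < n ∧ aW b = 0 ∧ cW t = 0 ∧ (aW t = 1 ∨ cW b = 1) ∧
          (aW t = 1 → ∀ x, t < x → x ≤ b → 0 < P x) ∧ (cW b = 1 → ∀ x, t < x → x ≤ b → 0 < Q x) := by
      intro e he hat hQe hy
      obtain ⟨b, hb, hbe, hb1, hb2⟩ := first_return P t e (by omega) hy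
      have e3 := hP b (by omega); have e4 := hb2 b hb le_rfl; have e5 := h1 b; have e6 := h5 b
      have e7 := h3 b; have e8 := h2 b; have e9 := h4 b; have e10 := h6 b
      exact ⟨t, b, hb, by omega, by omega, hct, Or.inl hat, fun _ => hb2, fun _ x hx hx' => hQe x hx (by omega)⟩
    by_cases hr : ∃ y, t < y ∧ y ≤ n ∧ Q y ≤ 0
    · obtain ⟨b, hb, hbe, hb1, hb2⟩ := first_return Q t n hq1 hr
      have e3 := hQ b (by omega); have e4 := hb2 b hb le_rfl; have e5 := h1 b; have e6 := h5 b
      have e7 := h3 b; have e8 := h2 b; have e9 := h4 b; have e10 := h6 b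
      by_cases hat : aW t = 1
      · by_cases hy : ∃ y, t < y ∧ y ≤ b ∧ P y ≤ 0
        · exact Or.inl (key b (by omega) hat (fun x hx hx' => hb2 x hx (by omega)) hy)
        · push Not at hy
          exact Or.inl ⟨t, b, hb, hbe, by omega, hct, Or.inl hat, fun _ => hy, fun _ => hb2⟩
      · exact Or.inl ⟨t, b, hb, hbe, by omega, hct, Or.inr (by omega), fun h => absurd h hat, fun _ => hb2⟩
    · push Not at hr
      have hPpos : 0 < P n := by rw [hPQ]; exact hr n ht le_rfl
      by_cases hat : aW t = 1
      · by_cases hy : ∃ y, t < y ∧ y ≤ n ∧ P y ≤ 0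
        · exact Or.inl (key n le_rfl hat (fun x hx hx' => hr x hx (by omega)) hy)
        · push Not at hy
          exact Or.inr ⟨t, t, ht, ht, hat, hct, Or.inl rfl, hy, hr⟩
      · obtain ⟨z, hz, hz0, hz1⟩ := last_up P n hP0 hPpos
        have e3 := hP z hz; have e4 := hz1 (z+1) (by omega) (by omega); have e5 := h1 z; have e6 := h5 z
        have e7 := h3 z; have e8 := h2 z; have e9 := hPn z hz.le
        exact Or.inr ⟨z, t, hz, ht, by omega, hct, Or.inr (by omega), hz1, hr⟩
  · push Not at hq
    have hp : ∃ y, y ≤ n ∧ 0 < P y := by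
      obtain ⟨x, hx, h | h⟩ := hne
      · exact ⟨x, hx, h⟩
      · have := hq x hx; omega
    obtain ⟨t, ht, hp0, hp1⟩ := first_up P n hP0 hp
    have e1 := hP t ht; have e2 := hPn t ht.le
    have ec := h3 t; have ea := h1 t; have eac := h5 t; have ea' := h2 t
    have hn0 : P n ≤ 0 := by rw [hPQ]; exact hq n le_rfl
    obtain ⟨b, hb, hbe, hb1, hb2⟩ := first_return P t n hp1 ⟨n, ht, le_rfl, hn0⟩
    have e3 := hP b (by omega); have e4 := hb2 b hb le_rfl; have e5 := h1 b; have e6 := h5 b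
    have e7 := h3 b; have e8 := h2 b; have e9 := h4 b; have e10 := h6 b
    have e11 := hQ b hbe; have e12 := hq b hbe.le; have e13 := hq (b+1) hbe; have e14 := hQn b hbe.le
    have e15 := hQn (b+1) hbe
    have e16 := hPn (b+1) hbe
    exact Or.inl ⟨t, b, hb, hbe, by omega, by omega, Or.inl (by omega), fun _ => hb2, fun h => by omega⟩

theorem NA_zero (S : Finset (Fin (2*n))) : NA S 0 = 0 := by simp [NA]
theorem NB_zero (S : Finset (Fin (2*n))) : NB S 0 = 0 := by
  unfold NB
  refine Finset.sum_eq_zero fun i _ => if_neg (by omega)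

/-- Indicator of the elements `lo x` of `S`. -/
def iA (S : Finset (Fin (2*n))) (x : ℕ) : ℕ := if h : x < n then (if lo ⟨x, h⟩ ∈ S then 1 else 0) else 0
/-- Indicator of the elements `hi x` of `S`. -/
def iB (S : Finset (Fin (2*n))) (x : ℕ) : ℕ := if h : x < n then (if hi ⟨x, h⟩ ∈ S then 1 else 0) else 0

theorem iA_eq (S : Finset (Fin (2*n))) (t : Fin n) : iA S t.1 = if lo t ∈ S then 1 else 0 := by
  simp [iA]
theorem iB_eq (S : Finset (Fin (2*n))) (t : Fin n) : iB S t.1 = if hi t ∈ S then 1 else 0 := by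
  simp [iB]

theorem count_succ (p : Fin n → Prop) [DecidablePred p] (x : ℕ) (hx : x < n) :
    (∑ t : Fin n, if p t ∧ t.1 < x + 1 then 1 else 0) =
      (∑ t : Fin n, if p t ∧ t.1 < x then 1 else 0) + if p ⟨x, hx⟩ then 1 else 0 := by
  have h : (if p ⟨x, hx⟩ then 1 else 0) = ∑ t : Fin n, if t = ⟨x, hx⟩ then (if p t then 1 else 0) else 0 := by
    rw [Finset.sum_ite_eq', if_pos (Finset.mem_univ _)]
  rw [h, ← Finset.sum_add_distrib]
  refine Finset.sum_congr rfl fun t _ => ?_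
  have : t = ⟨x, hx⟩ ↔ t.1 = x := by rw [Fin.ext_iff]
  simp only [this]
  by_cases hp : p t
  · simp only [hp, true_and, if_true]
    split_ifs <;> omega
  · simp [hp]

theorem NA_succ (S : Finset (Fin (2*n))) (x : ℕ) (hx : x < n) : NA S (x+1) = NA S x + iA S x := by
  rw [NA_eq S _ (by omega), NA_eq S _ (by omega), count_succ _ _ hx, iA_eq S ⟨x, hx⟩]

theorem NB_succ (S : Finset (Fin (2*n))) (x : ℕ) (hx : x < n) : NB S (x+1) = NB S x + iB S x := by
  rw [NB_eq S _, NB_eq S _, count_succ _ _ hx, iB_eq S ⟨x, hx⟩]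

theorem card_eq (S : Finset (Fin (2*n))) : NA S n + NB S n = S.card := by
  rw [NA, NB, ← Finset.sum_add_distrib, Finset.card_eq_sum_ones]
  refine Finset.sum_congr rfl fun i _ => ?_
  have := i.2
  split_ifs <;> omega

theorem iA_one {S : Finset (Fin (2*n))} (t : Fin n) : iA S t.1 = 1 ↔ lo t ∈ S := by
  rw [iA_eq]; split_ifs with h <;> simp [h]
theorem iA_nil {S : Finset (Fin (2*n))} (t : Fin n) : iA S t.1 = 0 ↔ lo t ∉ S := by
  rw [iA_eq]; split_ifs with h <;> simp [h]
theorem iB_one {S : Finset (Fin (2*n))} (t : Fin n) : iB S t.1 = 1 ↔ hi t ∈ S := by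
  rw [iB_eq]; split_ifs with h <;> simp [h]
theorem iB_nil {S : Finset (Fin (2*n))} (t : Fin n) : iB S t.1 = 0 ↔ hi t ∉ S := by
  rw [iB_eq]; split_ifs with h <;> simp [h]

/-- A set of rows is determined by its counting functions. -/
theorem count_ext {S T : Finset (Fin (2*n))} (hA : ∀ x ≤ n, NA S x = NA T x)
    (hB : ∀ x ≤ n, NB S x = NB T x) : S = T := by
  ext i
  rcases lohi_cases i with ⟨t, rfl⟩ | ⟨t, rfl⟩
  · have h1 := hA t.1 t.2.le; have h2 := hA (t.1+1) t.2
    rw [NA_succ _ _ t.2, NA_succ _ _ t.2] at h2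
    rw [← iA_one, ← iA_one]; omega
  · have h1 := hB t.1 t.2.le; have h2 := hB (t.1+1) t.2
    rw [NB_succ _ _ t.2, NB_succ _ _ t.2] at h2
    rw [← iB_one, ← iB_one]; omega

/-- The index contains no pair `{t, n + t}`. -/
def NoPair (S : Finset (Fin (2*n))) : Prop := ∀ t, lo t ∈ S → hi t ∉ S

theorem nopair_le {S : Finset (Fin (2*n))} (h : NoPair S) (x : ℕ) : iA S x + iB S x ≤ 1 := by
  by_cases hx : x < n
  · have h1 := iA_eq S ⟨x, hx⟩; have h2 := iB_eq S ⟨x, hx⟩; have h3 := h ⟨x, hx⟩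
    simp only at h1 h2
    rw [h1, h2]
    split_ifs with h4 h5 <;> simp_all
  · simp [iA, iB, hx]

/-- The height function of a pair-free set is nonincreasing. -/
theorem nopair_ht {S : Finset (Fin (2*n))} (h : NoPair S) (x y : ℕ) (hxy : x ≤ y) (hy : y ≤ n) :
    ht S y ≤ ht S x := by
  induction y, hxy using Nat.le_induction with
  | base => rfl
  | succ y hxy ih =>
    have h1 := NA_succ S y hy; have h2 := NB_succ S y hy; have h3 := nopair_le h y
    refine le_trans ?_ (ih (by omega))
    unfold ht
    omega

/-- Combine functions on the two halves of the index set. -/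
def lh {α : Type*} (f g : Fin n → α) (i : Fin (2*n)) : α :=
  if h : i.1 < n then f ⟨i.1, h⟩ else g ⟨i.1 - n, by have := i.2; omega⟩

@[simp] theorem lh_lo {α : Type*} (f g : Fin n → α) (t : Fin n) : lh f g (lo t) = f t := by simp [lh]
@[simp] theorem lh_hi {α : Type*} (f g : Fin n → α) (t : Fin n) : lh f g (hi t) = g t := by simp [lh]

/-- The tuple index after the move described by `η` and `ρ`. -/
noncomputable def mv (η : Fin (2*n) → k) (ρ : Fin (2*n) → Fin (2*n)) (i : Fin (2*n)) : Fin (2*n) :=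
  open Classical in if η i = 0 then i else ρ i

/-- Vanishing on the Schubert cell of the coordinate subspace indexed by `W`. -/
def VanS (f : Matrix (Fin (2*n)) (Fin d) k → k) (W : Finset (Fin (2*n))) : Prop :=
  ∀ w : Fin d → Fin (2*n), Finset.univ.image w = W → Van f w

/-- Vanishing passes back along the move of a set described by `η` and `ρ`. -/
theorem move_van [Infinite k] {η : Fin (2*n) → k} {ρ : Fin (2*n) → Fin (2*n)} (h : Nil η ρ)
    {f : Matrix (Fin (2*n)) (Fin d) k → k} (hf : Nice f) (W : Finset (Fin (2*n)))
    (hav : ∀ i, η i ≠ 0 → ρ i ∉ W) (hv : VanS f (W.image (mv η ρ))) : VanS f W := by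
  rintro w rfl
  refine curve_zero h hf w ?_ (mv η ρ ∘ w) (fun l hl => by simp [mv, hl]) (fun l hl => by simp [mv, hl])
    (hv _ ?_)
  · intro i hi l hl
    exact hav i hi (hl ▸ Finset.mem_image_of_mem _ (Finset.mem_univ _))
  · rw [Finset.image_image]

/-- `κ` matches the elements of `I'` with larger elements of `I`. -/
def Mt (I I' : Finset (Fin n)) (κ : Fin n → Fin n) : Prop :=
  (∀ t ∈ I', κ t ∈ I ∧ t < κ t ∧ κ (κ t) = t) ∧ ∀ t ∈ I, κ t ∈ I' ∧ κ t < t ∧ κ (κ t) = t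

/-- Coefficients of the element of the Lie algebra of `GL_n`, embedded in that of `Sp_{2n}`, which
sends `lo (κ t)` to `lo t` for `t ∈ I'` and `hi (κ t)` to `-hi t` for `t ∈ I`. -/
def etaGL (k : Type*) [Field k] (I I' : Finset (Fin n)) : Fin (2*n) → k :=
  lh (fun t => if t ∈ I' then 1 else 0) (fun t => if t ∈ I then -1 else 0)

/-- The targets of the moves with coefficients `etaGL`. -/
def rhoGL (κ : Fin n → Fin n) : Fin (2*n) → Fin (2*n) := lh (fun t => lo (κ t)) (fun t => hi (κ t))

theorem nilGL {I I' : Finset (Fin n)} {κ : Fin n → Fin n} (h : Mt I I' κ) :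
    Nil (etaGL k I I') (rhoGL κ) := by
  have hdis : ∀ t, t ∈ I → t ∉ I' := fun t h1 h2 => by
    have e1 := (h.1 t h2).2.1; have e2 := (h.2 t h1).2.1
    exact absurd e1 (not_lt.2 e2.le)
  intro i hi0
  rcases lohi_cases i with ⟨t, rfl⟩ | ⟨t, rfl⟩
  · have ht : t ∈ I' := by by_contra hc; simp [etaGL, hc] at hi0
    obtain ⟨h1, h2, h3⟩ := h.1 t ht
    have h4 : t ∉ I := fun h5 => hdis t h5 ht
    refine ⟨by simp [etaGL, ht], ?_, ?_, ?_, ?_, ?_⟩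
    · simp only [rhoGL, lh_lo, pos_lo]; exact h2
    · simp [rhoGL, etaGL, h1]
    · simp [rhoGL, h3]
    · simp [rhoGL, etaGL, h1, ht]
    · simp [etaGL, h4]
  · have ht : t ∈ I := by by_contra hc; simp [etaGL, hc] at hi0
    obtain ⟨h1, h2, h3⟩ := h.2 t ht
    have h4 := hdis t ht
    refine ⟨by simp [etaGL, ht], ?_, ?_, ?_, ?_, ?_⟩
    · simp only [rhoGL, lh_hi, pos_hi]
      have := t.2
      have : (κ t).1 < t.1 := h2
      omega
    · simp [rhoGL, etaGL, h1]
    · simp [rhoGL, h3]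
    · simp [rhoGL, etaGL, h1, ht]
    · simp [etaGL, h4]

theorem mvGL_lo (I I' : Finset (Fin n)) (κ : Fin n → Fin n) (t : Fin n) :
    mv (etaGL k I I') (rhoGL κ) (lo t) = if t ∈ I' then lo (κ t) else lo t := by
  by_cases h : t ∈ I' <;> simp [mv, etaGL, rhoGL, h]
theorem mvGL_hi (I I' : Finset (Fin n)) (κ : Fin n → Fin n) (t : Fin n) :
    mv (etaGL k I I') (rhoGL κ) (hi t) = if t ∈ I then hi (κ t) else hi t := by
  by_cases h : t ∈ I <;> simp [mv, etaGL, rhoGL, h]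

theorem imageGL {I I' : Finset (Fin n)} {κ : Fin n → Fin n} (h : Mt I I' κ)
    (W : Finset (Fin (2*n))) (s : Fin n) :
    (lo s ∈ W.image (mv (etaGL k I I') (rhoGL κ)) ↔ (s ∉ I' ∧ lo s ∈ W) ∨ (s ∈ I ∧ lo (κ s) ∈ W)) ∧
    (hi s ∈ W.image (mv (etaGL k I I') (rhoGL κ)) ↔ (s ∉ I ∧ hi s ∈ W) ∨ (s ∈ I' ∧ hi (κ s) ∈ W)) := by
  simp only [Finset.mem_image]
  constructor <;> constructor
  · rintro ⟨i, hi, h2⟩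
    rcases lohi_cases i with ⟨t, rfl⟩ | ⟨t, rfl⟩
    · rw [mvGL_lo] at h2
      split_ifs at h2 with h3
      · obtain rfl := lo_inj.1 h2
        obtain ⟨h4, -, h5⟩ := h.1 t h3
        exact Or.inr ⟨h4, by rwa [h5]⟩
      · obtain rfl := lo_inj.1 h2
        exact Or.inl ⟨h3, hi⟩
    · rw [mvGL_hi] at h2
      split_ifs at h2 <;> exact absurd h2 hi_ne_lo
  · rintro (⟨h1, h2⟩ | ⟨h1, h2⟩)
    · exact ⟨lo s, h2, by rw [mvGL_lo, if_neg h1]⟩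
    · obtain ⟨h4, -, h5⟩ := h.2 s h1
      exact ⟨lo (κ s), h2, by rw [mvGL_lo, if_pos h4, h5]⟩
  · rintro ⟨i, hi, h2⟩
    rcases lohi_cases i with ⟨t, rfl⟩ | ⟨t, rfl⟩
    · rw [mvGL_lo] at h2
      split_ifs at h2 <;> exact absurd h2 lo_ne_hi
    · rw [mvGL_hi] at h2
      split_ifs at h2 with h3
      · obtain rfl := hi_inj.1 h2
        obtain ⟨h4, -, h5⟩ := h.2 t h3
        exact Or.inr ⟨h4, by rwa [h5]⟩
      · obtain rfl := hi_inj.1 h2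
        exact Or.inl ⟨h3, hi⟩
  · rintro (⟨h1, h2⟩ | ⟨h1, h2⟩)
    · exact ⟨SpR.hi s, h2, by rw [mvGL_hi, if_neg h1]⟩
    · obtain ⟨h4, -, h5⟩ := h.1 s h1
      exact ⟨SpR.hi (κ s), h2, by rw [mvGL_hi, if_pos h4, h5]⟩

theorem mt_single {t b : Fin n} (h : t < b) : Mt {b} {t} (Equiv.swap t b) := by
  constructor <;> intro s hs <;> obtain rfl := Finset.mem_singleton.1 hs <;> simp [h]

open Classical in
/-- Coefficients of the root element sending `hi t` to `lo z` and `hi z` to `lo t`. The case `z = t`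
is that of a long root. -/
def etaS (k : Type*) [Field k] (z t : Fin n) : Fin (2*n) → k :=
  lh (fun s => if s = z ∨ s = t then 1 else 0) (fun _ => 0)

/-- The targets of the moves with coefficients `etaS`. -/
def rhoS (z t : Fin n) : Fin (2*n) → Fin (2*n) := lh (fun s => hi (Equiv.swap z t s)) (fun s => hi s)

theorem nilS (z t : Fin n) : Nil (etaS k z t) (rhoS z t) := by
  intro i hi0
  rcases lohi_cases i with ⟨s, rfl⟩ | ⟨s, rfl⟩
  · have hs : s = z ∨ s = t := by by_contra hc; simp [etaS, hc] at hi0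
    have hs' : Equiv.swap z t s = z ∨ Equiv.swap z t s = t := by rcases hs with rfl | rfl <;> simp
    refine ⟨by simp [etaS, hs], ?_, ?_, ?_, ?_, ?_⟩
    · simp only [rhoS, lh_lo, pos_lo, pos_hi]
      have := s.2; have := (Equiv.swap z t s).2; omega
    · simp [rhoS, etaS, hs']
    · simp [rhoS]
    · simp [rhoS, etaS, hs', hs]
    · simp [etaS]
  · simp [etaS] at hi0

theorem mvS_lo (z t s : Fin n) :
    mv (etaS k z t) (rhoS z t) (lo s) = if s = z ∨ s = t then hi (Equiv.swap z t s) else lo s := by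
  by_cases h : s = z ∨ s = t <;> simp [mv, etaS, rhoS, h]
theorem mvS_hi (z t s : Fin n) : mv (etaS k z t) (rhoS z t) (hi s) = hi s := by
  simp [mv, etaS]

theorem imageS (z t : Fin n) (W : Finset (Fin (2*n))) (s : Fin n) :
    (lo s ∈ W.image (mv (etaS k z t) (rhoS z t)) ↔ s ≠ z ∧ s ≠ t ∧ lo s ∈ W) ∧
    (hi s ∈ W.image (mv (etaS k z t) (rhoS z t)) ↔ hi s ∈ W ∨ (s = t ∧ lo z ∈ W) ∨ (s = z ∧ lo t ∈ W)) := by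
  simp only [Finset.mem_image]
  constructor <;> constructor
  · rintro ⟨i, hi, h2⟩
    rcases lohi_cases i with ⟨r, rfl⟩ | ⟨r, rfl⟩
    · rw [mvS_lo] at h2
      split_ifs at h2 with h3
      · exact absurd h2 hi_ne_lo
      · obtain rfl := lo_inj.1 h2
        push Not at h3
        exact ⟨h3.1, h3.2, hi⟩
    · rw [mvS_hi] at h2; exact absurd h2 hi_ne_lo
  · rintro ⟨h1, h2, h3⟩
    exact ⟨lo s, h3, by rw [mvS_lo, if_neg (by tauto)]⟩
  · rintro ⟨i, hi, h2⟩
    rcases lohi_cases i with ⟨r, rfl⟩ | ⟨r, rfl⟩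
    · rw [mvS_lo] at h2
      split_ifs at h2 with h3
      · have h4 := hi_inj.1 h2
        rcases h3 with rfl | rfl
        · rw [Equiv.swap_apply_left] at h4
          exact Or.inr (Or.inl ⟨h4.symm, hi⟩)
        · rw [Equiv.swap_apply_right] at h4
          exact Or.inr (Or.inr ⟨h4.symm, hi⟩)
      · exact absurd h2 lo_ne_hi
    · rw [mvS_hi] at h2
      obtain rfl := hi_inj.1 h2
      exact Or.inl hi
  · rintro (h1 | ⟨rfl, h1⟩ | ⟨rfl, h1⟩)
    · exact ⟨SpR.hi s, h1, mvS_hi _ _ _⟩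
    · exact ⟨lo z, h1, by rw [mvS_lo, if_pos (Or.inl rfl), Equiv.swap_apply_left]⟩
    · exact ⟨lo t, h1, by rw [mvS_lo, if_pos (Or.inr rfl), Equiv.swap_apply_right]⟩

/-! ### Vanishing on closures of Schubert cells -/

theorem gl_counts (t b : Fin n) (htb : t < b) (W : Finset (Fin (2*n))) (hb : lo b ∉ W) (ht : hi t ∉ W)
    (W' : Finset (Fin (2*n))) (hW : W' = W.image (mv (etaGL k {b} {t}) (rhoGL (Equiv.swap t b)))) :
    ∀ x ≤ n, (NA W' x + (if t.1 < x ∧ x ≤ b.1 then iA W t.1 else 0) = NA W x) ∧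
      NB W' x = NB W x + (if t.1 < x ∧ x ≤ b.1 then iB W b.1 else 0) := by
  have hm := imageGL (k := k) (mt_single htb) W
  rw [← hW] at hm
  simp only [Finset.mem_singleton] at hm
  intro x
  induction x with
  | zero => intro _; simp [NA_zero, NB_zero]
  | succ x ih =>
    intro hx
    obtain ⟨h1, h2⟩ := ih (by omega)
    rw [NA_succ _ _ hx, NA_succ _ _ hx, NB_succ _ _ hx, NB_succ _ _ hx]
    obtain ⟨m1, m2⟩ := hm ⟨x, hx⟩
    have a1 := iA_eq W' ⟨x, hx⟩; have a2 := iA_eq W ⟨x, hx⟩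
    have a3 := iB_eq W' ⟨x, hx⟩; have a4 := iB_eq W ⟨x, hx⟩
    have a5 := iA_eq W t; have a6 := iB_eq W b
    have hlt : t.1 < b.1 := htb
    simp only at a1 a2 a3 a4
    by_cases c1 : x = t.1
    · subst c1
      have e : (⟨t.1, hx⟩ : Fin n) = t := rfl
      have e' : (t:Fin n) ≠ b := htb.ne
      rw [e] at *
      simp [e', hb, ht] at m1 m2 a1 a2 a3 a4
      rw [if_neg (by omega)] at h1 h2
      rw [if_pos (by omega), if_pos (by omega)]
      simp only [m1, m2] at *
      simp at a1 a3
      omega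
    · by_cases c2 : x = b.1
      · subst c2
        have e : (⟨b.1, hx⟩ : Fin n) = b := rfl
        have e' : b ≠ t := htb.ne'
        rw [e] at *
        simp [e', hb, ht] at m1 m2 a1 a2 a3 a4
        rw [if_pos (by omega)] at h1 h2
        rw [if_neg (by omega), if_neg (by omega)]
        simp only [m1, m2] at *
        simp at a1 a3
        omega
      · have e1 : (⟨x, hx⟩ : Fin n) ≠ t := fun h => c1 (by rw [← h])
        have e2 : (⟨x, hx⟩ : Fin n) ≠ b := fun h => c2 (by rw [← h])
        simp [e1, e2] at m1 m2
        simp only [m1, m2] at *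
        have : (t.1 < x + 1 ∧ x + 1 ≤ b.1) ↔ (t.1 < x ∧ x ≤ b.1) := by omega
        simp only [this]
        omega

theorem sym_counts (z t : Fin n) (W : Finset (Fin (2*n))) (hz : lo z ∈ W) (ht : hi t ∉ W)
    (hzt : z = t ∨ lo t ∉ W)
    (W' : Finset (Fin (2*n))) (hW : W' = W.image (mv (etaS k z t) (rhoS z t))) :
    ∀ x ≤ n, (NA W' x + (if z.1 < x then 1 else 0) = NA W x) ∧
      NB W' x = NB W x + (if t.1 < x then 1 else 0) := by
  have hm := imageS (k := k) z t W
  rw [← hW] at hm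
  intro x
  induction x with
  | zero => intro _; simp [NA_zero, NB_zero]
  | succ x ih =>
    intro hx
    obtain ⟨h1, h2⟩ := ih (by omega)
    rw [NA_succ _ _ hx, NA_succ _ _ hx, NB_succ _ _ hx, NB_succ _ _ hx]
    obtain ⟨m1, m2⟩ := hm ⟨x, hx⟩
    have a1 := iA_eq W' ⟨x, hx⟩; have a2 := iA_eq W ⟨x, hx⟩
    have a3 := iB_eq W' ⟨x, hx⟩; have a4 := iB_eq W ⟨x, hx⟩
    simp only at a1 a2 a3 a4
    have A : iA W' x + (if x = z.1 then 1 else 0) = iA W x := by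
      rw [a1, a2]
      by_cases c1 : x = z.1
      · have e : (⟨x, hx⟩ : Fin n) = z := Fin.ext c1
        rw [e] at m1 ⊢
        simp [c1, m1, hz]
      · have e1 : (⟨x, hx⟩ : Fin n) ≠ z := fun h => c1 (by rw [← h])
        by_cases c2 : (⟨x, hx⟩ : Fin n) = t
        · rw [c2] at m1 e1 ⊢
          have : lo t ∉ W := hzt.resolve_left (Ne.symm e1)
          simp [c1, m1, this]
        · simp [c1, m1, c2, e1]
    have B : iB W' x = iB W x + (if x = t.1 then 1 else 0) := by
      rw [a3, a4]
      by_cases c1 : x = t.1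
      · have e : (⟨x, hx⟩ : Fin n) = t := Fin.ext c1
        rw [e] at m2 ⊢
        simp [c1, m2, hz, ht]
      · have e1 : (⟨x, hx⟩ : Fin n) ≠ t := fun h => c1 (by rw [← h])
        by_cases c2 : (⟨x, hx⟩ : Fin n) = z
        · rw [c2] at m2 e1 ⊢
          have : lo t ∉ W := hzt.resolve_left e1
          simp [c1, m2, this, e1]
        · simp [c1, m2, c2, e1]
    constructor
    · have : (if z.1 < x + 1 then 1 else 0) = (if z.1 < x then 1 else 0) + (if x = z.1 then 1 else 0) := by
        split_ifs <;> omega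
      omega
    · have : (if t.1 < x + 1 then 1 else 0) = (if t.1 < x then 1 else 0) + (if x = t.1 then 1 else 0) := by
        split_ifs <;> omega
      omega

/-- Vanishing on the Schubert cell of `U` passes to the cell of every `W ≤ U`, which lies in its
closure: raising moves, each coming from a one-parameter unipotent subgroup, lead from `W` up
to `U`. The induction is on a bound `N` for the total difference of the counting functions. -/
theorem closure_van [Infinite k] {f : Matrix (Fin (2*n)) (Fin d) k → k} (hf : Nice f)
    (U : Finset (Fin (2*n))) (hU : NoPair U) (hv : VanS f U) (N : ℕ) (W : Finset (Fin (2*n)))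
    (hW : NoPair W) (hc : W.card = U.card) (hle : leS W U)
    (hN : ∑ x ∈ Finset.range (n+1), (((NA W x:ℤ) - NB W x) - (NA U x - NB U x)) ≤ N) :
    VanS f W := by
  induction N generalizing W with
  | zero =>
    have h0 : ∀ x ∈ Finset.range (n+1), 0 ≤ (((NA W x:ℤ) - NB W x) - (NA U x - NB U x)) := by
      intro x hx
      have := hle x (by simpa [Nat.lt_succ_iff] using hx)
      omega
    have h1 := (Finset.sum_eq_zero_iff_of_nonneg h0).1 (le_antisymm (by exact_mod_cast hN) (Finset.sum_nonneg h0))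
    have : W = U := by
      apply count_ext <;> intro x hx
      all_goals
        have h2 := h1 x (by simpa [Nat.lt_succ_iff] using hx)
        have := hle x hx
        omega
    rwa [this]
  | succ N ih =>
    by_cases hne : ∃ x ≤ n, 0 < (NA W x:ℤ) - NA U x ∨ 0 < (NB U x:ℤ) - NB W x
    swap
    · push Not at hne
      have : W = U := by
        apply count_ext <;> intro x hx
        all_goals
          have h2 := hne x hx
          have := hle x hx
          omega
      rwa [this]
    have hcW := card_eq W; have hcU := card_eq U
    -- both kinds of moves lead to a set strictly closer to `U`
    have fin : ∀ W' : Finset (Fin (2*n)), (∀ x ≤ n, NA U x ≤ NA W' x ∧ NA W' x ≤ NA W x) →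
        (∀ x ≤ n, NB W' x ≤ NB U x ∧ NB W x ≤ NB W' x) → NA W' n + NB W' n = NA W n + NB W n →
        (∃ x ≤ n, NA W' x < NA W x ∨ NB W x < NB W' x) → NoPair W' → VanS f W' := by
      intro W' hA hB hn ⟨y, hy, hyy⟩ hnp
      refine ih W' hnp ?_ (fun x hx => ⟨(hA x hx).1, (hB x hx).1⟩) ?_
      · rw [← hc, ← card_eq, ← card_eq, hn]
      · have : ∑ x ∈ Finset.range (n+1), (((NA W' x:ℤ) - NB W' x) - (NA U x - NB U x)) <
            ∑ x ∈ Finset.range (n+1), (((NA W x:ℤ) - NB W x) - (NA U x - NB U x)) := by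
          refine Finset.sum_lt_sum (fun x hx => ?_) ⟨y, by simpa [Nat.lt_succ_iff] using hy, ?_⟩
          · have hx' : x ≤ n := by simpa [Nat.lt_succ_iff] using hx
            have := hA x hx'; have := hB x hx'; omega
          · have := hA y hy; have := hB y hy; omega
        push_cast at hN; omega
    rcases exists_move n (fun x => iA W x) (fun x => iA U x) (fun x => iB W x) (fun x => iB U x)
      (fun x => (NA W x:ℤ) - NA U x) (fun x => (NB U x:ℤ) - NB W x)
      (fun x => by positivity) (fun x => by positivity) (fun x => by positivity) (fun x => by positivity)
      (fun x => by exact_mod_cast nopair_le hW x) (fun x => by exact_mod_cast nopair_le hU x)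
      (by simp [NA_zero]) (by simp [NB_zero])
      (fun x hx => by rw [NA_succ _ _ hx, NA_succ _ _ hx]; push_cast; ring)
      (fun x hx => by rw [NB_succ _ _ hx, NB_succ _ _ hx]; push_cast; ring)
      (fun x hx => by have := hle x hx; omega)
      (fun x hx => by have := hle x hx; omega)
      (by omega) hne with
      ⟨t, b, htb, hb, hab, hct, hor, hP, hQ⟩ | ⟨z, t, hz, ht, haz, hct, hor, hP, hQ⟩
    · obtain ⟨t, rfl⟩ : ∃ t' : Fin n, t = t'.1 := ⟨⟨t, by omega⟩, rfl⟩
      obtain ⟨b, rfl⟩ : ∃ t' : Fin n, b = t'.1 := ⟨⟨b, by omega⟩, rfl⟩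
      have hb' : lo b ∉ W := iA_nil b |>.1 (by exact_mod_cast hab)
      have ht' : hi t ∉ W := iB_nil t |>.1 (by exact_mod_cast hct)
      refine move_van (nilGL (mt_single htb)) hf W ?_ ?_
      · intro i hi0
        rcases lohi_cases i with ⟨s, rfl⟩ | ⟨s, rfl⟩
        · have : s = t := by by_contra hc; simp [etaGL, hc] at hi0
          simpa [rhoGL, this] using hb'
        · have : s = b := by by_contra hc; simp [etaGL, hc] at hi0
          simpa [rhoGL, this] using ht'
      · have hC := gl_counts (k := k) t b htb W hb' ht' _ rfl
        have hm := imageGL (k := k) (mt_single htb) W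
        generalize W.image (mv (etaGL k {b} {t}) (rhoGL (Equiv.swap t b))) = W' at hC hm ⊢
        have hlt : t.1 < b.1 := htb
        refine fin W' ?_ ?_ ?_ ?_ ?_
        · intro x hx
          have h1 := (hC x hx).1; have h2 := hle x hx; have h3 := nopair_le hW t.1
          refine ⟨?_, by omega⟩
          split_ifs at h1 with hc
          · rcases Nat.eq_zero_or_pos (iA W t.1) with h4 | h4
            · omega
            · have := hP (by omega) x hc.1 hc.2
              omega
          · omega
        · intro x hx
          have h1 := (hC x hx).2; have h2 := hle x hx; have h3 := nopair_le hW b.1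
          refine ⟨?_, by omega⟩
          split_ifs at h1 with hc
          · rcases Nat.eq_zero_or_pos (iB W b.1) with h4 | h4
            · omega
            · have := hQ (by omega) x hc.1 hc.2
              omega
          · omega
        · obtain ⟨h1, h2⟩ := hC n le_rfl
          have := b.2
          rw [if_neg (by omega)] at h1 h2
          omega
        · obtain ⟨h1, h2⟩ := hC b.1 b.2.le
          rw [if_pos (by omega)] at h1 h2
          refine ⟨b.1, b.2.le, ?_⟩
          omega
        · intro s hs hs'
          rw [(hm s).1] at hs; rw [(hm s).2] at hs'
          simp only [Finset.mem_singleton] at hs hs'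
          have := hW s; have := hW t; have := hW b
          rcases hs with ⟨h1, h2⟩ | ⟨rfl, h2⟩
          · rcases hs' with ⟨h3, h4⟩ | ⟨h3, h4⟩ <;> tauto
          · rcases hs' with ⟨h3, h4⟩ | ⟨h3, h4⟩
            · tauto
            · exact absurd (congrArg Fin.val h3) (by omega)
    · obtain ⟨t, rfl⟩ : ∃ t' : Fin n, t = t'.1 := ⟨⟨t, by omega⟩, rfl⟩
      obtain ⟨z, rfl⟩ : ∃ t' : Fin n, z = t'.1 := ⟨⟨z, by omega⟩, rfl⟩
      have hz' : lo z ∈ W := iA_one z |>.1 (by exact_mod_cast haz)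
      have ht' : hi t ∉ W := iB_nil t |>.1 (by exact_mod_cast hct)
      have hor' : z = t ∨ lo t ∉ W := by
        rcases hor with h | h
        · exact Or.inl (Fin.ext h)
        · exact Or.inr (iA_nil t |>.1 (by exact_mod_cast h))
      refine move_van (nilS z t) hf W ?_ ?_
      · intro i hi0
        rcases lohi_cases i with ⟨s, rfl⟩ | ⟨s, rfl⟩
        · have : s = z ∨ s = t := by by_contra hc; simp [etaS, hc] at hi0
          rcases this with rfl | rfl
          · simpa [rhoS] using ht'
          · simpa [rhoS] using hW _ hz'
        · simp [etaS] at hi0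
      · have hC := sym_counts (k := k) z t W hz' ht' hor' _ rfl
        have hm := imageS (k := k) z t W
        generalize W.image (mv (etaS k z t) (rhoS z t)) = W' at hC hm ⊢
        have hz2 := z.2; have ht2 := t.2
        refine fin W' ?_ ?_ ?_ ?_ ?_
        · intro x hx
          have h1 := (hC x hx).1; have h2 := hle x hx
          refine ⟨?_, by omega⟩
          split_ifs at h1 with hc
          · have := hP x hc hx
            omega
          · omega
        · intro x hx
          have h1 := (hC x hx).2; have h2 := hle x hx
          refine ⟨?_, by omega⟩
          split_ifs at h1 with hc
          · have := hQ x hc hx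
            omega
          · omega
        · obtain ⟨h1, h2⟩ := hC n le_rfl
          rw [if_pos (by omega)] at h1 h2
          omega
        · obtain ⟨h1, h2⟩ := hC n le_rfl
          rw [if_pos (by omega)] at h1 h2
          exact ⟨n, le_rfl, by omega⟩
        · intro s hs hs'
          rw [(hm s).1] at hs; rw [(hm s).2] at hs'
          have := hW s
          tauto

/-! ### The envelope of a set -/

/-- The number of elements of `I` below `x`. -/
def cnt (I : Finset (Fin n)) (x : ℕ) : ℕ := (I.filter fun t => t.1 < x).card

theorem cnt_succ (I : Finset (Fin n)) (t : Fin n) :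
    cnt I (t.1+1) = cnt I t.1 + if t ∈ I then 1 else 0 := by
  classical
  have := count_succ (fun s => s ∈ I) t.1 t.2
  unfold cnt
  rw [← Finset.filter_univ_mem I, Finset.filter_filter, Finset.filter_filter, Finset.card_filter,
    Finset.card_filter, this]
  simp

theorem cnt_all (I : Finset (Fin n)) (x : ℕ) (hx : n ≤ x) : cnt I x = I.card := by
  unfold cnt
  rw [Finset.filter_true_of_mem fun t _ => by have := t.2; omega]

theorem cnt_zero (I : Finset (Fin n)) : cnt I 0 = 0 := by simp [cnt]

theorem cnt_mono (I : Finset (Fin n)) {x y : ℕ} (h : x ≤ y) : cnt I x ≤ cnt I y := by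
  unfold cnt
  refine Finset.card_le_card fun t ht => ?_
  simp only [Finset.mem_filter] at ht ⊢
  exact ⟨ht.1, by omega⟩

theorem cnt_erase (I : Finset (Fin n)) (t : Fin n) (ht : t ∈ I) (x : ℕ) :
    cnt (I.erase t) x + (if t.1 < x then 1 else 0) = cnt I x := by
  unfold cnt
  rw [Finset.filter_erase]
  split_ifs with h
  · exact Finset.card_erase_add_one (by simp [ht, h])
  · rw [Finset.erase_eq_of_notMem (by simp [h]), add_zero]

/-- A dominated pair of disjoint sets of the same size admits a matching sending each element of
`I'` to a larger element of `I`. -/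
theorem matching (m : ℕ) (I I' : Finset (Fin n)) (hm : I.card = m) (hm' : I'.card = m)
    (hdis : ∀ t ∈ I, t ∉ I') (hdom : ∀ x ≤ n, cnt I x ≤ cnt I' x) : ∃ κ, Mt I I' κ := by
  induction m generalizing I I' with
  | zero =>
    rw [Finset.card_eq_zero] at hm hm'
    subst hm hm'
    exact ⟨id, by simp, by simp⟩
  | succ m ih =>
    obtain ⟨b, hb, hbmax⟩ := I.exists_max_image id (Finset.card_pos.1 (by omega))
    obtain ⟨t, ht, htmax⟩ := I'.exists_max_image id (Finset.card_pos.1 (by omega))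
    simp only [id] at hbmax htmax
    have e1 : cnt I (b.1+1) = m+1 := by
      rw [← hm]; unfold cnt
      rw [Finset.filter_true_of_mem fun s hs => by have : s.1 ≤ b.1 := hbmax s hs; omega]
    have e2 := hdom (b.1+1) b.2
    have e3 : ∀ s ∈ I', s.1 < b.1+1 := by
      have : (I'.filter fun s => s.1 < b.1+1) = I' :=
        Finset.eq_of_subset_of_card_le (Finset.filter_subset _ _) (by unfold cnt at e1 e2; omega)
      intro s hs
      rw [← this] at hs
      exact (Finset.mem_filter.1 hs).2
    have htb : t < b := lt_of_le_of_ne (by have := e3 t ht; exact Fin.le_def.2 (by omega))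
      fun h => hdis b hb (h ▸ ht)
    obtain ⟨κ, h1, h2⟩ := ih (I.erase b) (I'.erase t) (by rw [Finset.card_erase_of_mem hb]; omega)
      (by rw [Finset.card_erase_of_mem ht]; omega)
      (fun s hs hs' => hdis s (Finset.mem_of_mem_erase hs) (Finset.mem_of_mem_erase hs'))
      (by
        intro x hx
        have a1 := cnt_erase I b hb x; have a2 := cnt_erase I' t ht x
        have a3 := hdom x hx
        have hlt : t.1 < b.1 := htb
        split_ifs at a1 a2 with c1 c2
        · omega
        · omega
        · have a4 : cnt I x ≤ cnt I b.1 := cnt_mono I (by omega)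
          have a5 := cnt_succ I b
          rw [if_pos hb] at a5
          have a6 : cnt I' (t.1+1) = m + 1 := by
            rw [← hm']; unfold cnt
            rw [Finset.filter_true_of_mem fun s hs => by have : s.1 ≤ t.1 := htmax s hs; omega]
          have a7 : cnt I' (t.1+1) ≤ cnt I' x := cnt_mono I' (by omega)
          omega
        · omega)
    refine ⟨Function.update (Function.update κ t b) b t, ?_, ?_⟩
    · intro s hs
      by_cases hst : s = t
      · subst hst
        rw [Function.update_of_ne htb.ne, Function.update_self, Function.update_self]
        exact ⟨hb, htb, rfl⟩
      · have hsb : s ≠ b := fun h => hdis b hb (h ▸ hs)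
        obtain ⟨q1, q2, q3⟩ := h1 s (Finset.mem_erase.2 ⟨hst, hs⟩)
        have q4 := Finset.mem_erase.1 q1
        rw [Function.update_of_ne hsb, Function.update_of_ne hst, Function.update_of_ne q4.1,
          Function.update_of_ne fun h : κ s = t => hdis _ q4.2 (by rw [h]; exact ht)]
        exact ⟨q4.2, q2, q3⟩
    · intro s hs
      by_cases hsb : s = b
      · subst hsb
        rw [Function.update_self, Function.update_of_ne htb.ne, Function.update_self]
        exact ⟨ht, htb, rfl⟩
      · have hst : s ≠ t := fun h => hdis s hs (h ▸ ht)
        obtain ⟨q1, q2, q3⟩ := h2 s (Finset.mem_erase.2 ⟨hsb, hs⟩)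
        have q4 := Finset.mem_erase.1 q1
        rw [Function.update_of_ne hsb, Function.update_of_ne hst,
          Function.update_of_ne fun h : κ s = b => hdis b hb (by rw [← h]; exact q4.2), Function.update_of_ne q4.1]
        exact ⟨q4.2, q2, q3⟩

open Classical in
/-- The subset of indices whose lower and upper halves are `A` and `B`. -/
noncomputable def mk (A B : Finset (Fin n)) : Finset (Fin (2*n)) :=
  Finset.univ.filter fun i => lh (· ∈ A) (· ∈ B) i

@[simp] theorem mk_lo (A B : Finset (Fin n)) (t : Fin n) : lo t ∈ mk A B ↔ t ∈ A := by simp [mk]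
@[simp] theorem mk_hi (A B : Finset (Fin n)) (t : Fin n) : hi t ∈ mk A B ↔ t ∈ B := by simp [mk]

theorem NA_cnt (S : Finset (Fin (2*n))) (A : Finset (Fin n)) (h : ∀ t, lo t ∈ S ↔ t ∈ A) (x : ℕ) (hx : x ≤ n) :
    NA S x = cnt A x := by
  induction x with
  | zero => rw [NA_zero, cnt_zero]
  | succ x ih =>
    rw [NA_succ _ _ hx, ih (by omega), cnt_succ A ⟨x, hx⟩, iA_eq S ⟨x, hx⟩]
    simp only [h]

theorem NB_cnt (S : Finset (Fin (2*n))) (A : Finset (Fin n)) (h : ∀ t, hi t ∈ S ↔ t ∈ A) (x : ℕ) (hx : x ≤ n) :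
    NB S x = cnt A x := by
  induction x with
  | zero => rw [NB_zero, cnt_zero]
  | succ x ih =>
    rw [NB_succ _ _ hx, ih (by omega), cnt_succ A ⟨x, hx⟩, iB_eq S ⟨x, hx⟩]
    simp only [h]

set_option maxHeartbeats 1000000 in
/-- For a set `S` with `ht S ≤ 0`, there are a pair-free set `φ` whose height function is the
upper envelope of `ht S` and a matching `κ` between the pairs `I` of `S` and part `I'` of the
indices absent from `S`, such that moving `φ` along `κ` produces a pair-free `τ` having the
counting function `NA` of `S`; explicitly, `H x` is the maximum of `ht S` over `[x, n]`. -/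
theorem envelope (S : Finset (Fin (2*n))) (h0 : ∀ y ≤ n, ht S y ≤ 0) :
    ∃ (φ τ : Finset (Fin (2*n))) (I I' : Finset (Fin n)) (κ : Fin n → Fin n) (H : ℕ → ℤ),
      (∀ x y, x ≤ y → y ≤ n → ht S y ≤ H x) ∧ (∀ x ≤ n, ∃ y, x ≤ y ∧ y ≤ n ∧ H x = ht S y) ∧
      Mt I I' κ ∧ (∀ t, t ∈ I ↔ lo t ∈ S ∧ hi t ∈ S) ∧
      NoPair φ ∧ φ.card = S.card ∧ (∀ t, hi t ∈ φ ↔ hi t ∈ S) ∧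
      (∀ t, lo t ∈ φ ↔ t ∈ I' ∨ (lo t ∈ S ∧ hi t ∉ S)) ∧ (∀ t ∈ I', lo t ∉ S ∧ hi t ∉ S) ∧
      (∀ x ≤ n, NB φ x = NB S x) ∧
      (∀ x ≤ n, ht φ x = H x) ∧ NoPair τ ∧ τ.card = S.card ∧
      (∀ x ≤ n, NA τ x = NA S x) ∧ (∀ x ≤ n, (NB τ x : ℤ) = x - NA S x + H x) ∧
      τ = φ.image (mv (etaGL k I I') (rhoGL κ)) := by
  classical
  have hH : ∀ x, ∃ y, x ≤ n → (x ≤ y ∧ y ≤ n ∧ ∀ z, x ≤ z → z ≤ n → ht S z ≤ ht S y) := by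
    intro x
    by_cases hx : x ≤ n
    · obtain ⟨y, hy, hy'⟩ := (Finset.Icc x n).exists_max_image (ht S) ⟨x, by simp [hx]⟩
      rw [Finset.mem_Icc] at hy
      exact ⟨y, fun _ => ⟨hy.1, hy.2, fun z h1 h2 => hy' z (Finset.mem_Icc.2 ⟨h1, h2⟩)⟩⟩
    · exact ⟨0, fun h => absurd h hx⟩
  choose Y hY using hH
  let H : ℕ → ℤ := fun x => ht S (Y x)
  have H1 : ∀ x y, x ≤ y → y ≤ n → ht S y ≤ H x := fun x y h h' => (hY x (h.trans h')).2.2 y h h'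
  have H2 : ∀ x ≤ n, ∃ y, x ≤ y ∧ y ≤ n ∧ H x = ht S y := fun x h => ⟨Y x, (hY x h).1, (hY x h).2.1, rfl⟩
  have hs : ∀ t : Fin n, ht S (t.1+1) = ht S t.1 + (if lo t ∈ S then 1 else 0) + (if hi t ∈ S then 1 else 0) - 1 := by
    intro t
    unfold ht
    rw [NA_succ _ _ t.2, NB_succ _ _ t.2, iA_eq, iB_eq]
    push_cast; ring
  -- the envelope drops exactly at the indices outside `A' ∪ B`
  let A' : Finset (Fin n) := Finset.univ.filter fun t => hi t ∉ S ∧ ht S t.1 ≤ H (t.1+1)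
  let B : Finset (Fin n) := Finset.univ.filter fun t => hi t ∈ S
  let I : Finset (Fin n) := Finset.univ.filter fun t => lo t ∈ S ∧ hi t ∈ S
  let I' : Finset (Fin n) := Finset.univ.filter fun t => t ∈ A' ∧ lo t ∉ S
  have hA' : ∀ t, t ∈ A' ↔ hi t ∉ S ∧ ht S t.1 ≤ H (t.1+1) := fun t => by simp [A']
  have hB : ∀ t, t ∈ B ↔ hi t ∈ S := fun t => by simp [B]
  have hI : ∀ t, t ∈ I ↔ lo t ∈ S ∧ hi t ∈ S := fun t => by simp [I]
  have hI' : ∀ t, t ∈ I' ↔ t ∈ A' ∧ lo t ∉ S := fun t => by simp [I']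
  have hloA : ∀ t, lo t ∈ S → hi t ∉ S → t ∈ A' := by
    intro t h1 h2
    refine (hA' t).2 ⟨h2, ?_⟩
    have := hs t; have := H1 (t.1+1) (t.1+1) le_rfl t.2
    rw [if_pos h1, if_neg h2] at *
    omega
  have Hs : ∀ t : Fin n, H (t.1+1) = H t.1 + (if t ∈ A' then 1 else 0) + (if t ∈ B then 1 else 0) - 1 := by
    intro t
    obtain ⟨y, y1, y2, y3⟩ := H2 t.1 t.2.le
    obtain ⟨z, z1, z2, z3⟩ := H2 (t.1+1) t.2
    have e1 := H1 t.1 z (by omega) z2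
    have e2 := H1 t.1 t.1 le_rfl t.2.le
    have e3 := H1 (t.1+1) (t.1+1) le_rfl t.2
    have e4 := hs t
    have e5 : y = t.1 ∨ H t.1 ≤ H (t.1+1) := by
      rcases y1.eq_or_lt with h | h
      · exact Or.inl h.symm
      · exact Or.inr (y3 ▸ H1 (t.1+1) y h y2)
    have e6 : H t.1 = ht S t.1 ∨ H t.1 ≤ H (t.1+1) := e5.imp_left fun h => by rw [y3, h]
    simp only [hA', hB]
    by_cases hb : hi t ∈ S
    · simp only [hb, not_true, false_and, if_true, if_false] at e4 ⊢
      split_ifs at e4 <;> omega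
    · simp only [hb, not_false_eq_true, true_and, if_false] at e4 ⊢
      split_ifs at e4 ⊢ <;> omega
  have H0 : H 0 = 0 := by
    obtain ⟨y, y1, y2, y3⟩ := H2 0 (Nat.zero_le _)
    have e1 := h0 y y2; have e2 := H1 0 0 le_rfl (Nat.zero_le _)
    have : ht S 0 = 0 := by simp [ht, NA_zero, NB_zero]
    omega
  have Hn : H n = ht S n := by
    obtain ⟨y, y1, y2, y3⟩ := H2 n le_rfl
    rw [y3, le_antisymm y2 y1]
  have key : ∀ x ≤ n, (cnt A' x : ℤ) + cnt B x - x = H x ∧ (cnt I' x : ℤ) = cnt I x + (H x - ht S x) := by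
    intro x
    induction x with
    | zero => intro _; simp [cnt_zero, H0, ht, NA_zero, NB_zero]
    | succ x ih =>
      intro hx
      obtain ⟨i1, i2⟩ := ih (by omega)
      have e1 := Hs ⟨x, hx⟩; have e2 := hs ⟨x, hx⟩
      have e3 := cnt_succ A' ⟨x, hx⟩; have e4 := cnt_succ B ⟨x, hx⟩
      have e5 := cnt_succ I ⟨x, hx⟩; have e6 := cnt_succ I' ⟨x, hx⟩
      simp only at e1 e2 e3 e4 e5 e6
      have e7 := hI ⟨x, hx⟩; have e8 := hI' ⟨x, hx⟩; have e9 := hB ⟨x, hx⟩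
      have e10 := hloA ⟨x, hx⟩; have e11 := (hA' ⟨x, hx⟩).1
      rw [e1, e2, e3, e4, e5, e6]
      simp only [e7, e8, e9]
      push_cast
      by_cases c1 : lo (⟨x, hx⟩ : Fin n) ∈ S <;> by_cases c2 : hi (⟨x, hx⟩ : Fin n) ∈ S <;>
        by_cases c3 : (⟨x, hx⟩ : Fin n) ∈ A' <;> simp [c1, c2, c3] at e10 e11 ⊢ <;> omega
  have hNB : ∀ x ≤ n, NB S x = cnt B x := fun x hx => NB_cnt S B (fun t => (hB t).symm) x hx
  have hcard : I'.card = I.card := by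
    have := (key n le_rfl).2
    rw [cnt_all _ _ le_rfl, cnt_all _ _ le_rfl, Hn] at this
    omega
  obtain ⟨κ, hκ⟩ := matching I.card I I' rfl hcard
    (fun t h1 h2 => ((hI' t).1 h2).2 ((hI t).1 h1).1)
    (fun x hx => by have := (key x hx).2; have := H1 x x le_rfl hx; omega)
  have hm := imageGL (k := k) hκ (mk A' B)
  refine ⟨mk A' B, _, I, I', κ, H, H1, H2, hκ, hI, ?_, ?_, ?_, ?_, ?_, ?_, ?_, ?_, ?_, ?_, ?_, rfl⟩
  · intro t h1 h2
    rw [mk_lo] at h1; rw [mk_hi] at h2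
    exact ((hA' t).1 h1).1 ((hB t).1 h2)
  · rw [← card_eq, ← card_eq, NA_cnt _ A' (mk_lo A' B) n le_rfl, NB_cnt _ B (mk_hi A' B) n le_rfl]
    have := (key n le_rfl).1
    rw [Hn, ht, hNB n le_rfl] at this
    rw [hNB n le_rfl]
    omega
  · intro t; rw [mk_hi, hB]
  · intro t
    rw [mk_lo, hI']
    have := hloA t; have := (hA' t).1
    tauto
  · intro t h
    have h1 := (hI' t).1 h
    exact ⟨h1.2, ((hA' t).1 h1.1).1⟩
  · intro x hx; rw [hNB x hx, NB_cnt _ B (mk_hi A' B) x hx]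
  · intro x hx
    rw [ht, NA_cnt _ A' (mk_lo A' B) x hx, NB_cnt _ B (mk_hi A' B) x hx]
    exact (key x hx).1
  all_goals
    have hlo : ∀ s, lo s ∈ (mk A' B).image (mv (etaGL k I I') (rhoGL κ)) ↔ lo s ∈ S := by
      intro s
      rw [(hm s).1, mk_lo, mk_lo, hI', hI]
      have e1 := fun h => (hI' _).1 (hκ.2 s h).1
      rw [hI] at e1
      have := hloA s; have := (hA' s).1
      tauto
    have hhi : ∀ s, hi s ∈ (mk A' B).image (mv (etaGL k I I') (rhoGL κ)) ↔ s ∈ (B \ I) ∪ I' := by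
      intro s
      rw [(hm s).2, mk_hi, mk_hi, Finset.mem_union, Finset.mem_sdiff]
      have e1 := fun h => (hI _).1 (hκ.1 s h).1
      have e2 := hB (κ s)
      tauto
    have hcn : ∀ x, cnt ((B \ I) ∪ I') x + cnt I x = cnt B x + cnt I' x := by
      intro x
      have d1 : Disjoint (B \ I) I' := Finset.disjoint_left.2 fun s h1 h2 =>
        ((hA' s).1 ((hI' s).1 h2).1).1 ((hB s).1 (Finset.mem_sdiff.1 h1).1)
      have d2 : I ⊆ B := fun s h => (hB s).2 ((hI s).1 h).2
      unfold cnt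
      rw [Finset.filter_union, Finset.card_union_of_disjoint (Finset.disjoint_filter_filter d1),
        ← Finset.sdiff_union_of_subset d2, Finset.filter_union,
        Finset.card_union_of_disjoint (Finset.disjoint_filter_filter Finset.sdiff_disjoint)]
      simp only [Finset.sdiff_union_of_subset d2]
      omega
    generalize (mk A' B).image (mv (etaGL k I I') (rhoGL κ)) = τ at hlo hhi ⊢
  · intro s h1 h2
    rw [hlo] at h1; rw [hhi, Finset.mem_union, Finset.mem_sdiff, hI, hB, hI'] at h2
    tauto
  · rw [← card_eq, ← card_eq, NB_cnt _ _ hhi n le_rfl, hNB n le_rfl,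
      NA_cnt τ (Finset.univ.filter fun t => lo t ∈ S) (by simpa using hlo) n le_rfl,
      NA_cnt S (Finset.univ.filter fun t => lo t ∈ S) (by simp) n le_rfl]
    have := hcn n
    rw [cnt_all I _ le_rfl, cnt_all I' _ le_rfl] at this
    omega
  · intro x hx
    rw [NA_cnt τ (Finset.univ.filter fun t => lo t ∈ S) (by simpa using hlo) x hx,
      NA_cnt S (Finset.univ.filter fun t => lo t ∈ S) (by simp) x hx]
  · intro x hx
    rw [NB_cnt _ _ hhi x hx]
    have e1 := hcn x; have e2 := (key x hx).2
    rw [ht, hNB x hx] at e2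
    omega

/-! ### Minors of unitriangular frames -/

theorem ev_zero (m : ℕ) (c : List (Finset (Fin (2*n))) → k) (hc : ∀ L, L.length = m → c L = 0)
    (M : Matrix (Fin (2*n)) (Fin d) k) : ev m c M = 0 := by
  induction m generalizing c with
  | zero => exact hc [] rfl
  | succ m ih =>
    rw [ev]
    exact Finset.sum_eq_zero fun S _ => by rw [ih _ fun L hL => hc _ (by simp [hL]), mul_zero]

/-- Plücker coordinates are additive in each column. -/
theorem plucker_upd (f : Fin d → Fin (2*n) → k) (l : Fin d) (u v : Fin (2*n) → k) (S : Finset (Fin (2*n))) :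
    pluckerS (colM (Function.update f l (u + v))) S =
      pluckerS (colM (Function.update f l u)) S + pluckerS (colM (Function.update f l v)) S := by
  unfold pluckerS
  split_ifs with hS
  swap
  · simp
  have key : ∀ x : Fin (2*n) → k, (colM (Function.update f l x)).submatrix
      (fun a => (S.orderIsoOfFin hS a : Fin (2*n))) id =
      ((colM f).submatrix (fun a => (S.orderIsoOfFin hS a : Fin (2*n))) id).updateCol l
        (fun a => x (S.orderIsoOfFin hS a)) := by
    intro x
    ext a c
    rw [Matrix.updateCol_apply]
    simp only [Matrix.submatrix_apply, colM, Function.update_apply, id]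
    split_ifs <;> rfl
  rw [key, key, key, ← Matrix.det_updateCol_add]
  rfl

theorem plucker_scale (f : Fin d → Fin (2*n) → k) (a : Fin d → k) (S : Finset (Fin (2*n))) :
    pluckerS (colM fun l => a l • f l) S = (∏ l, a l) * pluckerS (colM f) S := by
  have : colM (fun l => a l • f l) = (colM f * Matrix.diagonal a : Matrix (Fin (2*n)) (Fin d) k) := by
    ext i l
    rw [Matrix.mul_diagonal]
    simp [colM, mul_comm]
  rw [this, pluckerS_mul, Matrix.det_diagonal, mul_comm]

/-- The summands `g` of the columns in `K` may be dropped from a minor, provided it vanishes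
whenever one such column is replaced by its summand `g` and some of the others are kept in full. -/
theorem drop_cols (S : Finset (Fin (2*n))) (g h : Fin d → Fin (2*n) → k) (K : Finset (Fin d))
    (hz : ∀ K' : Finset (Fin d), ∀ l ∈ K, l ∉ K' → K' ⊆ K →
      pluckerS (colM (Function.update (fun l => if l ∈ K' then g l + h l else h l) l (g l))) S = 0) :
    pluckerS (colM fun l => if l ∈ K then g l + h l else h l) S = pluckerS (colM h) S := by
  suffices H : ∀ K' ⊆ K, pluckerS (colM fun l => if l ∈ K' then g l + h l else h l) S =
      pluckerS (colM h) S from H K subset_rfl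
  intro K'
  induction K' using Finset.induction_on with
  | empty => simp
  | insert l K' hl ih =>
    intro hK
    have hK' := (Finset.subset_insert l K').trans hK
    have e : (fun l' => if l' ∈ insert l K' then g l' + h l' else h l') =
        Function.update (fun l => if l ∈ K' then g l + h l else h l) l (g l + h l) := by
      funext l'
      by_cases hll : l' = l
      · subst hll; simp
      · rw [Function.update_of_ne hll]; simp [hll]
    rw [e, plucker_upd, hz K' l (hK (Finset.mem_insert_self _ _)) hl hK', zero_add, ← ih hK']
    congr 2
    funext l'
    by_cases hll : l' = l
    · subst hll; simp [hl]
    · rw [Function.update_of_ne hll]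

theorem cols_card (w : Fin d → Fin (2*n)) (hw : Function.Injective w) (x : ℕ) :
    (Finset.univ.filter fun l => (w l).1 < x).card = NA (Finset.univ.image w) x := by
  classical
  rw [← card_NA, ← Finset.card_image_of_injective _ hw]
  congr 1
  ext i
  simp only [Finset.mem_image, Finset.mem_filter, Finset.mem_univ, true_and, Finset.mem_inter]
  constructor
  · rintro ⟨l, h, rfl⟩; exact ⟨⟨l, rfl⟩, h⟩
  · rintro ⟨⟨l, rfl⟩, h⟩; exact ⟨l, h, rfl⟩

/-- Support conditions on the columns bound the lower counts of a nonvanishing minor. -/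
theorem supp_le (w : Fin d → Fin (2*n)) (hw : Function.Injective w) (M : Matrix (Fin (2*n)) (Fin d) k)
    (S : Finset (Fin (2*n))) (hS : pluckerS M S ≠ 0)
    (hM : ∀ l i, (w l).1 < n → (w l).1 < i.1 → M i l = 0) (x : ℕ) (hx : x ≤ n) :
    NA (Finset.univ.image w) x ≤ NA S x := by
  rw [← cols_card w hw]
  refine triA M S x _ (fun l hl i hi => ?_) hS
  have := (Finset.mem_filter.1 hl).2
  exact hM l i (by omega) (by omega)

/-- Strict version of `supp_le`, when one column also vanishes in its own leading row. -/
theorem supp_lt (w : Fin d → Fin (2*n)) (hw : Function.Injective w) (M : Matrix (Fin (2*n)) (Fin d) k)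
    (S : Finset (Fin (2*n))) (hS : pluckerS M S ≠ 0)
    (hM : ∀ l i, (w l).1 < n → (w l).1 < i.1 → M i l = 0) (l0 : Fin d) (h0 : (w l0).1 < n)
    (hl0 : ∀ i, (w l0).1 ≤ i.1 → M i l0 = 0) :
    NA (Finset.univ.image w) (w l0).1 < NA S (w l0).1 := by
  classical
  rw [← cols_card w hw, Nat.lt_iff_add_one_le, ← Finset.card_insert_of_notMem (a := l0) (by simp)]
  refine triA M S _ _ (fun l hl i hi => ?_) hS
  rcases Finset.mem_insert.1 hl with rfl | hl
  · exact hl0 i hi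
  · have := (Finset.mem_filter.1 hl).2
    exact hM l i (by omega) (by omega)

theorem unip_bv_lo {b : (Fin (2*n) → k) →ₗ[k] (Fin (2*n) → k)} (hb : Unip b) {i j : Fin (2*n)}
    (hj : j.1 < n) (h : j.1 < i.1) : b (bv k j) i = 0 := by
  refine unip_bv hb ?_
  unfold pos
  have := i.2
  split_ifs <;> omega

/-- A nonvanishing minor of a unitriangular frame dominates the leading one. -/
theorem lead_le {b : (Fin (2*n) → k) →ₗ[k] (Fin (2*n) → k)} (hb : Unip b) (w : Fin d → Fin (2*n))
    (hw : Function.Injective w) (S : Finset (Fin (2*n)))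
    (hS : pluckerS (colM fun l => b (bv k (w l))) S ≠ 0) : leS S (Finset.univ.image w) := by
  classical
  intro x hx
  refine ⟨supp_le w hw _ S hS (fun l i h1 h2 => unip_bv_lo hb h1 h2) x hx, ?_⟩
  have h1 := triB _ S x (Finset.univ.filter fun l => ¬ (n ≤ (w l).1 ∧ (w l).1 < n + x)) (fun l hl i h1 h2 => ?_) hS
  · have h2 := Finset.card_filter_add_card_filter_not (s := (Finset.univ : Finset (Fin d)))
      (fun l => n ≤ (w l).1 ∧ (w l).1 < n + x)
    have h3 : (Finset.univ.filter fun l => n ≤ (w l).1 ∧ (w l).1 < n + x).card = NB (Finset.univ.image w) x := by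
      rw [NB, ← Finset.card_filter, Finset.filter_image, Finset.card_image_of_injective _ hw]
    simp only [Finset.card_univ, Fintype.card_fin] at h2
    omega
  · have := (Finset.mem_filter.1 hl).2
    refine unip_bv hb ?_
    unfold pos
    have := i.2; have := (w l).2
    split_ifs <;> omega

/-! ### Isolating the extremal head -/

theorem inj_of_card (w : Fin d → Fin (2*n)) (h : (Finset.univ.image w).card = d) : Function.Injective w := by
  rw [← Set.injOn_univ, ← Finset.coe_univ, ← Finset.card_image_iff, h]; simp

/-- The analytic core of the independence argument. Along the curve attached to the envelope of the
extremal head `S0`, the minors `P_S` for all occurring heads are divisible by `s` to the number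
of columns moving within the lower half. After division by this power and `s → 0`, only the products
beginning with `S0` survive, and their tails are left evaluated on the cell of `φ`. -/
theorem extract [Infinite k] (m : ℕ) (c : List (Finset (Fin (2*n))) → k) (S0 φ : Finset (Fin (2*n)))
    (I I' : Finset (Fin n)) (κ : Fin n → Fin n) (hκ : Mt I I' κ)
    (hI : ∀ t, t ∈ I ↔ lo t ∈ S0 ∧ hi t ∈ S0) (hφc : φ.card = d) (hS0 : S0.card = d)
    (hφhi : ∀ t, hi t ∈ φ ↔ hi t ∈ S0) (hφlo : ∀ t, lo t ∈ φ ↔ t ∈ I' ∨ (lo t ∈ S0 ∧ hi t ∉ S0))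
    (hI' : ∀ t ∈ I', lo t ∉ S0 ∧ hi t ∉ S0)
    (hmax : ∀ S, (∃ L, L.length = m ∧ c (S :: L) ≠ 0) →
      ∑ x ∈ Finset.range (n+1), NA S x ≤ ∑ x ∈ Finset.range (n+1), NA S0 x)
    (hmax' : ∀ S, (∃ L, L.length = m ∧ c (S :: L) ≠ 0) → leS S S0 → S = S0)
    (hv : VanS (ev (d := d) (m+1) c) (φ.image (mv (etaGL k I I') (rhoGL κ)))) :
    VanS (ev (d := d) m fun L => c (S0 :: L)) φ := by
  classical
  rintro w hw b hb
  have hwinj : Function.Injective w := inj_of_card w (by rw [hw, hφc])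
  -- `θ` performs only the lower half of the move
  let θ : Fin (2*n) → Fin (2*n) := lh (fun t => if t ∈ I' then lo (κ t) else lo t) hi
  have hdis : ∀ t ∈ I, t ∉ I' := fun t h h' => (hI' t h').1 ((hI t).1 h).1
  have hθ : φ.image θ = S0 := by
    ext i
    rw [Finset.mem_image]
    constructor
    · rintro ⟨j, hj, rfl⟩
      rcases lohi_cases j with ⟨t, rfl⟩ | ⟨t, rfl⟩
      · simp only [θ, lh_lo]
        split_ifs with h
        · exact ((hI _).1 (hκ.1 t h).1).1
        · exact (((hφlo t).1 hj).resolve_left h).1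
      · simpa [θ] using (hφhi t).1 hj
    · intro hi0
      rcases lohi_cases i with ⟨t, rfl⟩ | ⟨t, rfl⟩
      · by_cases h : t ∈ I
        · refine ⟨lo (κ t), (hφlo _).2 (Or.inl (hκ.2 t h).1), ?_⟩
          simp [θ, (hκ.2 t h).1, (hκ.2 t h).2.2]
        · have h2 : hi t ∉ S0 := fun h2 => h ((hI t).2 ⟨hi0, h2⟩)
          refine ⟨lo t, (hφlo _).2 (Or.inr ⟨hi0, h2⟩), ?_⟩
          have : t ∉ I' := fun h' => (hI' t h').1 hi0
          simp [θ, this]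
      · exact ⟨hi t, (hφhi t).2 hi0, by simp [θ]⟩
  let w' : Fin d → Fin (2*n) := θ ∘ w
  have hw' : Finset.univ.image w' = S0 := by rw [← hθ, ← hw, Finset.image_image]
  have hw'inj : Function.Injective w' := inj_of_card w' (by rw [hw', hS0])
  let η := etaGL k I I'
  let ρ := rhoGL κ (n := n)
  let Mv : Finset (Fin d) := Finset.univ.filter fun l => ∃ t ∈ I', w l = lo t
  have hMv : ∀ l ∈ Mv, η (w l) = 1 ∧ ρ (w l) = w' l ∧ (w l).1 < (w' l).1 ∧ (w' l).1 < n := by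
    intro l hl
    obtain ⟨t, ht, e⟩ := (Finset.mem_filter.1 hl).2
    have h1 := (hκ.1 t ht).2.1
    simp [η, ρ, w', θ, e, etaGL, rhoGL, ht, h1]
  have hnMv : ∀ l, l ∉ Mv → w' l = w l ∧ ((w l).1 < n → η (w l) = 0) ∧ (n ≤ (w l).1 → n ≤ (ρ (w l)).1) := by
    intro l hl
    rcases lohi_cases (w l) with ⟨t, e⟩ | ⟨t, e⟩
    · have ht : t ∉ I' := fun ht => hl (by simp only [Mv, Finset.mem_filter]; exact ⟨Finset.mem_univ _, t, ht, e⟩)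
      simp [η, ρ, w', θ, e, etaGL, rhoGL, ht]
    · simp [η, ρ, w', θ, e, etaGL, rhoGL]
  -- the curve `Z0 + s Z1`, and the curve `N0 + s N1` obtained from it by discarding `b e_{w l}` in the
  -- columns `l ∈ Mv` and dividing these columns by `s`
  let Z0 : Fin d → Fin (2*n) → k := fun l => b (bv k (w l))
  let Z1 : Fin d → Fin (2*n) → k := fun l => η (w l) • b (bv k (ρ (w l)))
  let N0 : Fin d → Fin (2*n) → k := fun l => b (bv k (w' l))
  let N1 : Fin d → Fin (2*n) → k := fun l => if l ∈ Mv then 0 else η (w l) • b (bv k (ρ (w l)))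
  have hZ : ∀ s : k, s ≠ 0 → ev (m+1) c (colM Z0 + s • colM Z1) = 0 := by
    intro s hs
    have := curve_ne (nilGL (k := k) hκ) (ev_nice (m+1) c) w ?_ (fun l => mv η ρ (w l)) ?_ ?_ ?_ b hb s hs
    · rw [← this]
      congr 1
      ext i l
      simp [colM, Z0, Z1, η, ρ, mul_assoc]
    · intro i hi0 l e
      have hl : ρ i ∈ φ := by rw [← hw]; exact Finset.mem_image.2 ⟨l, Finset.mem_univ _, e⟩
      rcases lohi_cases i with ⟨t, rfl⟩ | ⟨t, rfl⟩
      · have ht : t ∈ I' := by by_contra hc; simp [etaGL, hc] at hi0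
        simp only [ρ, rhoGL, lh_lo, hφlo] at hl
        have h1 := (hκ.1 t ht).1
        have h2 := (hI _).1 h1
        exact hl.elim (hdis _ h1) fun h => h.2 h2.2
      · have ht : t ∈ I := by by_contra hc; simp [etaGL, hc] at hi0
        simp only [ρ, rhoGL, lh_hi, hφhi] at hl
        exact (hI' _ (hκ.2 t ht).1).2 hl
    · intro l h; simp [mv, η, h]
    · intro l h; simp only [mv, η]; rw [if_neg h]
    · exact hv _ (by rw [← hw, Finset.image_image]; rfl)
  -- heads compare with `S0`; the other coefficients vanish
  have hnull : ∀ S, (¬ ∃ L, L.length = m ∧ c (S :: L) ≠ 0) → ∀ M : Matrix (Fin (2*n)) (Fin d) k,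
      ev m (fun L => c (S :: L)) M = 0 := by
    intro S hS M
    exact ev_zero m _ (fun L hL => by by_contra h; exact hS ⟨L, hL, h⟩) M
  have hdiv : ∀ s : k, ∀ S, (∃ L, L.length = m ∧ c (S :: L) ≠ 0) →
      pluckerS (colM Z0 + s • colM Z1) S = s ^ Mv.card * pluckerS (colM N0 + s • colM N1) S := by
    intro s S hS
    have e1 : colM Z0 + s • colM Z1 = colM fun l => if l ∈ Mv then (fun l => b (bv k (w l))) l +
        (fun l => (if l ∈ Mv then s else 1) • (N0 l + s • N1 l)) l else
        (fun l => (if l ∈ Mv then s else 1) • (N0 l + s • N1 l)) l := by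
      ext i l
      by_cases hl : l ∈ Mv
      · obtain ⟨h1, h2, -⟩ := hMv l hl
        simp [colM, hl, Z0, Z1, N0, N1, h1, h2]
      · obtain ⟨h1, -⟩ := hnMv l hl
        simp [colM, hl, Z0, Z1, N0, N1, h1]
    rw [e1, drop_cols, plucker_scale, Finset.prod_ite_mem, Finset.univ_inter, Finset.prod_const]
    · rfl
    intro K' l hl hlK hK
    by_contra hne
    obtain ⟨-, -, h3, h4⟩ := hMv l hl
    -- all columns are supported as for `S0`, and column `l` even strictly better
    have hsup : ∀ l' i, (w' l').1 < n → (w' l').1 < i.1 →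
        colM (Function.update (fun l => if l ∈ K' then (fun l => b (bv k (w l))) l +
          (fun l => (if l ∈ Mv then s else 1) • (N0 l + s • N1 l)) l else
          (fun l => (if l ∈ Mv then s else 1) • (N0 l + s • N1 l)) l) l (b (bv k (w l)))) i l' = 0 := by
      intro l' i q1 q2
      have z0 : b (bv k (w' l')) i = 0 := unip_bv_lo hb q1 q2
      have z1 : N1 l' i = 0 := by
        simp only [N1]
        split_ifs with hm
        · rfl
        · obtain ⟨r1, r2, -⟩ := hnMv l' hm
          rw [r2 (by rw [← r1]; exact q1)]; simp
      have z2 : l' ∈ Mv → b (bv k (w l')) i = 0 := by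
        intro hm
        obtain ⟨-, -, r3, -⟩ := hMv l' hm
        exact unip_bv_lo hb (by omega) (by omega)
      simp only [colM, Function.update_apply]
      by_cases c1 : l' = l
      · rw [if_pos c1, ← c1]; exact z2 (c1 ▸ hl)
      · rw [if_neg c1]
        by_cases c2 : l' ∈ K'
        · rw [if_pos c2]; simp only [Pi.add_apply, Pi.smul_apply, N0, z0, z1, z2 (hK c2), smul_zero, add_zero]
        · rw [if_neg c2]; simp only [Pi.add_apply, Pi.smul_apply, N0, z0, z1, smul_zero, add_zero]
    have hle := supp_le w' hw'inj _ S hne hsup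
    have hlt := supp_lt w' hw'inj _ S hne hsup l h4 (fun i hi0 => by
      simp only [colM, Function.update_self]
      exact unip_bv_lo hb (by omega) (by omega))
    rw [hw'] at hle hlt
    refine absurd (hmax S hS) (not_le.2 (Finset.sum_lt_sum (fun x hx => hle x ?_) ⟨_, ?_, hlt⟩))
    · simpa [Nat.lt_succ_iff] using hx
    · simp; omega
  have hN : ∀ s : k, s ≠ 0 → ∑ S : Finset (Fin (2*n)), pluckerS (colM N0 + s • colM N1) S *
      ev m (fun L => c (S :: L)) (colM Z0 + s • colM Z1) = 0 := by
    intro s hs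
    have h1 := hZ s hs
    rw [ev] at h1
    apply mul_left_cancel₀ (pow_ne_zero Mv.card hs)
    rw [mul_zero]
    rw [← h1, Finset.mul_sum]
    refine Finset.sum_congr rfl fun S _ => ?_
    by_cases hS : ∃ L, L.length = m ∧ c (S :: L) ≠ 0
    · rw [hdiv s S hS]; ring
    · rw [hnull S hS]; ring
  choose p hp using fun S => plucker_poly (k := k) S (colM N0) (colM N1)
  choose q hq using fun S => (ev_nice m fun L => c (S :: L)).1 (colM Z0) (colM Z1)
  have h0 := poly_zero (∑ S : Finset (Fin (2*n)), p S * q S) (fun s hs => by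
    rw [Polynomial.eval_finsetSum, ← hN s hs]
    exact Finset.sum_congr rfl fun S _ => by rw [Polynomial.eval_mul, hp, hq])
  rw [Polynomial.eval_finsetSum, Finset.sum_eq_single S0] at h0
  · rw [Polynomial.eval_mul, ← hp, ← hq, zero_smul, zero_smul, add_zero, add_zero] at h0
    refine (mul_eq_zero.1 h0).resolve_left ?_
    rw [← hw']
    exact lead_ne hb w' hw'inj
  · intro S _ hne
    rw [Polynomial.eval_mul, ← hp, ← hq, zero_smul, zero_smul, add_zero, add_zero]
    by_cases hS : ∃ L, L.length = m ∧ c (S :: L) ≠ 0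
    · have : pluckerS (colM N0) S = 0 := by
        by_contra h
        have := lead_le hb w' hw'inj S h
        rw [hw'] at this
        exact hne (hmax' S hS this)
      rw [this, zero_mul]
    · rw [hnull S hS, mul_zero]
  · intro h; exact absurd (Finset.mem_univ _) h

/-! ### Linear independence of standard products -/

/-- Linear independence of standard products on Schubert cells, by induction on the degree. For an
extremal head `S0`, standardness gives `τ ≤ W` for the set `τ` of `envelope`, so vanishing passes
to the cell of `τ` by `closure_van`, and `extract` leaves a relation between the tails on the cell
of `φ`. The tails are standard for `φ`, because `NB φ = NB S0` and `ht φ` is the upper envelope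
of `ht S0`. -/
theorem indep [Infinite k] (m : ℕ) (W : Finset (Fin (2*n))) (hW : NoPair W) (hWc : W.card = d)
    (c : List (Finset (Fin (2*n))) → k)
    (hsupp : ∀ L, L.length = m → c L ≠ 0 → (∀ S ∈ L, S.card = d) ∧ List.IsChain Std2 (W :: L))
    (hv : VanS (ev (d := d) m c) W) : ∀ L, L.length = m → c L = 0 := by
  classical
  induction m generalizing W c with
  | zero =>
    intro L hL
    rw [List.length_eq_zero_iff] at hL
    subst hL
    exact hv (fun l => W.orderEmbOfFin hWc l) (by
      rw [← Finset.coe_inj]; simp) _ Unip.id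
  | succ m ih =>
    by_contra hc
    push Not at hc
    obtain ⟨L0, hL0, hne0⟩ := hc
    let Hd : Finset (Finset (Fin (2*n))) := Finset.univ.filter fun S => ∃ L, L.length = m ∧ c (S :: L) ≠ 0
    have hHd : ∀ S, S ∈ Hd ↔ ∃ L, L.length = m ∧ c (S :: L) ≠ 0 := fun S => by simp [Hd]
    have hHne : Hd.Nonempty := by
      cases L0 with
      | nil => simp at hL0
      | cons S L => exact ⟨S, (hHd S).2 ⟨L, by simpa using hL0, hne0⟩⟩
    -- the extremal head: lower counts as large, then upper counts as small as possible
    obtain ⟨S1, hS1, hmax1⟩ := Hd.exists_max_image (fun S => ∑ x ∈ Finset.range (n+1), NA S x) hHne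
    obtain ⟨S0, hS0, hmin⟩ := (Hd.filter fun S => ∑ x ∈ Finset.range (n+1), NA S1 x ≤
      ∑ x ∈ Finset.range (n+1), NA S x).exists_min_image (fun S => ∑ x ∈ Finset.range (n+1), NB S x)
      ⟨S1, Finset.mem_filter.2 ⟨hS1, le_rfl⟩⟩
    obtain ⟨hS0, hS01⟩ := Finset.mem_filter.1 hS0
    obtain ⟨L1, hL1, hne1⟩ := (hHd S0).1 hS0
    obtain ⟨hcard, hch⟩ := hsupp (S0 :: L1) (by simp [hL1]) hne1
    have hS0c : S0.card = d := hcard S0 (by simp)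
    have hstd : Std2 W S0 := (List.isChain_cons_cons.1 hch).1
    obtain ⟨φ, τ, I, I', κ, H, H1, H2, hκ, hI, hφn, hφc, hφhi, hφlo, hI', hNBφ, hhtφ, hτn, hτc, hτA, hτB, hτ⟩ :=
      envelope (k := k) S0 (fun y hy => by
        have := (hstd 0 y (Nat.zero_le _) hy).1
        simpa [NA_zero, NB_zero] using this)
    have hle : leS τ W := by
      intro x hx
      have h1 := hτA x hx; have h2 := hτB x hx
      have h3 := (hstd x x le_rfl hx).2
      obtain ⟨y, hy, hy', h4⟩ := H2 x hx
      have h5 := (hstd x y hy hy').1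
      unfold ht at h3
      omega
    have hvτ : VanS (ev (d := d) (m+1) c) τ :=
      closure_van (ev_nice _ _) W hW hv _ τ hτn (by rw [hτc, hS0c, hWc]) hle (Int.self_le_toNat _)
    have hvφ := extract m c S0 φ I I' κ hκ hI (hφc.trans hS0c) hS0c hφhi hφlo hI'
      (fun S hS => (hmax1 S ((hHd S).2 hS)).trans hS01)
      (fun S hS hSS => by
        have e1 : ∑ x ∈ Finset.range (n+1), NA S x = ∑ x ∈ Finset.range (n+1), NA S0 x :=
          le_antisymm ((hmax1 S ((hHd S).2 hS)).trans hS01)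
            (Finset.sum_le_sum fun x hx => (hSS x (by simpa [Nat.lt_succ_iff] using hx)).1)
        have e2 : ∑ x ∈ Finset.range (n+1), NB S x = ∑ x ∈ Finset.range (n+1), NB S0 x :=
          le_antisymm (Finset.sum_le_sum fun x hx => (hSS x (by simpa [Nat.lt_succ_iff] using hx)).2)
            (hmin S (Finset.mem_filter.2 ⟨(hHd S).2 hS, by rw [e1]; exact hS01⟩))
        have f1 := (Finset.sum_eq_sum_iff_of_le
          fun x hx => (hSS x (by simpa [Nat.lt_succ_iff] using hx)).1).1 e1.symm
        have f2 := (Finset.sum_eq_sum_iff_of_le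
          fun x hx => (hSS x (by simpa [Nat.lt_succ_iff] using hx)).2).1 e2
        exact count_ext (fun x hx => (f1 x (by simpa [Nat.lt_succ_iff] using hx)).symm)
          fun x hx => f2 x (by simpa [Nat.lt_succ_iff] using hx))
      (by rw [← hτ]; exact hvτ)
    refine hne1 (ih φ hφn (hφc.trans hS0c) (fun L => c (S0 :: L)) (fun L hL hLne => ?_) hvφ L1 hL1)
    obtain ⟨hc1, hc2⟩ := hsupp (S0 :: L) (by simp [hL]) hLne
    refine ⟨fun S hS => hc1 S (by simp [hS]), ?_⟩
    have hc3 := (List.isChain_cons_cons.1 hc2).2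
    cases L with
    | nil => simp
    | cons T L =>
      rw [List.isChain_cons_cons] at hc3 ⊢
      refine ⟨fun x y hxy hy => ?_, hc3.2⟩
      rw [hNBφ x (hxy.trans hy), hhtφ y hy]
      obtain ⟨z, hz, hz', e⟩ := H2 y hy
      rw [e]
      exact ⟨(hc3.1 x y hxy hy).1, (hc3.1 x z (hxy.trans hz) hz').2⟩

/-! ### Homogeneous polynomials and standard products -/

theorem ev_add (m : ℕ) (c c' : List (Finset (Fin (2*n))) → k) (M : Matrix (Fin (2*n)) (Fin d) k) :
    ev m (fun L => c L + c' L) M = ev m c M + ev m c' M := by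
  induction m generalizing c c' with
  | zero => simp [ev]
  | succ m ih =>
    simp only [ev]
    rw [← Finset.sum_add_distrib]
    exact Finset.sum_congr rfl fun S _ => by rw [ih, mul_add]

theorem ev_single (m : ℕ) (L0 : List (Finset (Fin (2*n)))) (hL : L0.length = m) (a : k)
    (M : Matrix (Fin (2*n)) (Fin d) k) :
    ev m (fun L => Finsupp.single L0 a L) M = a * evP M (mon k d L0) := by
  induction m generalizing L0 with
  | zero =>
    obtain rfl := List.length_eq_zero_iff.1 hL
    simp [ev, mon]
  | succ m ih =>
    cases L0 with
    | nil => simp at hL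
    | cons S L0 =>
      rw [ev, Finset.sum_eq_single S]
      · have e : (fun L => Finsupp.single (S :: L0) a (S :: L)) = fun L => Finsupp.single L0 a L := by
          funext L
          classical
          simp only [Finsupp.single_apply, List.cons.injEq, true_and]
        rw [e, ih L0 (by simpa using hL), mon_cons, map_mul, evP_Xs]
        ring
      · intro T _ hT
        rw [ev_zero _ _ fun L _ => by
          rw [Finsupp.single_apply, if_neg]; intro h; exact hT (List.cons.inj h).1.symm, mul_zero]
      · simp

/-- A linear combination of monomials of length `m`, evaluated at a matrix. -/
theorem ev_linComb (m : ℕ) (c : List (Finset (Fin (2*n))) →₀ k) (hc : ∀ L, c L ≠ 0 → L.length = m)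
    (M : Matrix (Fin (2*n)) (Fin d) k) :
    evP M (Finsupp.linearCombination k (mon k d) c) = ev m c M := by
  have H : ∀ c : List (Finset (Fin (2*n))) →₀ k, ev m c M =
      c.sum fun L a => if L.length = m then a * evP M (mon k d L) else 0 := by
    intro c
    classical
    induction c using Finsupp.induction_linear with
    | zero => rw [Finsupp.sum_zero_index]; exact ev_zero _ _ (fun _ _ => rfl) M
    | add f g hf hg =>
      rw [Finsupp.sum_add_index' (by simp) (by intro L a b; split_ifs <;> simp [add_mul]), ← hf, ← hg,
        ← ev_add]
      rfl
    | single L a =>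
      rw [Finsupp.sum_single_index (by simp)]
      split_ifs with h
      · exact ev_single m L h a M
      · refine ev_zero _ _ (fun L' hL' => ?_) M
        rw [Finsupp.single_apply, if_neg]
        rintro rfl; exact h hL'
  rw [H, Finsupp.linearCombination_apply, Finsupp.sum, Finsupp.sum, map_sum]
  refine Finset.sum_congr rfl fun L hL => ?_
  rw [if_pos (hc L (Finsupp.mem_support_iff.1 hL)), evP, MvPolynomial.smul_eval]

/-- Semi-invariance of homogeneous polynomials in the Plücker coordinates under column operations. -/
theorem evP_smul (M : Matrix (Fin (2*n)) (Fin d) k) (P : MvPolynomial (V n d) k) (m : ℕ)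
    (hP : P.IsHomogeneous m) (h : Matrix (Fin d) (Fin d) k) :
    evP (M * h) P = h.det ^ m * evP M P := by
  rw [evP, evP, MvPolynomial.eval_eq', MvPolynomial.eval_eq', Finset.mul_sum]
  refine Finset.sum_congr rfl fun e he => ?_
  have hdeg := hP (MvPolynomial.mem_support_iff.1 he)
  have : ∏ S, (pluckerS (M * h) (S : V n d).1) ^ e S = h.det ^ m * ∏ S, (pluckerS M (S : V n d).1) ^ e S := by
    simp only [pluckerS_mul, mul_pow]
    rw [Finset.prod_mul_distrib, Finset.prod_pow_eq_pow_sum, mul_comm]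
    congr 2
    rw [← hdeg, Finsupp.weight_apply, Finsupp.sum_fintype _ _ (by simp)]
    simp
  rw [this]; ring

/-- Standard products of length `m` span the homogeneous polynomials of degree `m`, modulo `ISp`
and `Ju`. -/
theorem homog_mem (U : Finset (Fin (2*n))) (hU : NoPair U) (m : ℕ) (P : MvPolynomial (V n d) k)
    (hP : P.IsHomogeneous m) : P ∈ Ystd k d U m := by
  rw [P.as_sum]
  refine Submodule.sum_mem _ fun e he => ?_
  have hdeg := hP (MvPolynomial.mem_support_iff.1 he)
  let L : List (V n d) := (Finsupp.toMultiset e).toList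
  have hL : mon k d (L.map Subtype.val) = MvPolynomial.monomial e 1 := by
    have h1 : mon k d (L.map Subtype.val) = (L.map fun S => (MvPolynomial.X S : MvPolynomial (V n d) k)).prod := by
      rw [mon, List.map_map]
      congr 1
      exact List.map_congr_left fun S _ => Xs_val S
    rw [h1, MvPolynomial.monomial_eq, ← Multiset.prod_coe, ← Multiset.map_coe, Multiset.coe_toList,
      Finsupp.toMultiset_map, Finsupp.prod_toMultiset, Finsupp.prod_mapDomain_index (by simp) (by intros; rw [pow_add])]
    simp
  have hlen : (L.map Subtype.val).length = m := by
    rw [List.length_map, Multiset.length_toList, Finsupp.card_toMultiset, ← hdeg, Finsupp.weight_apply]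
    simp
    rfl
  have := spanning (k := k) (d := d) U (fun x y => nopair_ht hU x y) m (L.map Subtype.val) hlen (by
    intro S hS
    obtain ⟨T, -, rfl⟩ := List.mem_map.1 hS
    exact T.2)
  rw [hL] at this
  have h2 := Submodule.smul_mem _ (MvPolynomial.coeff e P) this
  rwa [MvPolynomial.smul_monomial, smul_eq_mul, mul_one] at h2

/-! ### The ideal of a Schubert cell -/

theorem rank_of_plucker (M : Matrix (Fin (2*n)) (Fin d) k) (S : Finset (Fin (2*n))) (h : pluckerS M S ≠ 0) :
    M.rank = d := by
  unfold pluckerS at h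
  split_ifs at h with hS
  · have hinj : Function.Injective M.mulVecLin := by
      rw [← LinearMap.ker_eq_bot, LinearMap.ker_eq_bot']
      intro x hx
      refine Matrix.eq_zero_of_mulVec_eq_zero h ?_
      funext a
      exact congrFun hx (S.orderIsoOfFin hS a)
    rw [Matrix.rank, LinearMap.finrank_range_of_inj hinj]; simp
  · exact absurd rfl h

theorem dot_Om (v w : Fin (2*n) → k) : v ⬝ᵥ (Jmat k n).mulVec w = - Om v w := by
  rw [dot_J, Om, ← Finset.sum_neg_distrib]
  exact Finset.sum_congr rfl fun t _ => by ring

theorem colM_mulVec (b : (Fin (2*n) → k) →ₗ[k] (Fin (2*n) → k)) (w : Fin d → Fin (2*n)) (x : Fin d → k) :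
    (colM fun l => b (bv k (w l))).mulVec x = b (∑ l, x l • bv k (w l)) := by
  rw [map_sum]
  funext i
  simp [Matrix.mulVec, dotProduct, colM, mul_comm]

/-- Unipotent translates of a pair-free coordinate subspace are isotropic. -/
theorem iso_of_unip {b : (Fin (2*n) → k) →ₗ[k] (Fin (2*n) → k)} (hb : Unip b) (w : Fin d → Fin (2*n))
    (hW : NoPair (Finset.univ.image w)) :
    IsIsotropic k n (LinearMap.range (colM fun l => b (bv k (w l))).mulVecLin) := by
  rintro _ ⟨x, rfl⟩ _ ⟨y, rfl⟩
  rw [dot_Om, Matrix.mulVecLin_apply, Matrix.mulVecLin_apply, colM_mulVec, colM_mulVec, hb.1, neg_eq_zero, Om]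
  have hz : ∀ (z : Fin d → k) (i : Fin (2*n)), i ∉ Finset.univ.image w →
      (∑ l, z l • bv k (w l)) i = 0 := by
    intro z i hi
    rw [Finset.sum_apply]
    refine Finset.sum_eq_zero fun l _ => ?_
    rw [Pi.smul_apply, bv_ne, smul_zero]
    rintro rfl; exact hi (Finset.mem_image_of_mem _ (Finset.mem_univ _))
  refine Finset.sum_eq_zero fun t _ => ?_
  by_cases h : lo t ∈ Finset.univ.image w
  · rw [hz x _ (hW t h), hz y _ (hW t h)]; ring
  · rw [hz x _ h, hz y _ h]; ring

/-- The variables `P_T` with `T ≰ U` vanish on the cell of `U`. -/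
theorem evP_Ju {b : (Fin (2*n) → k) →ₗ[k] (Fin (2*n) → k)} (hb : Unip b) (w : Fin d → Fin (2*n))
    (hw : Function.Injective w) {P : MvPolynomial (V n d) k} (hP : P ∈ Ju k d (Finset.univ.image w)) :
    evP (colM fun l => b (bv k (w l))) P = 0 := by
  have : Ju k d (Finset.univ.image w) ≤ RingHom.ker (evP (colM fun l => b (bv k (w l)))) := by
    refine Ideal.span_le.2 ?_
    rintro _ ⟨T, -, hle, rfl⟩
    change evP _ _ = 0
    rw [evP_Xs]
    by_contra h
    exact hle (lead_le hb w hw T h)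
  exact this hP

/-- A homogeneous polynomial vanishing on a Schubert cell lies in the sum of the two ideals. -/
theorem homog_main [Infinite k] (u : Fin d → Fin (2*n)) (hu : Function.Injective u)
    (hU : NoPair (Finset.univ.image u)) (m : ℕ) (P : MvPolynomial (V n d) k) (hP : P.IsHomogeneous m)
    (hv : ∀ b, Unip b → evP (colM fun l => b (bv k (u l))) P = 0) :
    P ∈ ISp k n d ⊔ Ju k d (Finset.univ.image u) := by
  have hUc : (Finset.univ.image u).card = d := by
    rw [Finset.card_image_of_injective _ hu]; simp
  obtain ⟨A, hA, B, hB, rfl⟩ := Submodule.mem_sup.1 (homog_mem _ hU m P hP)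
  have hB' : B ∈ ISp k n d ⊔ Ju k d (Finset.univ.image u) := hB
  have hA' := hA
  rw [show {P | ∃ L : List (Finset (Fin (2*n))), L.length = m ∧ (∀ S ∈ L, S.card = d) ∧
    List.IsChain Std2 (Finset.univ.image u :: L) ∧ P = mon k d L} = mon k d '' {L | L.length = m ∧ (∀ S ∈ L, S.card = d) ∧
    List.IsChain Std2 (Finset.univ.image u :: L)} by
      ext P; constructor
      · rintro ⟨L, h1, h2, h3, rfl⟩; exact ⟨L, ⟨h1, h2, h3⟩, rfl⟩
      · rintro ⟨L, ⟨h1, h2, h3⟩, rfl⟩; exact ⟨L, h1, h2, h3, rfl⟩] at hA'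
  obtain ⟨c, hc, rfl⟩ := (Finsupp.mem_span_image_iff_linearCombination k).1 hA'
  have hc' : ∀ L, c L ≠ 0 → L.length = m ∧ (∀ S ∈ L, S.card = d) ∧
    List.IsChain Std2 (Finset.univ.image u :: L) := fun L hL =>
      (Finsupp.mem_supported k c).1 hc (Finsupp.mem_support_iff.2 hL)
  have hBv : ∀ b, Unip b → evP (colM fun l => b (bv k (u l))) B = 0 := by
    intro b hb
    obtain ⟨B1, h1, B2, h2, rfl⟩ := Submodule.mem_sup.1 hB'
    rw [map_add, evP_Ju hb u hu h2, add_zero]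
    exact mem_ISp.1 h1 _ (rank_of_plucker _ _ (lead_ne hb u hu)) (iso_of_unip hb u hU)
  have hvan : Van (ev (d := d) m c) u := by
    intro b hb
    have := hv b hb
    rw [map_add, hBv b hb, add_zero, ev_linComb m c fun L hL => (hc' L hL).1] at this
    exact this
  have h0 := indep (k := k) (d := d) m (Finset.univ.image u) hU hUc c
    (fun L _ hL => (hc' L hL).2) (fun w hw => van_perm (ev_nice m c) hw.symm hvan)
  have : c = 0 := by
    ext L
    by_contra hL
    exact hL (h0 L (hc' L hL).1)
  rw [this, map_zero, zero_add]
  exact hB'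

/-- Vanishing along all bases of the subspaces of a Schubert cell separates into the
homogeneous components. -/
theorem schubert [Infinite k] (hd : 1 ≤ d) (u : Fin d → Fin (2*n)) (hu : Function.Injective u)
    (hU : NoPair (Finset.univ.image u)) (F : MvPolynomial (V n d) k)
    (hF : ∀ b, Unip b → ∀ h : Matrix (Fin d) (Fin d) k, h.det ≠ 0 →
      evP ((colM fun l => b (bv k (u l))) * h : Matrix (Fin (2*n)) (Fin d) k) F = 0) :
    F ∈ ISp k n d ⊔ Ju k d (Finset.univ.image u) := by
  rw [← MvPolynomial.sum_homogeneousComponent F]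
  refine Submodule.sum_mem _ fun m hm => ?_
  refine homog_main u hu hU m _ (MvPolynomial.homogeneousComponent_isHomogeneous m F) fun b hb => ?_
  set M := colM fun l => b (bv k (u l)) with hM
  let p : Polynomial k := ∑ j ∈ Finset.range (F.totalDegree + 1),
    Polynomial.monomial j (evP M (MvPolynomial.homogeneousComponent j F))
  have hp : p = 0 := by
    refine Polynomial.eq_zero_of_infinite_isRoot p (Set.Infinite.mono (s := {s | s ≠ 0}) (fun s hs => ?_)
      (Set.finite_singleton (0:k)).infinite_compl)
    -- a column operation of determinant `s`
    let h : Matrix (Fin d) (Fin d) k := Matrix.diagonal (Function.update 1 ⟨0, hd⟩ s)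
    have hdet : h.det = s := by
      rw [Matrix.det_diagonal, Finset.prod_update_of_mem (Finset.mem_univ _)]; simp
    have h1 := hF b hb h (by rw [hdet]; exact hs)
    rw [← MvPolynomial.sum_homogeneousComponent F, map_sum] at h1
    change p.eval s = 0
    rw [Polynomial.eval_finsetSum, ← h1]
    refine Finset.sum_congr rfl fun j _ => ?_
    rw [evP_smul M _ j (MvPolynomial.homogeneousComponent_isHomogeneous j F), hdet, Polynomial.eval_monomial,
      mul_comm]
  have h2 := congrArg (fun q => Polynomial.coeff q m) hp
  simpa [p, Polynomial.finsetSum_coeff, Polynomial.coeff_monomial, Finset.mem_range.1 hm] using h2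

/-! ### Comparison with tuples and the Richardson variety -/

/-- Tuples of `\overline{I}^{Sp}` are increasing in `pos`. -/
theorem bar_pos {i : Fin d → Fin (2*n)} (h : IsSpBarTuple n i) {a b : Fin d} (hab : a < b) :
    pos (i a) < pos (i b) := by
  obtain ⟨-, r, -, h1, h2, h3, h4⟩ := h
  have ha := (i a).2; have hb := (i b).2
  unfold pos
  by_cases hbr : b.1 < r
  · have e1 := h1 a b hab hbr; have e2 := h2 b hbr; have e3 := h2 a (by omega)
    rw [if_pos e2, if_pos e3]; omega
  · have e1 := h4 b (by omega)
    rw [if_neg (show ¬ (i b).1 < n by omega)]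
    by_cases har : a.1 < r
    · have e2 := h2 a har
      rw [if_pos e2]; omega
    · have e2 := h4 a (by omega)
      have e3 := h3 a b hab (by omega)
      rw [if_neg (by omega)]; omega

theorem bar_pos_le {i : Fin d → Fin (2*n)} (h : IsSpBarTuple n i) {a b : Fin d} (hab : a ≤ b) :
    pos (i a) ≤ pos (i b) := by
  rcases hab.eq_or_lt with rfl | hab
  · exact le_rfl
  · exact (bar_pos h hab).le

/-- Tuples increasing in `pos` belong to `\overline{I}^{Sp}`. -/
theorem bar_of_pos {j : Fin d → Fin (2*n)} (h : ∀ a b, a < b → pos (j a) < pos (j b)) :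
    IsSpBarTuple n j := by
  have key : ∀ a b : Fin d, a < b → ((j a).1 < n ∧ (j b).1 < n ∧ (j a).1 < (j b).1) ∨
      ((j a).1 < n ∧ n ≤ (j b).1) ∨ (n ≤ (j a).1 ∧ n ≤ (j b).1 ∧ (j b).1 < (j a).1) := by
    intro a b hab
    have h1 := h a b hab; have ha := (j a).2; have hb := (j b).2
    unfold pos at h1
    split_ifs at h1 <;> omega
  refine ⟨fun a b hab => ?_, ?_⟩
  · by_contra hne
    rcases lt_or_gt_of_ne hne with hlt | hlt
    · have := h _ _ hlt; rw [hab] at this; omega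
    · have := h _ _ hlt; rw [hab] at this; omega
  -- `r` is the number of entries in the lower half
  classical
  by_cases hex : ∃ m, ∃ hm : m < d, n ≤ (j ⟨m, hm⟩).1
  · obtain ⟨hr, hr'⟩ := Nat.find_spec hex
    have hlt : ∀ a : Fin d, a.1 < Nat.find hex → (j a).1 < n := fun a ha => by
      by_contra hcon
      exact Nat.find_min hex ha ⟨a.2, by simpa using hcon⟩
    have hge : ∀ a : Fin d, Nat.find hex ≤ a.1 → n ≤ (j a).1 := fun a ha => by
      rcases ha.eq_or_lt with he | hl
      · have : a = ⟨Nat.find hex, hr⟩ := Fin.ext he.symm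
        rw [this]; exact hr'
      · have := key ⟨Nat.find hex, hr⟩ a hl
        omega
    refine ⟨Nat.find hex, hr.le, fun a b hab hb => ?_, hlt, fun a b hab ha => ?_, hge⟩
    · have := key a b hab; have := hlt b hb
      rw [Fin.lt_def]; omega
    · have := key a b hab; have := hge a ha
      rw [Fin.lt_def]; omega
  · push Not at hex
    refine ⟨d, le_rfl, fun a b hab _ => ?_, fun a _ => hex a.1 a.2, fun a _ _ ha => ?_, fun a ha => ?_⟩
    · have := key a b hab; have := hex b.1 b.2
      simp only [Fin.eta] at this
      rw [Fin.lt_def]; omega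
    · have := a.2; omega
    · have := a.2; omega

/-- The arrangement `α(S)` of a `d`-element set. -/
theorem exists_bar (S : Finset (Fin (2*n))) (hS : S.card = d) :
    ∃ j : Fin d → Fin (2*n), IsSpBarTuple n j ∧ Finset.univ.image j = S := by
  have hc : (S.image pos).card = d := by
    rw [Finset.card_image_of_injective _ fun _ _ => pos_inj, hS]
  have hm : ∀ l, ∃ i ∈ S, pos i = (S.image pos).orderEmbOfFin hc l := fun l =>
    Finset.mem_image.1 (Finset.orderEmbOfFin_mem (S.image pos) hc l)
  choose j hj hj' using hm
  have hbar : IsSpBarTuple n j := bar_of_pos fun a b hab => by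
    rw [hj', hj']; exact ((S.image pos).orderEmbOfFin hc).strictMono hab
  refine ⟨j, hbar, Finset.eq_of_subset_of_card_le ?_ ?_⟩
  · intro x hx
    obtain ⟨l, -, rfl⟩ := Finset.mem_image.1 hx
    exact hj l
  · rw [Finset.card_image_of_injective _ hbar.1, hS]; simp

theorem spGE_pos {i j : Fin d → Fin (2*n)} (h : spGE n i j) (t : Fin d) : pos (j t) ≤ pos (i t) := by
  have h1 := h t; have ha := (i t).2; have hb := (j t).2
  unfold pos
  split_ifs at h1 ⊢ <;> simp only [Fin.le_def] at h1 <;> omega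

/-- Entrywise comparison of positions implies the counting order. -/
theorem leS_of_pos {i j : Fin d → Fin (2*n)} (hi' : Function.Injective i) (hj : Function.Injective j)
    (h : ∀ t, pos (j t) ≤ pos (i t)) : leS (Finset.univ.image j) (Finset.univ.image i) := by
  intro x hx
  unfold NA NB
  rw [Finset.sum_image fun _ _ _ _ e => hj e, Finset.sum_image fun _ _ _ _ e => hi' e,
    Finset.sum_image fun _ _ _ _ e => hj e, Finset.sum_image fun _ _ _ _ e => hi' e]
  constructor
  · refine Finset.sum_le_sum fun t _ => ?_
    have h1 := h t; have ha := (i t).2; have hb := (j t).2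
    unfold pos at h1
    split_ifs at h1 ⊢ <;> omega
  · refine Finset.sum_le_sum fun t _ => ?_
    have h1 := h t; have ha := (i t).2; have hb := (j t).2
    unfold pos at h1
    split_ifs at h1 ⊢ <;> omega

theorem nopair_of_sp {i : Fin d → Fin (2*n)} (h : IsSpTuple n i) : NoPair (Finset.univ.image i) := by
  intro t h1 h2
  obtain ⟨a, -, ha⟩ := Finset.mem_image.1 h1
  obtain ⟨b, -, hb⟩ := Finset.mem_image.1 h2
  apply h.2 a b
  rw [ha, hb, lo_val, hi_val, add_comm]

/-- The space `K_p` contains all vectors supported at positions at most that of `p`. -/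
theorem mem_Kspace (p : Fin (2*n)) (v : Fin (2*n) → k) (h : ∀ i, pos p < pos i → v i = 0) :
    v ∈ Kspace k n (p.1 + 1) := by
  have hv : v = ∑ i, v i • (Pi.single i 1 : Fin (2*n) → k) := by
    funext j
    simp [Finset.sum_apply, Pi.single_apply]
  rw [hv]
  refine Submodule.sum_mem _ fun i _ => ?_
  by_cases hi' : v i = 0
  · rw [hi', zero_smul]; exact Submodule.zero_mem _
  refine Submodule.smul_mem _ _ (Submodule.subset_span ⟨i, ?_, rfl⟩)
  have h1 : ¬ pos p < pos i := fun h' => hi' (h i h')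
  have := i.2; have := p.2
  unfold pos at h1
  split_ifs at h1 <;> omega

/-- The vectors of `K_{σ(p)}` vanish at all positions from that of `p` on. -/
theorem Kspace_sigma (p : Fin (2*n)) (v : Fin (2*n) → k) (hv : v ∈ Kspace k n (sigmaFn n (p.1 + 1)))
    (i : Fin (2*n)) (h : pos p ≤ pos i) : v i = 0 := by
  have hle : Kspace k n (sigmaFn n (p.1 + 1)) ≤
      LinearMap.ker (LinearMap.proj i : (Fin (2*n) → k) →ₗ[k] k) := by
    refine Submodule.span_le.2 ?_
    rintro _ ⟨q, hq, rfl⟩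
    change (Pi.single q 1 : Fin (2*n) → k) i = 0
    refine Pi.single_eq_of_ne ?_ _
    rintro rfl
    have := i.2; have := p.2
    unfold pos at h
    unfold sigmaFn at hq
    split_ifs at h hq <;> omega
  exact hle hv

/-- Extension by zero from the first `s` coordinates. -/
def ext0 (k : Type*) [Field k] (d s : ℕ) : (Fin s → k) →ₗ[k] (Fin d → k) where
  toFun x l := if h : l.1 < s then x ⟨l.1, h⟩ else 0
  map_add' x y := by funext l; simp only [Pi.add_apply]; split_ifs <;> simp
  map_smul' c x := by funext l; simp only [Pi.smul_apply, RingHom.id_apply]; split_ifs <;> simp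

theorem ext0_lt {s : ℕ} (x : Fin s → k) (l : Fin d) (h : l.1 < s) : ext0 k d s x l = x ⟨l.1, h⟩ :=
  dif_pos h

theorem ext0_ge {s : ℕ} (x : Fin s → k) (l : Fin d) (h : ¬ l.1 < s) : ext0 k d s x l = 0 :=
  dif_neg h

/-- The Schubert cell of `u` lies in the Richardson variety. The conditions from `v` hold on the
whole cell because `u ≥ v`: an element of the intersection with `K_{σ(v_t)}` involves only the
frame vectors before the `t`-th. -/
theorem cell_rich {b : (Fin (2*n) → k) →ₗ[k] (Fin (2*n) → k)} (hb : Unip b) (u v : Fin d → Fin (2*n))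
    (hu : IsSpTuple n u) (huv : spGE n u v) :
    inRich k n u v (LinearMap.range (colM fun l => b (bv k (u l))).mulVecLin) := by
  have hrank := rank_of_plucker _ _ (lead_ne hb u hu.1.1)
  set M := colM fun l => b (bv k (u l)) with hM
  have hinj : Function.Injective M.mulVecLin := by
    rw [← LinearMap.ker_eq_bot, ← Submodule.finrank_eq_zero (R := k)]
    have := LinearMap.finrank_range_add_finrank_ker M.mulVecLin
    rw [show Module.finrank k (LinearMap.range M.mulVecLin) = d from hrank] at this
    simpa using this
  refine ⟨iso_of_unip hb u (nopair_of_sp hu), hrank, fun t => ⟨?_, ?_⟩⟩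
  · have hι : Function.Injective (M.mulVecLin ∘ₗ ext0 k d (t.1 + 1)) := by
      rw [LinearMap.coe_comp]
      refine hinj.comp fun x y hxy => funext fun l => ?_
      have hl : l.1 < d := by have := l.2; have := t.2; omega
      have := congrFun hxy ⟨l.1, hl⟩
      rwa [ext0_lt x ⟨l.1, hl⟩ l.2, ext0_lt y ⟨l.1, hl⟩ l.2] at this
    have h1 := LinearMap.finrank_range_of_inj hι
    rw [Module.finrank_fin_fun] at h1
    rw [← h1]
    refine Submodule.finrank_mono ?_
    rintro _ ⟨x, rfl⟩
    refine ⟨⟨_, rfl⟩, mem_Kspace _ _ fun i hi' => ?_⟩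
    rw [LinearMap.comp_apply, Matrix.mulVecLin_apply, Matrix.mulVec, dotProduct]
    refine Finset.sum_eq_zero fun l _ => ?_
    by_cases hl : l.1 < t.1 + 1
    · have := bar_pos_le hu.1 (show l ≤ t by rw [Fin.le_def]; omega)
      have : M i l = 0 := unip_bv hb (by omega)
      rw [this, zero_mul]
    · rw [ext0_ge _ _ hl, mul_zero]
  · have h1 := LinearMap.finrank_range_le (M.mulVecLin ∘ₗ ext0 k d t.1)
    rw [Module.finrank_fin_fun] at h1
    refine le_trans (Submodule.finrank_mono ?_) h1
    rintro _ ⟨⟨x, rfl⟩, hx⟩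
    have hx0 : ∀ l, t ≤ l → x l = 0 := by
      by_contra hcon
      push Not at hcon
      obtain ⟨l0, hl0, hl0'⟩ := hcon
      classical
      -- the last nonzero coordinate survives in row `u l`
      obtain ⟨l, hl, hmax⟩ := Finset.exists_max_image (Finset.univ.filter fun l => x l ≠ 0) _root_.id
        ⟨l0, by simpa using hl0'⟩
      have hl' : x l ≠ 0 := by simpa using hl
      have hlm : ∀ a, x a ≠ 0 → a ≤ l := fun a ha => hmax a (by simpa using ha)
      have htl : t ≤ l := hl0.trans (hlm _ hl0')
      have h2 := Kspace_sigma (v t) _ hx (u l) ((spGE_pos huv t).trans (bar_pos_le hu.1 htl))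
      rw [Matrix.mulVecLin_apply, Matrix.mulVec, dotProduct, Finset.sum_eq_single l] at h2
      · have : M (u l) l = 1 := unip_bv_self hb _
        rw [this, one_mul] at h2
        exact hl' h2
      · intro a _ ha
        by_cases hxa : x a = 0
        · rw [hxa, mul_zero]
        · have : M (u l) a = 0 := unip_bv hb (bar_pos hu.1 (lt_of_le_of_ne (hlm a hxa) ha))
          rw [this, zero_mul]
      · simp
    refine ⟨fun l => x ⟨l.1, l.2.trans t.2⟩, ?_⟩
    rw [LinearMap.comp_apply]
    congr 1
    funext l
    by_cases hl : l.1 < t.1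
    · rw [ext0_lt _ _ hl]
    · rw [ext0_ge _ _ hl, hx0 l (by rw [Fin.le_def]; omega)]

theorem range_mul (M : Matrix (Fin (2*n)) (Fin d) k) (h : Matrix (Fin d) (Fin d) k) (hh : h.det ≠ 0) :
    LinearMap.range (M * h : Matrix (Fin (2*n)) (Fin d) k).mulVecLin = LinearMap.range M.mulVecLin := by
  rw [Matrix.mulVecLin_mul]
  refine LinearMap.range_comp_of_range_eq_top _ (LinearMap.range_eq_top.2 ?_)
  exact Matrix.mulVec_surjective_iff_isUnit.2 ((Matrix.isUnit_iff_isUnit_det h).2 (isUnit_iff_ne_zero.2 hh))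

end SpR

/-- the ideal of the Richardson variety `R(u,v)` in the homogeneous
coordinate ring of `Sp_{2n}(k)/P_d` is generated by the Plücker coordinates `p_α` with
`α >^{Sp} u` or `α <^{Sp} v`: let `u ≥^{Sp} v` in `I^{Sp}_{d,2n}` and let `F` be a
polynomial in the variables `P_S`, `S` ranging over `d`-element subsets of `{1,…,2n}`.
If `F`, evaluated at the Plücker coordinates `(p_S(M))_S`, vanishes for every `2n×d`
matrix `M` of rank `d` whose column span lies in `R(u,v)`, then `F = G + H` where `G`
lies in the ideal generated by the variables `P_S` whose arranged tuple
`α(S) ∈ \overline{I}^{Sp}_{d,2n}` fails `v ≤^{Sp} α(S) ≤^{Sp} u`, and `H` evaluates to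
zero at `(p_S(M))_S` for every rank-`d` matrix `M` with isotropic column span. -/
theorem stmt15 {k : Type*} [Field k] [IsAlgClosed k] (n d : ℕ) (hd1 : 1 ≤ d) (hdn : d ≤ n)
    (u v : Fin d → Fin (2*n)) (hu : IsSpTuple n u) (hv : IsSpTuple n v) (huv : spGE n u v)
    (F : MvPolynomial {S : Finset (Fin (2*n)) // S.card = d} k)
    (hF : ∀ M : Matrix (Fin (2*n)) (Fin d) k, M.rank = d →
      inRich k n u v (LinearMap.range M.mulVecLin) →
      MvPolynomial.eval (fun S => pluckerS M S.1) F = 0) :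
    ∃ G H : MvPolynomial {S : Finset (Fin (2*n)) // S.card = d} k,
      F = G + H ∧
      G ∈ Ideal.span {P : MvPolynomial {S : Finset (Fin (2*n)) // S.card = d} k |
        ∃ S : {S : Finset (Fin (2*n)) // S.card = d},
          (∃ j : Fin d → Fin (2*n), IsSpBarTuple n j ∧
            Finset.image j Finset.univ = S.1 ∧ ¬ (spGE n u j ∧ spGE n j v)) ∧
          P = MvPolynomial.X S} ∧
      ∀ M : Matrix (Fin (2*n)) (Fin d) k, M.rank = d →
        IsIsotropic k n (LinearMap.range M.mulVecLin) →
        MvPolynomial.eval (fun S => pluckerS M S.1) H = 0 := by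
  have hinf : Infinite k := inferInstance
  have hU := SpR.nopair_of_sp hu
  have hmem := SpR.schubert hd1 u hu.1.1 hU F fun b hb h hh => by
    refine hF _ ?_ ?_
    · refine SpR.rank_of_plucker _ (Finset.univ.image u) ?_
      rw [SpR.pluckerS_mul]
      exact mul_ne_zero (SpR.lead_ne hb u hu.1.1) hh
    · rw [SpR.range_mul _ _ hh]
      exact SpR.cell_rich hb u v hu huv
  obtain ⟨H, hH, G, hG, rfl⟩ := Submodule.mem_sup.1 hmem
  refine ⟨G, H, add_comm _ _, ?_, fun M h1 h2 => SpR.mem_ISp.1 hH M h1 h2⟩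
  refine (Ideal.span_le.2 ?_ : SpR.Ju k d _ ≤ _) hG
  rintro _ ⟨T, hT, hle, rfl⟩
  obtain ⟨j, hj, rfl⟩ := SpR.exists_bar T hT
  refine Ideal.subset_span ⟨⟨_, hT⟩, ⟨j, hj, rfl, fun h => hle ?_⟩, SpR.Xs_val ⟨_, hT⟩⟩
  exact SpR.leS_of_pos hu.1.1 hj.1 (SpR.spGE_pos h.1)
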